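/- There exist an integer q₁ ≥ 2 and a uniquely ergodic C^∞ diffeomorphism T of the torus 𝕋² whose unique invariant Borel probability measure is the Haar–Lebesgue measure λ, such that T is measure-theoretically isomorphic to the rotation of the circle by some irrational number and the upper topological slow entropy of T with respect to the intermediate scaling family a^{int1,5}_m(t) (with base q₁) equals 1. -/

import Mathlib

open MeasureTheory Filter Set
open scoped Topology ENNReal NNReal

noncomputable section

/-- The Bowen metric `d_n^T(x,y) = max_{0 ≤ i ≤ n-1} d(T^i x, T^i y)`. -/
def bowenDist {X : Type*} [PseudoMetricSpace X] (T : X → X) (n : ℕ) (x y : X) : ℝ :=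
  (((Finset.range n).sup fun i => nndist (T^[i] x) (T^[i] y)) : ℝ≥0)

/-- `N_{d_n^T}(ε)`: the minimal number of `(ε,n)`-Bowen balls of `T` needed to cover the
whole space. -/
def bowenCoverNum {X : Type*} [PseudoMetricSpace X] (T : X → X) (n : ℕ) (ε : ℝ) : ℕ :=
  sInf {N : ℕ | ∃ F : Finset X, F.card = N ∧ ∀ y : X, ∃ x ∈ F, bowenDist T n x y < ε}

/-- `N(ε)`: the supremum (`0` if the set is empty, by the `Real.sSup` convention) of all
`t > 0` such that `limsup_n N_{d_n^T}(ε) / a_n(t) > 0`. -/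
def topSlowEntFun {X : Type*} [PseudoMetricSpace X] (T : X → X) (a : ℕ → ℝ → ℝ) (ε : ℝ) : ℝ :=
  sSup {t : ℝ | 0 < t ∧
    0 < Filter.atTop.limsup fun n => (bowenCoverNum T n ε : ℝ≥0∞) / ENNReal.ofReal (a n t)}

/-- The upper topological slow entropy of `T` with respect to the scaling family `a`
equals `E`, i.e. `N(ε) → E` as `ε → 0⁺`. -/
def HasUpperTopSlowEntropy {X : Type*} [PseudoMetricSpace X] (T : X → X)
    (a : ℕ → ℝ → ℝ) (E : ℝ) : Prop :=
  Filter.Tendsto (topSlowEntFun T a) (𝓝[>] (0 : ℝ)) (𝓝 E)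

/-- The circle `𝕋¹ = ℝ/ℤ` with its quotient metric and Haar–Lebesgue probability
measure `volume`. -/
abbrev Torus1 : Type := AddCircle (1 : ℝ)

/-- The 2-torus `𝕋² = ℝ²/ℤ²`, with its quotient (flat) metric, its Borel σ-algebra and
its Haar–Lebesgue probability measure `volume`. -/
abbrev Torus2 : Type := AddCircle (1 : ℝ) × AddCircle (1 : ℝ)

/-- Canonical projection `ℝ² → 𝕋²`. -/
def torusProj : ℝ × ℝ → Torus2 := fun p => ((p.1 : Torus1), (p.2 : Torus1))

/-- `F : ℝ² → ℝ²` is a lift of `T : 𝕋² → 𝕋²`. -/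
def IsLiftOf (F : ℝ × ℝ → ℝ × ℝ) (T : Torus2 → Torus2) : Prop :=
  ∀ p, torusProj (F p) = T (torusProj p)

/-- `T` is a `C^k` diffeomorphism of the torus: it is a bijection and both `T` and `T⁻¹`
admit `C^k` lifts to the universal cover `ℝ²`. -/
def IsCkTorusDiffeo (k : ℕ∞) (T : Torus2 → Torus2) : Prop :=
  Function.Bijective T ∧
  (∃ F : ℝ × ℝ → ℝ × ℝ, ContDiff ℝ k F ∧ IsLiftOf F T) ∧
  (∃ G : ℝ × ℝ → ℝ × ℝ, ContDiff ℝ k G ∧ IsLiftOf G (Function.invFun T))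

/-- `T` is weakly mixing w.r.t. the measure `μ`: `T × T` is ergodic for `μ × μ`. -/
def WeaklyMixing {X : Type*} [MeasurableSpace X] (T : X → X) (μ : Measure X) : Prop :=
  Ergodic (fun p : X × X => (T p.1, T p.2)) (μ.prod μ)

/-- `T` is uniquely ergodic with the Haar–Lebesgue measure `volume` as its unique
invariant Borel probability measure. -/
def UniquelyErgodicWithVolume (T : Torus2 → Torus2) : Prop :=
  MeasurePreserving T volume volume ∧
  ∀ μ : Measure Torus2, IsProbabilityMeasure μ → MeasurePreserving T μ μ → μ = volume

/-- `T` (preserving the Haar measure `volume` on `𝕋²`) is measure-theoretically isomorphic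
to the rotation of the circle `𝕋¹ = ℝ/ℤ` by some irrational number `α`. -/
def IsoToIrrationalRotation (T : Torus2 → Torus2) : Prop :=
  ∃ α : ℝ, Irrational α ∧
    ∃ (A : Set Torus2) (B : Set Torus1) (ψ : Torus2 → Torus1) (φ : Torus1 → Torus2),
      MeasurableSet A ∧ MeasurableSet B ∧
      volume Aᶜ = 0 ∧ volume Bᶜ = 0 ∧
      Set.MapsTo T A A ∧ Set.MapsTo (fun y : Torus1 => y + (α : Torus1)) B B ∧
      Measurable ψ ∧ Measurable φ ∧
      Set.MapsTo ψ A B ∧ Set.MapsTo φ B A ∧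
      (∀ x ∈ A, φ (ψ x) = x) ∧ (∀ y ∈ B, ψ (φ y) = y) ∧
      Measure.map ψ volume = volume ∧
      (∀ x ∈ A, ψ (T x) = ψ x + (α : Torus1))

/-- A finite measurable partition of `X`. -/
structure FinMeasPartition (X : Type*) [MeasurableSpace X] where
  card : ℕ
  piece : Fin card → Set X
  measurable : ∀ i, MeasurableSet (piece i)
  disjoint : Pairwise fun i j => Disjoint (piece i) (piece j)
  cover : (⋃ i, piece i) = Set.univ

open Classical in
/-- The normalized Hamming distance between the length-`n` `P`-codings of the `T`-orbits
of `x` and `y` (the codings differ at time `k` iff `T^k x` and `T^k y` lie in different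
pieces of `P`). -/
def codeHammingDist {X : Type*} [MeasurableSpace X] (T : X → X) (P : FinMeasPartition X)
    (n : ℕ) (x y : X) : ℝ :=
  (((Finset.range n).filter fun k =>
      ¬ ∃ i, T^[k] x ∈ P.piece i ∧ T^[k] y ∈ P.piece i).card : ℝ) / n

/-- `S^H_P(T,n,ε)`: the minimal number of `(ε,n)`-Hamming balls whose union has
`μ`-measure greater than `1 - ε`. -/
def hammingCoverNum {X : Type*} [MeasurableSpace X] (μ : Measure X) (T : X → X)
    (P : FinMeasPartition X) (n : ℕ) (ε : ℝ) : ℕ :=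
  sInf {N : ℕ | ∃ F : Finset X, F.card = N ∧
    ENNReal.ofReal (1 - ε) < μ (⋃ x ∈ F, {y | codeHammingDist T P n x y < ε})}

/-- For a fixed partition `P` and `ε > 0`: the supremum (with the `Real.sSup` convention,
`0` if the set is empty) of all `t > 0` with `limsup_n S^H_P(T,n,ε)/a_n(t) > 0`. -/
def measSlowEntFun {X : Type*} [MeasurableSpace X] (μ : Measure X) (T : X → X)
    (a : ℕ → ℝ → ℝ) (P : FinMeasPartition X) (ε : ℝ) : ℝ :=
  sSup {t : ℝ | 0 < t ∧
    0 < Filter.atTop.limsup fun n =>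
      (hammingCoverNum μ T P n ε : ℝ≥0∞) / ENNReal.ofReal (a n t)}

/-- The upper measure-theoretic slow entropy of `(T,μ)` w.r.t. the scaling family `a`
equals `E`: for every finite measurable partition the limit as `ε → 0⁺` exists, and the
least upper bound over all partitions of these limits is `E`. -/
def HasUpperMeasSlowEntropy {X : Type*} [MeasurableSpace X] (μ : Measure X) (T : X → X)
    (a : ℕ → ℝ → ℝ) (E : ℝ) : Prop :=
  (∀ P : FinMeasPartition X, ∃ e : ℝ,
      Filter.Tendsto (measSlowEntFun μ T a P) (𝓝[>] (0 : ℝ)) (𝓝 e)) ∧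
  IsLUB {e : ℝ | ∃ P : FinMeasPartition X,
      Filter.Tendsto (measSlowEntFun μ T a P) (𝓝[>] (0 : ℝ)) (𝓝 e)} E

/-- `Γ_r(x) = (Γ(x^{1/r} + 1))^r`, where `Γ` is the Euler Gamma function. -/
def GammaR (r : ℕ) (x : ℝ) : ℝ := (Real.Gamma (x ^ ((r : ℝ)⁻¹) + 1)) ^ r

/-- The inverse of `Γ_r` on `[1,∞)` (where `Γ_r` is strictly increasing with `Γ_r 1 = 1`). -/
def GammaRInv (r : ℕ) (y : ℝ) : ℝ := sSup {x : ℝ | 1 ≤ x ∧ GammaR r x ≤ y}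

/-- The intermediate scaling family `a^{int1,r}_m(t) = m^(t / Γ_r⁻¹(ln m / ln q₁))`. -/
def intScale1 (r q₁ : ℕ) (m : ℕ) (t : ℝ) : ℝ :=
  (m : ℝ) ^ (t / GammaRInv r (Real.log m / Real.log q₁))

/-- The intermediate scaling family
`a^{int2,r}_m(t) = m^(t / (Γ_r⁻¹(ln m / ln q₁))^((r-2)/r))`. -/
def intScale2 (r q₁ : ℕ) (m : ℕ) (t : ℝ) : ℝ :=
  (m : ℝ) ^ (t / GammaRInv r (Real.log m / Real.log q₁) ^ (((r : ℝ) - 2) / (r : ℝ)))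

/-- The logarithmic scaling family `a^{ln}_m(t) = (ln m)^t`. -/
def logScale (m : ℕ) (t : ℝ) : ℝ := Real.log m ^ t

/-- The polynomial scaling family `a^{pol}_m(t) = m^t`. -/
def polScale (m : ℕ) (t : ℝ) : ℝ := (m : ℝ) ^ t

end

/-! The map is an Anosov–Katok limit of conjugated rational rotations `Hₙ ∘ R_{pₙ/qₙ} ∘ Hₙ⁻¹`, where
`R_t (x, y) = (x + t, y)` and `Hₙ₊₁ = Hₙ ∘ hₙ` with `hₙ` commuting with `R_{1/qₙ}`. Here `hₙ` is a
horizontal shear of size `1/Q` followed by a vertical shear of slope about `Q`, and the derivatives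
of `Hₙ₊₁` are polynomial in `Q`, so the limit is smooth as soon as `qₙ₊₁` is a large power of `Q`.

The steep vertical shear spreads every orbit of the new flow `Hₙ₊₁ ∘ R_t ∘ Hₙ₊₁⁻¹` over the torus,
which gives unique ergodicity. The first coordinates of `Hₙ⁻¹` converge to a factor map onto a
circle rotation; the horizontal shear lays most of each vertical circle along a segment of slope
`-Q`, which the vertical shear contracts almost to a point. So most of each fibre is small at every
stage, and the factor map is injective almost everywhere.

About `Q` orbits of the new flow can be told apart, so the Bowen covering number at times between
the powers of `Q` dominating `Hₙ₊₁` and `qₙ₊₁` is `Q ^ (1 + o(1))`. With `Q = b ^ (M!) ^ r` and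
`qₙ₊₁ = b ^ ((M + 1)!) ^ r = Q ^ (M + 1) ^ r`, the value of the scaling family at time `qₙ₊₁` is
exactly `Q ^ t`, whence the critical exponent is `1`. -/

open scoped ContDiff

namespace AnosovKatok

/-! ### Smooth maps with bounded derivatives -/

section BoundedDerivatives

variable {E F G : Type*} [NormedAddCommGroup E] [NormedSpace ℝ E] [NormedAddCommGroup F]
  [NormedSpace ℝ F] [NormedAddCommGroup G] [NormedSpace ℝ G]

/-- A smooth map all of whose derivatives are bounded. The order zero is excluded because lifts of
torus maps are unbounded. -/
structure HasBoundedDerivs (f : E → F) : Prop where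
  contDiff : ContDiff ℝ ∞ f
  bounded : ∀ k : ℕ, 1 ≤ k → ∃ C : ℝ, ∀ x, ‖iteratedFDeriv ℝ k f x‖ ≤ C

/-- A family of smooth maps whose derivatives of positive order grow at most polynomially in the
parameter. Since only `Q ≥ 2` matters, multiplicative constants are absorbed in the exponent. -/
structure HasPolyBoundedDerivs (f : ℕ → E → F) : Prop where
  contDiff : ∀ Q, ContDiff ℝ ∞ (f Q)
  bounded : ∀ k : ℕ, 1 ≤ k → ∃ P : ℕ, ∀ Q : ℕ, 2 ≤ Q → ∀ x,
    ‖iteratedFDeriv ℝ k (f Q) x‖ ≤ (Q : ℝ) ^ P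

lemma exists_le_natCast_pow (C : ℝ) : ∃ P : ℕ, ∀ Q : ℕ, 2 ≤ Q → C ≤ (Q : ℝ) ^ P := by
  obtain ⟨P, hP⟩ := pow_unbounded_of_one_lt C one_lt_two
  exact ⟨P, fun Q hQ => hP.le.trans (pow_le_pow_left₀ zero_le_two (by exact_mod_cast hQ) P)⟩

lemma HasBoundedDerivs.hasPolyBoundedDerivs {f : E → F} (hf : HasBoundedDerivs f) :
    HasPolyBoundedDerivs fun _ => f where
  contDiff _ := hf.contDiff
  bounded k hk := by
    obtain ⟨C, hC⟩ := hf.bounded k hk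
    obtain ⟨P, hP⟩ := exists_le_natCast_pow C
    exact ⟨P, fun Q hQ x => (hC x).trans (hP Q hQ)⟩

lemma HasPolyBoundedDerivs.hasBoundedDerivs {f : ℕ → E → F} (hf : HasPolyBoundedDerivs f) {Q : ℕ}
    (hQ : 2 ≤ Q) : HasBoundedDerivs (f Q) where
  contDiff := hf.contDiff Q
  bounded k hk := (hf.bounded k hk).elim fun _ hP => ⟨_, hP Q hQ⟩

lemma HasPolyBoundedDerivs.exists_uniform {f : ℕ → E → F} (hf : HasPolyBoundedDerivs f) (k : ℕ) :
    ∃ P : ℕ, ∀ i, 1 ≤ i → i ≤ k → ∀ Q : ℕ, 2 ≤ Q → ∀ x,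
      ‖iteratedFDeriv ℝ i (f Q) x‖ ≤ (Q : ℝ) ^ P := by
  choose! P hP using hf.bounded
  refine ⟨(Finset.range (k + 1)).sup P, fun i hi hik Q hQ x => (hP i hi Q hQ x).trans ?_⟩
  have hQ' : (1 : ℝ) ≤ Q := by exact_mod_cast (by omega : 1 ≤ Q)
  exact pow_le_pow_right₀ hQ' (Finset.le_sup (Finset.mem_range.2 (by omega)))

lemma iteratedFDeriv_sub_const {f : E → F} (hf : ContDiff ℝ ∞ f) (c : F) {k : ℕ} (hk : 1 ≤ k) :
    iteratedFDeriv ℝ k (fun x => f x - c) = iteratedFDeriv ℝ k f := by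
  have hfk : ContDiff ℝ k f := hf.of_le (by exact_mod_cast le_top)
  rw [show (fun x => f x - c) = f - fun _ => c from rfl, iteratedFDeriv_sub hfk contDiff_const,
    iteratedFDeriv_const_of_ne (by omega), sub_zero]

lemma norm_iteratedFDeriv_comp_le_of_one_le {g : F → G} {f : E → F} (hg : ContDiff ℝ ∞ g)
    (hf : ContDiff ℝ ∞ f) {k : ℕ} (hk : 1 ≤ k) (x : E) {C D : ℝ} (hC0 : 0 ≤ C) (hD1 : 1 ≤ D)
    (hC : ∀ i, 1 ≤ i → i ≤ k → ‖iteratedFDeriv ℝ i g (f x)‖ ≤ C)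
    (hD : ∀ i, 1 ≤ i → i ≤ k → ‖iteratedFDeriv ℝ i f x‖ ≤ D) :
    ‖iteratedFDeriv ℝ k (fun y => g (f y)) x‖ ≤ k.factorial * C * D ^ k := by
  -- Subtracting `g (f x)` from `g` makes the bound on `g` hold at order zero as well.
  have hbound := norm_iteratedFDeriv_comp_le (g := fun y => g y - g (f x)) (n := k) (C := C)
    (hg.sub contDiff_const) hf (by exact_mod_cast le_top) x
    (fun i hi => by
      rcases Nat.eq_zero_or_pos i with rfl | hpos
      · simpa using hC0
      · rw [iteratedFDeriv_sub_const hg _ hpos]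
        exact hC i hpos hi)
    (fun i hi hik => (hD i hi hik).trans (le_self_pow₀ hD1 (by omega)))
  rwa [show (fun y => g y - g (f x)) ∘ f = fun y => g (f y) - g (f x) from rfl,
    iteratedFDeriv_sub_const (f := fun y => g (f y)) (hg.comp hf) _ hk] at hbound

lemma HasPolyBoundedDerivs.comp {g : ℕ → F → G} {f : ℕ → E → F} (hg : HasPolyBoundedDerivs g)
    (hf : HasPolyBoundedDerivs f) : HasPolyBoundedDerivs fun Q x => g Q (f Q x) where
  contDiff Q := (hg.contDiff Q).comp (hf.contDiff Q)
  bounded k hk := by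
    obtain ⟨P, hP⟩ := hg.exists_uniform k
    obtain ⟨R, hR⟩ := hf.exists_uniform k
    obtain ⟨S, hS⟩ := exists_le_natCast_pow k.factorial
    refine ⟨S + P + R * k, fun Q hQ x => ?_⟩
    have hQ' : (1 : ℝ) ≤ Q := by exact_mod_cast (by omega : 1 ≤ Q)
    calc ‖iteratedFDeriv ℝ k (fun x => g Q (f Q x)) x‖
        ≤ k.factorial * (Q : ℝ) ^ P * ((Q : ℝ) ^ R) ^ k :=
          norm_iteratedFDeriv_comp_le_of_one_le (hg.contDiff Q) (hf.contDiff Q) hk x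
            (by positivity) (one_le_pow₀ hQ') (fun i hi hik => hP i hi hik Q hQ _)
            (fun i hi hik => hR i hi hik Q hQ _)
      _ ≤ (Q : ℝ) ^ S * (Q : ℝ) ^ P * ((Q : ℝ) ^ R) ^ k := by gcongr; exact hS Q hQ
      _ = (Q : ℝ) ^ (S + P + R * k) := by rw [pow_add, pow_add, pow_mul]

lemma HasBoundedDerivs.comp {g : F → G} {f : E → F} (hg : HasBoundedDerivs g)
    (hf : HasBoundedDerivs f) : HasBoundedDerivs fun x => g (f x) :=
  (hg.hasPolyBoundedDerivs.comp hf.hasPolyBoundedDerivs).hasBoundedDerivs le_rfl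

lemma HasBoundedDerivs.clm (A : E →L[ℝ] F) : HasBoundedDerivs fun x => A x where
  contDiff := A.contDiff
  bounded k hk := by
    refine ⟨‖A‖, fun x => ?_⟩
    obtain ⟨j, rfl⟩ : ∃ j, k = j + 1 := ⟨k - 1, by omega⟩
    have hderiv : fderiv ℝ (fun x => A x) = fun _ => A := funext fun y => A.fderiv
    rw [← norm_iteratedFDeriv_fderiv, hderiv]
    rcases Nat.eq_zero_or_pos j with rfl | hj
    · simp
    · simp [iteratedFDeriv_const_of_ne hj.ne']

lemma HasBoundedDerivs.id : HasBoundedDerivs fun x : E => x := .clm (.id ℝ E)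

lemma HasPolyBoundedDerivs.add {f g : ℕ → E → F} (hf : HasPolyBoundedDerivs f)
    (hg : HasPolyBoundedDerivs g) : HasPolyBoundedDerivs fun Q x => f Q x + g Q x where
  contDiff Q := (hf.contDiff Q).add (hg.contDiff Q)
  bounded k hk := by
    obtain ⟨P, hP⟩ := hf.bounded k hk
    obtain ⟨R, hR⟩ := hg.bounded k hk
    refine ⟨1 + (P + R), fun Q hQ x => ?_⟩
    have hQ' : (2 : ℝ) ≤ Q := by exact_mod_cast hQ
    have hadd : iteratedFDeriv ℝ k (fun x => f Q x + g Q x) x =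
        iteratedFDeriv ℝ k (f Q) x + iteratedFDeriv ℝ k (g Q) x :=
      iteratedFDeriv_add_apply ((hf.contDiff Q).of_le (by exact_mod_cast le_top)).contDiffAt
        ((hg.contDiff Q).of_le (by exact_mod_cast le_top)).contDiffAt
    have hPR : (Q : ℝ) ^ P ≤ (Q : ℝ) ^ (P + R) := pow_le_pow_right₀ (by linarith) (by omega)
    have hRP : (Q : ℝ) ^ R ≤ (Q : ℝ) ^ (P + R) := pow_le_pow_right₀ (by linarith) (by omega)
    calc ‖iteratedFDeriv ℝ k (fun x => f Q x + g Q x) x‖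
        ≤ (Q : ℝ) ^ P + (Q : ℝ) ^ R :=
          hadd ▸ (norm_add_le _ _).trans (add_le_add (hP Q hQ x) (hR Q hQ x))
      _ ≤ 2 * (Q : ℝ) ^ (P + R) := by linarith
      _ ≤ (Q : ℝ) ^ (1 + (P + R)) := by rw [pow_add _ 1, pow_one]; gcongr

lemma HasBoundedDerivs.add {f g : E → F} (hf : HasBoundedDerivs f) (hg : HasBoundedDerivs g) :
    HasBoundedDerivs fun x => f x + g x :=
  (hf.hasPolyBoundedDerivs.add hg.hasPolyBoundedDerivs).hasBoundedDerivs le_rfl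

lemma HasBoundedDerivs.const_smul_family {f : E → F} (hf : HasBoundedDerivs f) (c : ℕ → ℝ)
    (hc : ∀ Q, |c Q| ≤ Q) : HasPolyBoundedDerivs fun Q x => c Q • f x where
  contDiff Q := hf.contDiff.const_smul _
  bounded k hk := by
    obtain ⟨P, hP⟩ := hf.hasPolyBoundedDerivs.bounded k hk
    refine ⟨1 + P, fun Q hQ x => ?_⟩
    have hsmul : iteratedFDeriv ℝ k (fun x => c Q • f x) x = c Q • iteratedFDeriv ℝ k f x :=
      iteratedFDeriv_const_smul_apply' (hf.contDiff.of_le (by exact_mod_cast le_top)).contDiffAt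
    rw [hsmul, norm_smul, Real.norm_eq_abs, pow_add, pow_one]
    exact mul_le_mul (hc Q) (hP Q hQ x) (norm_nonneg _) (Nat.cast_nonneg _)

lemma norm_iteratedFDeriv_comp_add_sub_comp_add_le {g : F → G} {f : E → F} (hg : ContDiff ℝ ∞ g)
    (hf : ContDiff ℝ ∞ f) {k : ℕ} {C D : ℝ} (hD1 : 1 ≤ D)
    (hC : ∀ y, ∀ i ≤ k, ‖iteratedFDeriv ℝ (i + 1) g y‖ ≤ C)
    (hD : ∀ x, ∀ i, 1 ≤ i → i ≤ k → ‖iteratedFDeriv ℝ i f x‖ ≤ D) (v w : F) (x : E) :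
    ‖iteratedFDeriv ℝ k (fun x => g (f x + v) - g (f x + w)) x‖
      ≤ k.factorial * (C * ‖v - w‖) * D ^ k := by
  have hshift (u : F) : ContDiff ℝ ∞ fun y => g (y + u) :=
    hg.comp (contDiff_id.add contDiff_const)
  refine norm_iteratedFDeriv_comp_le (g := fun y => g (y + v) - g (y + w)) (f := f)
    ((hshift v).sub (hshift w)) hf (by exact_mod_cast le_top) x (fun i hi => ?_)
    (fun i hi hik => (hD x i hi hik).trans (le_self_pow₀ hD1 (by omega)))
  have hsub : iteratedFDeriv ℝ i (fun y => g (y + v) - g (y + w)) (f x) =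
      iteratedFDeriv ℝ i g (f x + v) - iteratedFDeriv ℝ i g (f x + w) := by
    rw [← iteratedFDeriv_comp_add_right, ← iteratedFDeriv_comp_add_right]
    exact iteratedFDeriv_sub_apply ((hshift v).of_le (by exact_mod_cast le_top)).contDiffAt
      ((hshift w).of_le (by exact_mod_cast le_top)).contDiffAt
  have hdiff : Differentiable ℝ (iteratedFDeriv ℝ i g) :=
    hg.differentiable_iteratedFDeriv (by exact_mod_cast WithTop.coe_lt_top _)
  have hmvt := convex_univ.norm_image_sub_le_of_norm_fderiv_le (fun y _ => hdiff y)
    (fun y _ => norm_fderiv_iteratedFDeriv.trans_le (hC y i hi))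
    (mem_univ (f x + w)) (mem_univ (f x + v))
  rwa [hsub, ← add_sub_add_left_eq_sub v w (f x)]

lemma dist_le_of_norm_iteratedFDeriv_one_le {f : E → F} (hf : ContDiff ℝ ∞ f) {C : ℝ}
    (hC : ∀ x, ‖iteratedFDeriv ℝ 1 f x‖ ≤ C) (x y : E) : dist (f x) (f y) ≤ C * dist x y := by
  rw [dist_eq_norm, dist_eq_norm]
  exact convex_univ.norm_image_sub_le_of_norm_fderiv_le
    (fun y _ => hf.differentiable (by simp) y)
    (fun y _ => (norm_iteratedFDeriv_one (𝕜 := ℝ) f).symm.trans_le (hC y)) (mem_univ _) (mem_univ _)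

lemma HasBoundedDerivs.exists_lipschitz {f : E → F} (hf : HasBoundedDerivs f) :
    ∃ C : ℕ, ∀ x y, dist (f x) (f y) ≤ C * dist x y := by
  obtain ⟨C, hC⟩ := hf.bounded 1 le_rfl
  obtain ⟨M, hM⟩ := exists_nat_ge C
  exact ⟨M, dist_le_of_norm_iteratedFDeriv_one_le hf.contDiff fun x => (hC x).trans hM⟩

lemma HasBoundedDerivs.of_periodic {f : ℝ → F} (hf : ContDiff ℝ ∞ f)
    (hper : Function.Periodic f 1) : HasBoundedDerivs f where
  contDiff := hf
  bounded k _ := by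
    have hper' : Function.Periodic (iteratedFDeriv ℝ k f) 1 := fun x => by
      rw [← iteratedFDeriv_comp_add_right]
      exact congrArg (iteratedFDeriv ℝ k · x) (funext hper)
    have hcont : Continuous (iteratedFDeriv ℝ k f) :=
      hf.continuous_iteratedFDeriv (by exact_mod_cast le_top)
    obtain ⟨C, hC⟩ := (isCompact_Icc (a := (0 : ℝ)) (b := 1)).exists_bound_of_continuousOn
      hcont.continuousOn
    refine ⟨C, fun x => ?_⟩
    obtain ⟨y, hy, hxy⟩ := hper'.exists_mem_Ico₀ one_pos x
    exact hxy ▸ hC y (Ico_subset_Icc_self hy)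

end BoundedDerivatives

/-! ### The circle and the torus -/

instance : IsProbabilityMeasure (volume : Measure Torus1) :=
  ⟨UnitAddCircle.measure_univ⟩

instance : IsProbabilityMeasure (volume : Measure Torus2) := by
  rw [Measure.volume_eq_prod]
  infer_instance

instance : Nontrivial Torus1 := by
  refine ⟨((1 / 2 : ℝ) : Torus1), 0, fun h => ?_⟩
  obtain ⟨n, hn⟩ := (AddCircle.coe_eq_zero_iff 1).1 h
  have : (2 * n : ℝ) = (1 : ℤ) := by
    rw [zsmul_eq_mul] at hn
    push_cast
    linarith
  norm_cast at this
  omega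

lemma continuous_periodic_lift {X : Type*} [TopologicalSpace X] {f : ℝ → X}
    {c : ℝ} (hf : Function.Periodic f c) (hc : Continuous f) : Continuous hf.lift :=
  continuous_coinduced_dom.mpr hc

lemma norm_coe_le (x : ℝ) : ‖(x : Torus1)‖ ≤ |x| :=
  QuotientAddGroup.norm_mk_le_norm (S := AddSubgroup.zmultiples (1 : ℝ))

lemma dist_coe_le (x y : ℝ) : dist (x : Torus1) (y : Torus1) ≤ |x - y| := by
  rw [dist_eq_norm, ← AddCircle.coe_sub]
  exact norm_coe_le _

lemma coe_intCast (n : ℤ) : ((n : ℝ) : Torus1) = 0 :=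
  (AddCircle.coe_eq_zero_iff 1).2 ⟨n, by simp⟩

lemma coe_natCast (n : ℕ) : ((n : ℝ) : Torus1) = 0 :=
  mod_cast coe_intCast n

lemma coe_fract (x : ℝ) : ((Int.fract x : ℝ) : Torus1) = x := by
  rw [Int.fract, AddCircle.coe_sub, coe_intCast, sub_zero]

lemma coe_surjective : Function.Surjective ((↑) : ℝ → Torus1) :=
  QuotientAddGroup.mk_surjective

lemma exists_coe_eq_and_abs_sub_eq_dist (x : Torus1) (b : ℝ) :
    ∃ a : ℝ, (a : Torus1) = x ∧ |a - b| = dist x (b : Torus1) := by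
  obtain ⟨a, rfl⟩ := coe_surjective x
  refine ⟨a - round (a - b), ?_, ?_⟩
  · rw [AddCircle.coe_sub, coe_intCast, sub_zero]
  · rw [dist_eq_norm, ← AddCircle.coe_sub, UnitAddCircle.norm_eq, sub_right_comm]

lemma exists_dist_coe_div_le {N : ℕ} (hN : 0 < N) (x : Torus1) :
    ∃ i < N, dist ((i / N : ℝ) : Torus1) x ≤ 1 / N := by
  have hN' : (0 : ℝ) < N := mod_cast hN
  obtain ⟨y, rfl⟩ := coe_surjective x
  rw [← coe_fract]
  have h_nonneg : 0 ≤ Int.fract y * N := by positivity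
  refine ⟨⌊Int.fract y * N⌋₊, ?_, (dist_coe_le _ _).trans ?_⟩
  · rw [Nat.floor_lt h_nonneg]
    exact mul_lt_of_lt_one_left hN' (Int.fract_lt_one y)
  · have h_le := Nat.floor_le h_nonneg
    rw [abs_sub_comm, abs_of_nonneg (by rwa [sub_nonneg, div_le_iff₀ hN']), sub_le_iff_le_add,
      ← add_div, le_div_iff₀ hN', add_comm]
    exact (Nat.lt_floor_add_one _).le

lemma torusProj_surjective : Function.Surjective torusProj := fun z =>
  let ⟨a, ha⟩ := coe_surjective z.1
  let ⟨b, hb⟩ := coe_surjective z.2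
  ⟨(a, b), Prod.ext ha hb⟩

lemma continuous_torusProj : Continuous torusProj :=
  ((AddCircle.continuous_mk' 1).comp continuous_fst).prodMk
    ((AddCircle.continuous_mk' 1).comp continuous_snd)

lemma dist_torusProj_le (p p' : ℝ × ℝ) : dist (torusProj p) (torusProj p') ≤ dist p p' :=
  max_le_max (dist_coe_le _ _) (dist_coe_le _ _)

lemma exists_torusProj_eq_and_dist_eq (z w : Torus2) :
    ∃ p p', torusProj p = z ∧ torusProj p' = w ∧ dist p p' = dist z w := by
  obtain ⟨p', rfl⟩ := torusProj_surjective w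
  obtain ⟨a, ha, ha'⟩ := exists_coe_eq_and_abs_sub_eq_dist z.1 p'.1
  obtain ⟨b, hb, hb'⟩ := exists_coe_eq_and_abs_sub_eq_dist z.2 p'.2
  exact ⟨(a, b), p', Prod.ext ha hb, rfl, congrArg₂ max ha' hb'⟩

lemma dist_le_of_isLiftOf {G : ℝ × ℝ → ℝ × ℝ} {H : Torus2 → Torus2} (hG : IsLiftOf G H) {C : ℝ}
    (hC : ∀ x y, dist (G x) (G y) ≤ C * dist x y) (z w : Torus2) :
    dist (H z) (H w) ≤ C * dist z w := by
  obtain ⟨p, p', rfl, rfl, h⟩ := exists_torusProj_eq_and_dist_eq z w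
  rw [← hG, ← hG, ← h]
  exact (dist_torusProj_le _ _).trans (hC _ _)

/-! ### Smooth sawtooth profiles -/

/-- A smooth `1`-periodic function vanishing at `0` and bounded by `1 / 2`. Such a `β` is used with
`y + β y` close to `1 / 2` for most `y`. -/
structure IsSmoothProfile (β : ℝ → ℝ) : Prop where
  contDiff : ContDiff ℝ ∞ β
  periodic : Function.Periodic β 1
  map_zero : β 0 = 0
  abs_le : ∀ y, |β y| ≤ 1 / 2

/-- The Poisson mean `∑ₖ rᵏ sin(2πky) / (πk)` of the sawtooth `1 / 2 - y`, in closed form. -/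
noncomputable def sawtooth (r y : ℝ) : ℝ :=
  Real.pi⁻¹ * Real.arctan (r * Real.sin (2 * Real.pi * y) / (1 - r * Real.cos (2 * Real.pi * y)))

lemma isSmoothProfile_sawtooth {r : ℝ} (h₀ : 0 ≤ r) (h₁ : r < 1) :
    IsSmoothProfile (sawtooth r) where
  contDiff := by
    have h_denom (y : ℝ) : 1 - r * Real.cos (2 * Real.pi * y) ≠ 0 := by
      nlinarith [Real.cos_le_one (2 * Real.pi * y)]
    exact contDiff_const.mul (Real.contDiff_arctan.comp
      (ContDiff.div (by fun_prop) (by fun_prop) h_denom))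
  periodic y := by
    rw [sawtooth, mul_add, mul_one, Real.sin_add_two_pi, Real.cos_add_two_pi, sawtooth]
  map_zero := by simp [sawtooth]
  abs_le y := by
    rw [sawtooth, abs_mul, abs_of_pos (inv_pos.2 Real.pi_pos), inv_mul_le_iff₀ Real.pi_pos, abs_le]
    constructor <;> linarith [Real.arctan_lt_pi_div_two (r * Real.sin (2 * Real.pi * y) /
      (1 - r * Real.cos (2 * Real.pi * y))), Real.neg_pi_div_two_lt_arctan
      (r * Real.sin (2 * Real.pi * y) / (1 - r * Real.cos (2 * Real.pi * y)))]

lemma one_sub_cos_two_pi_mul (y : ℝ) :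
    1 - Real.cos (2 * Real.pi * y) = 2 * Real.sin (Real.pi * y) ^ 2 := by
  rw [mul_assoc, Real.cos_two_mul, Real.cos_sq']
  ring

lemma sin_pi_mul_pos {y : ℝ} (h₀ : 0 < y) (h₁ : y < 1) : 0 < Real.sin (Real.pi * y) :=
  Real.sin_pos_of_pos_of_lt_pi (by positivity) (by nlinarith [Real.pi_pos])

lemma sawtooth_one_of_mem_Ioo {y : ℝ} (h₀ : 0 < y) (h₁ : y < 1) : sawtooth 1 y = 1 / 2 - y := by
  have hpi := Real.pi_pos
  have h_sin := sin_pi_mul_pos h₀ h₁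
  have h_tan : 1 * Real.sin (2 * Real.pi * y) / (1 - 1 * Real.cos (2 * Real.pi * y))
      = Real.tan (Real.pi / 2 - Real.pi * y) := by
    rw [Real.tan_eq_sin_div_cos, Real.sin_pi_div_two_sub, Real.cos_pi_div_two_sub, one_mul,
      one_mul, one_sub_cos_two_pi_mul, mul_assoc 2 Real.pi y, Real.sin_two_mul]
    field_simp
  rw [sawtooth, h_tan, Real.arctan_tan (by nlinarith) (by nlinarith)]
  field_simp

lemma tendsto_add_sawtooth_sub_half {y : ℝ} (h₀ : 0 < y) (h₁ : y < 1) :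
    Tendsto (fun r => y + sawtooth r y - 1 / 2) (𝓝 1) (𝓝 0) := by
  have h_sin := sin_pi_mul_pos h₀ h₁
  have h_cont : ContinuousAt (fun r => sawtooth r y) 1 := by
    refine continuousAt_const.mul (Real.continuous_arctan.continuousAt.comp
      (ContinuousAt.div (by fun_prop) (by fun_prop) ?_))
    rw [one_mul, one_sub_cos_two_pi_mul]
    positivity
  have h_lim := (tendsto_const_nhds (x := y)).add h_cont.tendsto |>.sub_const (1 / 2)
  rw [sawtooth_one_of_mem_Ioo h₀ h₁] at h_lim
  simpa using h_lim

lemma IsSmoothProfile.periodic_coe_add_sub_half {β : ℝ → ℝ} (hβ : IsSmoothProfile β) :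
    Function.Periodic (fun y => ((y + β y - 1 / 2 : ℝ) : Torus1)) 1 := fun y => by
  have : y + 1 + β (y + 1) - 1 / 2 = y + β y - 1 / 2 + 1 := by
    rw [hβ.periodic]
    ring
  simp only [this, AddCircle.coe_add_period]

/-- The defect `y + β y - 1 / 2` of a profile, as a function on the circle. -/
noncomputable def IsSmoothProfile.defect {β : ℝ → ℝ} (hβ : IsSmoothProfile β) : Torus1 → Torus1 :=
  hβ.periodic_coe_add_sub_half.lift

lemma IsSmoothProfile.defect_coe {β : ℝ → ℝ} (hβ : IsSmoothProfile β) (y : ℝ) :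
    hβ.defect (y : Torus1) = ((y + β y - 1 / 2 : ℝ) : Torus1) :=
  hβ.periodic_coe_add_sub_half.lift_coe y

lemma IsSmoothProfile.continuous_defect {β : ℝ → ℝ} (hβ : IsSmoothProfile β) :
    Continuous hβ.defect :=
  continuous_periodic_lift hβ.periodic_coe_add_sub_half ((AddCircle.continuous_mk' 1).comp
    ((continuous_id.add hβ.contDiff.continuous).sub continuous_const))

lemma ae_tendsto_defect_sawtooth {r : ℕ → ℝ} (h₀ : ∀ k, 0 ≤ r k) (h₁ : ∀ k, r k < 1)
    (hr : Tendsto r atTop (𝓝 1)) :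
    ∀ᵐ y : Torus1, Tendsto (fun k => (isSmoothProfile_sawtooth (h₀ k) (h₁ k)).defect y)
      atTop (𝓝 0) := by
  filter_upwards [measure_eq_zero_iff_ae_notMem.1 (measure_singleton (μ := volume) (0 : Torus1))]
    with y hy
  obtain ⟨a, rfl⟩ := coe_surjective y
  rw [← coe_fract] at hy ⊢
  simp only [IsSmoothProfile.defect_coe]
  have h_pos : 0 < Int.fract a :=
    (Int.fract_nonneg a).lt_of_ne fun h => hy (by simp [← h])
  exact ((AddCircle.continuous_mk' 1).tendsto 0).comp
    ((tendsto_add_sawtooth_sub_half h_pos (Int.fract_lt_one a)).comp hr)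

theorem exists_isSmoothProfile_near_half {δ : ℝ} (hδ : 0 < δ) {η : ℝ≥0∞} (hη : 0 < η) :
    ∃ β : ℝ → ℝ, IsSmoothProfile β ∧ ∃ Y : Set Torus1, MeasurableSet Y ∧ volume Yᶜ ≤ η ∧
      ∀ y : ℝ, (y : Torus1) ∈ Y → ‖((y + β y - 1 / 2 : ℝ) : Torus1)‖ ≤ δ := by
  obtain ⟨r, -, hr_mem, hr⟩ := exists_seq_strictMono_tendsto' (zero_lt_one' ℝ)
  have hβ (k : ℕ) := isSmoothProfile_sawtooth (hr_mem k).1.le (hr_mem k).2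
  have h_measure : TendstoInMeasure volume (fun k => (hβ k).defect) atTop fun _ => 0 :=
    tendstoInMeasure_of_tendsto_ae (fun k => (hβ k).continuous_defect.aestronglyMeasurable)
      (ae_tendsto_defect_sawtooth (fun k => (hr_mem k).1.le) (fun k => (hr_mem k).2) hr)
  obtain ⟨k, hk⟩ := ((h_measure (ENNReal.ofReal δ) (by simpa using hδ)).eventually
    (gt_mem_nhds hη)).exists
  refine ⟨sawtooth (r k), hβ k, {y | ‖(hβ k).defect y‖ < δ},
    ((hβ k).continuous_defect.norm.measurable measurableSet_Iio),
    (measure_mono fun y hy => ?_).trans hk.le, fun y hy => ?_⟩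
  · rw [mem_ofPred_eq, edist_zero_right, ← ofReal_norm]
    exact ENNReal.ofReal_le_ofReal (not_lt.1 hy)
  · rw [← (hβ k).defect_coe]
    exact le_of_lt hy

/-! ### The intermediate scaling family along the periods `b ^ (M!) ^ r` -/

section Scaling

variable {r b M N P : ℕ}

lemma gammaR_natCast_pow (hr : r ≠ 0) (N : ℕ) : GammaR r ((N : ℝ) ^ r) = (N.factorial : ℝ) ^ r := by
  rw [GammaR, Real.pow_rpow_inv_natCast N.cast_nonneg hr, Real.Gamma_nat_eq_factorial]

lemma natCast_lt_rpow_inv (hr : r ≠ 0) {x : ℝ} (hx : (N : ℝ) ^ r < x) :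
    (N : ℝ) < x ^ (r : ℝ)⁻¹ := by
  have hx₀ : 0 ≤ x := le_trans (by positivity) hx.le
  refine lt_of_pow_lt_pow_left₀ r (Real.rpow_nonneg hx₀ _) ?_
  rwa [Real.rpow_inv_natCast_pow hx₀ hr]

lemma factorial_pow_lt_gammaR (hr : r ≠ 0) (hN : 2 ≤ N) {x : ℝ} (hx : (N : ℝ) ^ r < x) :
    (N.factorial : ℝ) ^ r < GammaR r x := by
  have h_lt := natCast_lt_rpow_inv hr hx
  have hN' : (2 : ℝ) ≤ N := mod_cast hN
  rw [GammaR, ← Real.Gamma_nat_eq_factorial]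
  exact pow_lt_pow_left₀ (Real.Gamma_strictMonoOn_Ici (by simp; linarith) (by simp; linarith)
    (by linarith)) (Real.Gamma_pos_of_pos (by positivity)).le hr

lemma mul_factorial_pow_le_gammaR (hr : r ≠ 0) (hM : 1 ≤ M) {x : ℝ}
    (hx : ((M + 1 : ℕ) : ℝ) ^ r < x) : x * (M.factorial : ℝ) ^ r ≤ GammaR r x := by
  have hx₀ : 0 ≤ x := le_trans (by positivity) hx.le
  have h_lt := natCast_lt_rpow_inv hr hx
  have hM' : (1 : ℝ) ≤ M := mod_cast hM
  push_cast at h_lt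
  rw [GammaR, Real.Gamma_add_one (by linarith), mul_pow, Real.rpow_inv_natCast_pow hx₀ hr,
    ← Real.Gamma_nat_eq_factorial]
  refine mul_le_mul_of_nonneg_left (pow_le_pow_left₀ (Real.Gamma_pos_of_pos (by positivity)).le
    (Real.Gamma_strictMonoOn_Ici.monotoneOn ?_ ?_ h_lt.le) r) hx₀
  all_goals simp only [mem_Ici]; linarith

lemma le_natCast_pow_of_gammaR_le (hr : r ≠ 0) (hN : 2 ≤ N) {x y : ℝ}
    (hy : y ≤ (N.factorial : ℝ) ^ r) (hx : GammaR r x ≤ y) : x ≤ (N : ℝ) ^ r := by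
  by_contra! h
  linarith [factorial_pow_lt_gammaR hr hN h]

lemma one_mem_gammaR_sublevel (hr : r ≠ 0) {y : ℝ} (hy : 1 ≤ y) :
    (1 : ℝ) ∈ {x : ℝ | 1 ≤ x ∧ GammaR r x ≤ y} :=
  ⟨le_rfl, by simpa using (gammaR_natCast_pow hr 1).trans_le (by simpa using hy)⟩

lemma bddAbove_gammaR_sublevel (hr : r ≠ 0) (y : ℝ) :
    BddAbove {x : ℝ | 1 ≤ x ∧ GammaR r x ≤ y} := by
  obtain ⟨N, hN⟩ := exists_nat_ge y
  refine ⟨((N + 2 : ℕ) : ℝ) ^ r, fun x hx => le_natCast_pow_of_gammaR_le hr (by omega) ?_ hx.2⟩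
  calc y ≤ N := hN
    _ ≤ ((N + 2).factorial : ℕ) := mod_cast (Nat.le_add_right N 2).trans (Nat.self_le_factorial _)
    _ ≤ _ := le_self_pow₀ (mod_cast Nat.factorial_pos _) hr

lemma one_le_factorial_pow (r N : ℕ) : (1 : ℝ) ≤ (N.factorial : ℝ) ^ r :=
  one_le_pow₀ (mod_cast Nat.factorial_pos _)

lemma one_le_gammaRInv (hr : r ≠ 0) {y : ℝ} (hy : 1 ≤ y) : 1 ≤ GammaRInv r y :=
  le_csSup (bddAbove_gammaR_sublevel hr y) (one_mem_gammaR_sublevel hr hy)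

lemma gammaRInv_le_natCast_pow (hr : r ≠ 0) (hN : 2 ≤ N) {y : ℝ} (hy₁ : 1 ≤ y)
    (hy : y ≤ (N.factorial : ℝ) ^ r) : GammaRInv r y ≤ (N : ℝ) ^ r :=
  csSup_le ⟨1, one_mem_gammaR_sublevel hr hy₁⟩ fun _ hx =>
    le_natCast_pow_of_gammaR_le hr hN hy hx.2

lemma gammaRInv_factorial_pow (hr : r ≠ 0) (hN : 2 ≤ N) :
    GammaRInv r ((N.factorial : ℝ) ^ r) = (N : ℝ) ^ r :=
  le_antisymm (gammaRInv_le_natCast_pow hr hN (one_le_factorial_pow r N) le_rfl)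
    (le_csSup (bddAbove_gammaR_sublevel hr _)
      ⟨one_le_pow₀ (mod_cast (by omega : 1 ≤ N)), (gammaR_natCast_pow hr N).le⟩)

lemma factorial_pow_mul_gammaRInv_le (hr : r ≠ 0) (hM : 1 ≤ M) {y : ℝ}
    (hy : ((M + 1).factorial : ℝ) ^ r ≤ y) : (M.factorial : ℝ) ^ r * GammaRInv r y ≤ y := by
  have hy₁ : 1 ≤ y := (one_le_factorial_pow r (M + 1)).trans hy
  have h_pos : (0 : ℝ) < (M.factorial : ℝ) ^ r := by positivity
  rw [mul_comm, ← le_div_iff₀ h_pos]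
  refine csSup_le ⟨1, one_mem_gammaR_sublevel hr hy₁⟩ fun x hx => ?_
  rw [le_div_iff₀ h_pos]
  rcases le_or_gt x (((M + 1 : ℕ) : ℝ) ^ r) with h | h
  · calc x * (M.factorial : ℝ) ^ r ≤ ((M + 1 : ℕ) : ℝ) ^ r * (M.factorial : ℝ) ^ r := by gcongr
      _ = ((M + 1).factorial : ℝ) ^ r := by
        rw [Nat.factorial_succ, Nat.cast_mul, mul_pow]
      _ ≤ y := hy
  · exact (mul_factorial_pow_le_gammaR hr hM h).trans hx.2

lemma gammaRInv_le_of_sub_mul_factorial_pow_le (hr : r ≠ 0) (hM : 1 ≤ M) (hP : P < (M + 1) ^ r)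
    {y : ℝ} (hy : (((M : ℝ) + 1) ^ r - P) * (M.factorial : ℝ) ^ r ≤ y) :
    (M.factorial : ℝ) ^ r * (1 - (P : ℝ) / ((M : ℝ) + 1) ^ r) * GammaRInv r y ≤ y := by
  have hP' : (P : ℝ) + 1 ≤ ((M : ℝ) + 1) ^ r := mod_cast hP
  have hfac := one_le_factorial_pow r M
  have hy₁ : 1 ≤ y := by nlinarith
  have hinv := one_le_gammaRInv hr hy₁
  rcases le_or_gt (((M + 1).factorial : ℝ) ^ r) y with h | h
  · have : 0 ≤ (P : ℝ) / ((M : ℝ) + 1) ^ r := by positivity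
    calc (M.factorial : ℝ) ^ r * (1 - (P : ℝ) / ((M : ℝ) + 1) ^ r) * GammaRInv r y
        ≤ (M.factorial : ℝ) ^ r * 1 * GammaRInv r y := by gcongr; linarith
      _ ≤ y := by rw [mul_one]; exact factorial_pow_mul_gammaRInv_le hr hM h
  · have h_inv_le := gammaRInv_le_natCast_pow hr (by omega : 2 ≤ M + 1) hy₁ h.le
    have h_frac : 0 ≤ 1 - (P : ℝ) / ((M : ℝ) + 1) ^ r := by
      rw [sub_nonneg, div_le_one (by positivity)]
      linarith
    calc (M.factorial : ℝ) ^ r * (1 - (P : ℝ) / ((M : ℝ) + 1) ^ r) * GammaRInv r y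
        ≤ (M.factorial : ℝ) ^ r * (1 - (P : ℝ) / ((M : ℝ) + 1) ^ r) * ((M : ℝ) + 1) ^ r := by
          gcongr
          exact_mod_cast h_inv_le
      _ = (((M : ℝ) + 1) ^ r - P) * (M.factorial : ℝ) ^ r := by field_simp
      _ ≤ y := hy

/-- The periods `b ^ (M!) ^ r`, at which `Γ_r⁻¹(log_b m) = M ^ r`: the frequencies of the
construction are taken among them. -/
def gammaPeriod (r b M : ℕ) : ℕ := b ^ M.factorial ^ r

lemma gammaPeriod_succ (r b M : ℕ) :
    gammaPeriod r b (M + 1) = gammaPeriod r b M ^ (M + 1) ^ r := by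
  rw [gammaPeriod, gammaPeriod, ← pow_mul, Nat.factorial_succ, mul_pow, mul_comm]

lemma gammaPeriod_pos (hb : 2 ≤ b) : 0 < gammaPeriod r b M :=
  Nat.pow_pos (by omega)

lemma lt_gammaPeriod (hb : 2 ≤ b) (hr : r ≠ 0) : M < gammaPeriod r b M :=
  ((Nat.self_le_factorial M).trans (Nat.le_self_pow hr _)).trans_lt (Nat.lt_pow_self hb)

lemma pow_dvd_gammaPeriod {e : ℕ} (hr : r ≠ 0) (he : e ≤ M) : b ^ e ∣ gammaPeriod r b M :=
  pow_dvd_pow b ((he.trans (Nat.self_le_factorial M)).trans (Nat.le_self_pow hr _))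

lemma tendsto_gammaPeriod_atTop (hr : r ≠ 0) (hb : 2 ≤ b) :
    Tendsto (gammaPeriod r b) atTop atTop :=
  tendsto_atTop_mono (fun _ => (lt_gammaPeriod hb hr).le) tendsto_id

lemma logb_gammaPeriod (hb : 2 ≤ b) :
    Real.logb b (gammaPeriod r b M) = (M.factorial : ℝ) ^ r := by
  have hb' : (1 : ℝ) < b := mod_cast hb
  rw [gammaPeriod, Nat.cast_pow, Real.logb_pow, Real.logb_self_eq_one hb', mul_one, Nat.cast_pow]

lemma intScale1_eq_rpow (r b m : ℕ) (t : ℝ) : intScale1 r b m t = intScale1 r b m 1 ^ t := by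
  rw [intScale1, intScale1, ← Real.rpow_mul m.cast_nonneg, one_div, inv_mul_eq_div]

lemma intScale1_gammaPeriod (hr : r ≠ 0) (hb : 2 ≤ b) (hM : 1 ≤ M) (t : ℝ) :
    intScale1 r b (gammaPeriod r b (M + 1)) t = (gammaPeriod r b M : ℝ) ^ t := by
  rw [intScale1, ← Real.logb, logb_gammaPeriod hb, gammaRInv_factorial_pow hr (by omega),
    gammaPeriod_succ, Nat.cast_pow, ← Real.rpow_natCast, ← Real.rpow_mul (Nat.cast_nonneg _)]
  congr 1
  push_cast
  field_simp

lemma intScale1_one_eq_rpow_logb {m : ℕ} (hb : 2 ≤ b) (hm : 0 < m) :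
    intScale1 r b m 1 = (b : ℝ) ^ (Real.logb b m / GammaRInv r (Real.logb b m)) := by
  have hb' : (1 : ℝ) < b := mod_cast hb
  rw [div_eq_mul_one_div, Real.rpow_mul (by positivity),
    Real.rpow_logb (by positivity) hb'.ne' (mod_cast hm)]
  rfl

lemma gammaPeriod_rpow_le_intScale1 (hr : r ≠ 0) (hb : 2 ≤ b) (hM : 1 ≤ M) {m R : ℕ}
    (hP : P < (M + 1) ^ r) (hR : R ≤ gammaPeriod r b M ^ P)
    (hm : gammaPeriod r b (M + 1) ≤ R * m) :
    (gammaPeriod r b M : ℝ) ^ (1 - (P : ℝ) / ((M : ℝ) + 1) ^ r) ≤ intScale1 r b m 1 := by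
  have hb' : (1 : ℝ) < b := mod_cast hb
  have h_pos := gammaPeriod_pos (r := r) (M := M) hb
  have h_pow_le : gammaPeriod r b M ^ ((M + 1) ^ r - P) ≤ m := by
    refine Nat.le_of_mul_le_mul_left ?_ (pow_pos h_pos P)
    rw [← pow_add, Nat.add_sub_cancel' hP.le, ← gammaPeriod_succ]
    exact hm.trans (Nat.mul_le_mul_right _ hR)
  have hm_pos : 0 < m := (Nat.pow_pos h_pos).trans_le h_pow_le
  have h_log : (((M : ℝ) + 1) ^ r - P) * (M.factorial : ℝ) ^ r ≤ Real.logb b m := by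
    have := Real.logb_le_logb_of_le hb' (by exact_mod_cast Nat.pow_pos h_pos)
      (Nat.cast_le (α := ℝ).2 h_pow_le)
    rw [Nat.cast_pow, Real.logb_pow, logb_gammaPeriod hb, Nat.cast_sub hP.le] at this
    exact_mod_cast this
  have h_log_one : 1 ≤ Real.logb b m := by
    have hP' : (P : ℝ) + 1 ≤ ((M : ℝ) + 1) ^ r := mod_cast hP
    nlinarith [one_le_factorial_pow r M]
  rw [intScale1_one_eq_rpow_logb hb hm_pos, ← Real.rpow_logb (b := b) (by positivity) hb'.ne'
    (show (0 : ℝ) < gammaPeriod r b M from mod_cast h_pos), logb_gammaPeriod hb,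
    ← Real.rpow_mul (by positivity)]
  refine Real.rpow_le_rpow_of_exponent_le hb'.le ?_
  rw [le_div_iff₀ (by linarith [one_le_gammaRInv hr h_log_one])]
  exact gammaRInv_le_of_sub_mul_factorial_pow_le hr hM hP h_log

end Scaling

/-! ### Conjugacies and stages of the construction -/

/-- The translation of the torus by `t` in the first coordinate. -/
def rotate (t : Torus1) (z : Torus2) : Torus2 := (z.1 + t, z.2)

lemma rotate_rotate (t u : Torus1) (z : Torus2) : rotate t (rotate u z) = rotate (t + u) z := by
  rw [rotate, rotate, rotate, add_assoc, add_comm u t]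

lemma rotate_zero (z : Torus2) : rotate 0 z = z := by simp [rotate]

lemma dist_rotate_rotate (t u : Torus1) (z : Torus2) :
    dist (rotate t z) (rotate u z) = dist t u := by
  simp [rotate, Prod.dist_eq]

lemma torusProj_add_fst (t : ℝ) (p : ℝ × ℝ) :
    torusProj (p + (t, 0)) = rotate (t : Torus1) (torusProj p) := by
  simp [rotate, torusProj]

lemma continuous_rotate (t : Torus1) : Continuous (rotate t) := by
  unfold rotate
  fun_prop

lemma measurePreserving_rotate (t : Torus1) : MeasurePreserving (rotate t) volume volume :=
  (measurePreserving_add_right volume t).prod (MeasurePreserving.id _)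

/-- A volume-preserving homeomorphism of the torus that, with its inverse, lifts to smooth maps of
the plane with bounded derivatives; the lift commutes with the vertical unit translation. -/
structure Conjugacy where
  toHomeomorph : Torus2 ≃ₜ Torus2
  lift : ℝ × ℝ → ℝ × ℝ
  liftInv : ℝ × ℝ → ℝ × ℝ
  isLiftOf : IsLiftOf lift toHomeomorph
  isLiftOf_inv : IsLiftOf liftInv toHomeomorph.symm
  hasBoundedDerivs : HasBoundedDerivs lift
  hasBoundedDerivs_inv : HasBoundedDerivs liftInv
  measurePreserving : MeasurePreserving toHomeomorph volume volume
  lift_add_one : ∀ x y, lift (x, y + 1) = lift (x, y) + (0, 1)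

namespace Conjugacy

/-- The identity conjugacy. -/
def refl : Conjugacy where
  toHomeomorph := Homeomorph.refl _
  lift p := p
  liftInv p := p
  isLiftOf _ := rfl
  isLiftOf_inv _ := rfl
  hasBoundedDerivs := .id
  hasBoundedDerivs_inv := .id
  measurePreserving := .id _
  lift_add_one x y := by simp

/-- The composition `H ∘ h` of two conjugacies. -/
def comp (H h : Conjugacy) : Conjugacy where
  toHomeomorph := h.toHomeomorph.trans H.toHomeomorph
  lift p := H.lift (h.lift p)
  liftInv p := h.liftInv (H.liftInv p)
  isLiftOf p := by rw [H.isLiftOf, h.isLiftOf, Homeomorph.trans_apply]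
  isLiftOf_inv p := by rw [h.isLiftOf_inv, H.isLiftOf_inv, Homeomorph.symm_trans_apply]
  hasBoundedDerivs := H.hasBoundedDerivs.comp h.hasBoundedDerivs
  hasBoundedDerivs_inv := h.hasBoundedDerivs_inv.comp H.hasBoundedDerivs_inv
  measurePreserving := H.measurePreserving.comp h.measurePreserving
  lift_add_one x y := by
    rw [h.lift_add_one, ← H.lift_add_one (h.lift (x, y)).1]
    congr 1
    ext <;> simp

variable (H : Conjugacy)

lemma measurePreserving_symm : MeasurePreserving H.toHomeomorph.symm volume volume :=
  H.measurePreserving.symm H.toHomeomorph.toMeasurableEquiv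

/-- The circle action `z ↦ H (rotate t (H⁻¹ z))`. -/
def flow (t : Torus1) (z : Torus2) : Torus2 := H.toHomeomorph (rotate t (H.toHomeomorph.symm z))

/-- The lift of the circle action `Conjugacy.flow` to the plane. -/
def liftFlow (t : ℝ) (p : ℝ × ℝ) : ℝ × ℝ := H.lift (H.liftInv p + (t, 0))

lemma isLiftOf_liftFlow (t : ℝ) : IsLiftOf (H.liftFlow t) (H.flow t) := fun p => by
  rw [liftFlow, flow, H.isLiftOf, torusProj_add_fst, H.isLiftOf_inv]

lemma contDiff_liftFlow (t : ℝ) : ContDiff ℝ ∞ (H.liftFlow t) :=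
  H.hasBoundedDerivs.contDiff.comp (H.hasBoundedDerivs_inv.contDiff.add contDiff_const)

lemma flow_flow (t u : Torus1) (z : Torus2) : H.flow t (H.flow u z) = H.flow (t + u) z := by
  simp [flow, rotate_rotate]

lemma flow_zero (z : Torus2) : H.flow 0 z = z := by simp [flow, rotate_zero]

lemma symm_flow_fst (t : Torus1) (z : Torus2) :
    (H.toHomeomorph.symm (H.flow t z)).1 = (H.toHomeomorph.symm z).1 + t := by
  simp [flow, rotate]

lemma measurePreserving_flow (t : Torus1) : MeasurePreserving (H.flow t) volume volume :=
  H.measurePreserving.comp ((measurePreserving_rotate t).comp H.measurePreserving_symm)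

lemma continuous_flow (t : Torus1) : Continuous (H.flow t) :=
  H.toHomeomorph.continuous.comp ((continuous_rotate t).comp H.toHomeomorph.symm.continuous)

end Conjugacy

/-- A stage of the Anosov–Katok construction: a conjugacy `H` with Lipschitz constant `K`, and a
period `q` such that the next conjugacy will agree with `H` up to a map commuting with the
translation by `1 / q`. -/
structure Stage extends Conjugacy where
  q : ℕ
  K : ℕ
  one_le_K : 1 ≤ K
  dist_le : ∀ z w, dist (toHomeomorph z) (toHomeomorph w) ≤ K * dist z w
  mul_K_le_q : 64 * K ≤ q

namespace Stage

lemma q_pos (s : Stage) : 0 < s.q := by linarith [s.one_le_K, s.mul_K_le_q]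

lemma dist_flow_le (s : Stage) (t u : Torus1) (z : Torus2) :
    dist (s.flow t z) (s.flow u z) ≤ s.K * dist t u :=
  (s.dist_le _ _).trans_eq (by rw [dist_rotate_rotate])

/-- The stage with the identity conjugacy and a period `q ≥ 64`. -/
def init (q : ℕ) (hq : 64 ≤ q) : Stage where
  toConjugacy := .refl
  q := q
  K := 1
  one_le_K := le_rfl
  dist_le z w := by simp [Conjugacy.refl]
  mul_K_le_q := by simpa using hq

/-- The passage from a stage `s` to its successor `s'` at time `n`, without the control on the
complexity of the circle action. The closeness of the two actions is measured in the `n`-th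
smooth seminorms. -/
structure IsSucc (n : ℕ) (s s' : Stage) : Prop where
  dvd : s.q ∣ s'.q
  flow_eq : ∀ (k : ℤ) (z : Torus2),
    s'.flow ((k / s.q : ℝ) : Torus1) z = s.flow ((k / s.q : ℝ) : Torus1) z
  mul_q_le : 100 * 2 ^ n * s'.K * s.q ≤ s'.q
  norm_iteratedFDeriv_le : ∀ k ≤ n, ∀ (t t' : ℝ) (x : ℝ × ℝ),
    ‖iteratedFDeriv ℝ k (fun p => s'.liftFlow t p - s'.liftFlow t' p) x‖
      ≤ s'.q / 2 ^ n * |t - t'|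
  abs_integral_sub_le : ∀ (f : Torus2 → ℝ) (C : ℝ≥0), LipschitzWith C f → ∀ z,
    |(∫ t : Torus1, f (s'.flow t z)) - ∫ w, f w| ≤ C / ((n : ℝ) + 1)
  dist_symm_fst_le : ∀ z,
    dist (s'.toHomeomorph.symm z).1 (s.toHomeomorph.symm z).1 ≤ 1 / (2 ^ n * s.q)
  exists_generating : ∃ S : Set Torus2, MeasurableSet S ∧ volume Sᶜ ≤ (1 / 2 : ℝ≥0∞) ^ n ∧
    ∀ z ∈ S, ∀ w ∈ S,
      dist (s'.toHomeomorph.symm z).1 (s'.toHomeomorph.symm w).1 ≤ 4 / s'.q →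
        dist z w ≤ 1 / ((n : ℝ) + 1)

/-- The circle action of the stage `s` has about `Q` distinguishable orbits, up to an exponent
error `1 / (n + 1)`. -/
structure HasComplexity (n : ℕ) (s : Stage) (Q : ℕ) : Prop where
  le_Q : n + 2 ≤ Q
  exists_cover : ∃ F : Finset Torus2, (F.card : ℝ) ≤ (Q : ℝ) ^ (1 + 1 / ((n : ℝ) + 1)) ∧
    ∀ z, ∃ w ∈ F, ∀ t, dist (s.flow t w) (s.flow t z) < 1 / ((n : ℝ) + 1)
  exists_separated : ∃ F : Finset Torus2, (Q : ℝ) ^ (1 - 1 / ((n : ℝ) + 1)) ≤ (F.card : ℝ) ∧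
    ∀ z ∈ F, ∀ w ∈ F, z ≠ w → ∃ t, 1 / 4 ≤ dist (s.flow t z) (s.flow t w)

/-- The scaling family `a` takes the value `Q ^ t` at the period of `s`, and is still almost as
large at times comparable to `q / K`. -/
structure IsAdapted (n : ℕ) (s : Stage) (Q : ℕ) (a : ℕ → ℝ → ℝ) : Prop where
  apply_q : ∀ t : ℝ, a s.q t = (Q : ℝ) ^ t
  rpow_le : ∀ m : ℕ, s.q ≤ 100 * (n + 1) * s.K * m →
    (Q : ℝ) ^ (1 - 1 / ((n : ℝ) + 1)) ≤ a m 1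

end Stage

/-! ### The limit diffeomorphism -/

section GeometricConvergence

variable {X : Type*} [PseudoMetricSpace X] {f : ℕ → X} {u : ℕ → ℝ}

lemma dist_add_le_of_halving (hu : ∀ n, u (n + 1) ≤ u n / 2)
    (hf : ∀ n, dist (f n) (f (n + 1)) ≤ u n) (n k : ℕ) :
    dist (f (n + k)) (f (n + k + 1)) ≤ 2 * u n / 2 / 2 ^ k := by
  have h_geom (k : ℕ) : u (n + k) ≤ 2 * u n / 2 / 2 ^ k := by
    induction k with
    | zero => simp
    | succ k ih =>
      rw [← add_assoc, pow_succ, ← div_div]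
      linarith [hu (n + k)]
  exact (hf _).trans (h_geom k)

lemma cauchySeq_of_halving (hu : ∀ n, u (n + 1) ≤ u n / 2)
    (hf : ∀ n, dist (f n) (f (n + 1)) ≤ u n) : CauchySeq f :=
  cauchySeq_of_le_geometric_two (C := 2 * u 0) fun k => by
    simpa only [zero_add] using dist_add_le_of_halving hu hf 0 k

lemma dist_le_of_tendsto_of_halving (hu : ∀ n, u (n + 1) ≤ u n / 2)
    (hf : ∀ n, dist (f n) (f (n + 1)) ≤ u n) {a : X} (ha : Tendsto f atTop (𝓝 a)) (n : ℕ) :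
    dist (f n) a ≤ 2 * u n :=
  dist_le_of_le_geometric_two_of_tendsto₀ (f := fun k => f (n + k))
    (dist_add_le_of_halving hu hf n) ((tendsto_add_atTop_iff_nat n).2 ha |>.congr fun k => by
      rw [add_comm])

end GeometricConvergence

lemma one_le_mul_of_int_div_lt {x p d q : ℤ} (hd : 0 < d) (hq : 0 < q)
    (h : (p : ℝ) / q < x / d) : 1 ≤ d * q * ((x : ℝ) / d - p / q) := by
  have : (0 : ℝ) < d := mod_cast hd
  have : (0 : ℝ) < q := mod_cast hq
  have h_eq : d * q * ((x : ℝ) / d - p / q) = ((x * q - p * d : ℤ) : ℝ) := by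
    push_cast
    field_simp
  have h_pos : 0 < d * q * ((x : ℝ) / d - p / q) := mul_pos (by positivity) (sub_pos.2 h)
  rw [h_eq] at h_pos ⊢
  exact_mod_cast h_pos

/-- An infinite run of the Anosov–Katok construction. -/
structure Tower where
  stage : ℕ → Stage
  isSucc : ∀ n, (stage n).IsSucc n (stage (n + 1))

namespace Tower

variable (σ : Tower)

/-- The period of the `n`-th stage. -/
abbrev q (n : ℕ) : ℕ := (σ.stage n).q

/-- The Lipschitz constant of the `n`-th conjugacy. -/
abbrev K (n : ℕ) : ℕ := (σ.stage n).K

lemma q_pos (n : ℕ) : (0 : ℝ) < σ.q n := mod_cast (σ.stage n).q_pos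

lemma one_le_K (n : ℕ) : (1 : ℝ) ≤ σ.K n := mod_cast (σ.stage n).one_le_K

/-- The rotation number of the `n`-th approximating diffeomorphism. -/
noncomputable def rotNum (n : ℕ) : ℝ := ∑ k ∈ Finset.range n, 1 / (σ.q (k + 1) : ℝ)

lemma rotNum_succ (n : ℕ) : σ.rotNum (n + 1) = σ.rotNum n + 1 / (σ.q (n + 1) : ℝ) :=
  Finset.sum_range_succ _ n

lemma exists_rotNum_eq_div (n : ℕ) : ∃ p : ℤ, σ.rotNum n = p / σ.q n := by
  induction n with
  | zero => exact ⟨0, by simp [rotNum]⟩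
  | succ n ih =>
    obtain ⟨p, hp⟩ := ih
    obtain ⟨d, hd⟩ := (σ.isSucc n).dvd
    have h_cast : (σ.q (n + 1) : ℝ) = σ.q n * d := mod_cast hd
    have hq := σ.q_pos n
    have hd_pos : (d : ℝ) ≠ 0 := fun h => (σ.q_pos (n + 1)).ne' (by rw [h_cast, h, mul_zero])
    refine ⟨p * d + 1, ?_⟩
    rw [rotNum_succ, hp, h_cast]
    push_cast
    field_simp

/-- The size `K / q` (at the next stage) of the displacement of the `n`-th approximation. -/
noncomputable def err (n : ℕ) : ℝ := σ.K (n + 1) / σ.q (n + 1)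

lemma err_pos (n : ℕ) : 0 < σ.err n :=
  div_pos (zero_lt_one.trans_le (σ.one_le_K _)) (σ.q_pos _)

lemma err_le (n : ℕ) : σ.err n ≤ 1 / (100 * 2 ^ n * σ.q n) := by
  have hq := σ.q_pos n
  have h_mul : 100 * 2 ^ n * (σ.K (n + 1) : ℝ) * σ.q n ≤ σ.q (n + 1) :=
    mod_cast (σ.isSucc n).mul_q_le
  rw [err, div_le_div_iff₀ (σ.q_pos _) (by positivity)]
  linarith

lemma one_div_q_succ_le_err (n : ℕ) : 1 / (σ.q (n + 1) : ℝ) ≤ σ.err n :=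
  div_le_div_of_nonneg_right (σ.one_le_K _) (σ.q_pos _).le

lemma err_succ_le (n : ℕ) : σ.err (n + 1) ≤ σ.err n / 2 := by
  have hq := σ.q_pos (n + 1)
  have h_pow : (1 : ℝ) ≤ 2 ^ (n + 1) := one_le_pow₀ one_le_two
  calc σ.err (n + 1) ≤ 1 / (100 * 2 ^ (n + 1) * σ.q (n + 1)) := σ.err_le (n + 1)
    _ ≤ 1 / (σ.q (n + 1) * 2) := one_div_le_one_div_of_le (by positivity) (by nlinarith)
    _ ≤ σ.err n / 2 := by
      rw [← div_div]
      exact div_le_div_of_nonneg_right (σ.one_div_q_succ_le_err n) zero_le_two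

lemma mul_err_succ_le {c : ℝ} (hc : 0 ≤ c) (n : ℕ) : c * σ.err (n + 1) ≤ c * σ.err n / 2 := by
  rw [mul_div_assoc]
  exact mul_le_mul_of_nonneg_left (σ.err_succ_le n) hc

lemma err_le_half_pow (n : ℕ) : σ.err n ≤ (1 / 2) ^ n := by
  have hq : (1 : ℝ) ≤ σ.q n := mod_cast (σ.stage n).q_pos
  have h_pow : (0 : ℝ) < 2 ^ n := by positivity
  refine (σ.err_le n).trans ?_
  rw [one_div_pow]
  exact one_div_le_one_div_of_le h_pow (by nlinarith)

lemma tendsto_err : Tendsto σ.err atTop (𝓝 0) :=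
  squeeze_zero (fun n => (σ.err_pos n).le) σ.err_le_half_pow
    (tendsto_pow_atTop_nhds_zero_of_lt_one (by norm_num) (by norm_num))

lemma dist_rotNum_succ (n : ℕ) :
    dist (σ.rotNum n) (σ.rotNum (n + 1)) = 1 / (σ.q (n + 1) : ℝ) := by
  rw [rotNum_succ, dist_self_add_right, Real.norm_of_nonneg (by positivity)]

/-- The rotation number of the limit diffeomorphism. -/
noncomputable def rotLim : ℝ := limUnder atTop σ.rotNum

lemma dist_rotNum_succ_le (n : ℕ) : dist (σ.rotNum n) (σ.rotNum (n + 1)) ≤ σ.err n :=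
  (σ.dist_rotNum_succ n).trans_le (σ.one_div_q_succ_le_err n)

lemma tendsto_rotNum : Tendsto σ.rotNum atTop (𝓝 σ.rotLim) :=
  CauchySeq.tendsto_limUnder (cauchySeq_of_halving σ.err_succ_le σ.dist_rotNum_succ_le)

lemma strictMono_rotNum : StrictMono σ.rotNum := strictMono_nat_of_lt_succ fun n => by
  rw [rotNum_succ]
  exact lt_add_of_pos_right _ (one_div_pos.2 (σ.q_pos _))

lemma rotNum_lt_rotLim (n : ℕ) : σ.rotNum n < σ.rotLim :=
  (σ.strictMono_rotNum n.lt_succ_self).trans_le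
    (σ.strictMono_rotNum.monotone.ge_of_tendsto σ.tendsto_rotNum _)

lemma rotLim_sub_rotNum_le (n : ℕ) : σ.rotLim - σ.rotNum n ≤ 2 * σ.err n := by
  refine (le_abs_self _).trans ?_
  rw [abs_sub_comm]
  exact dist_le_of_tendsto_of_halving σ.err_succ_le σ.dist_rotNum_succ_le σ.tendsto_rotNum n

lemma irrational_rotLim : Irrational σ.rotLim := by
  rintro ⟨x, hx⟩
  obtain ⟨n, hn⟩ : ∃ n : ℕ, x.den < 2 ^ n := ⟨x.den, Nat.lt_two_pow_self⟩
  obtain ⟨p, hp⟩ := σ.exists_rotNum_eq_div n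
  have hq := σ.q_pos n
  have hn' : (x.den : ℝ) < 2 ^ n := mod_cast hn
  have hx_eq : σ.rotLim = x.num / x.den := by rw [← hx, Rat.cast_def]
  have h_far : 1 ≤ (x.den : ℝ) * σ.q n * (σ.rotLim - σ.rotNum n) := by
    have h_lt := σ.rotNum_lt_rotLim n
    rw [hx_eq, hp] at h_lt ⊢
    exact_mod_cast one_le_mul_of_int_div_lt (x := x.num) (p := p) (d := x.den) (q := σ.q n)
      (mod_cast x.den_pos) (mod_cast (σ.stage n).q_pos) (mod_cast h_lt)
  have h_near : σ.rotLim - σ.rotNum n ≤ 2 * (1 / (100 * 2 ^ n * σ.q n)) :=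
    (σ.rotLim_sub_rotNum_le n).trans (mul_le_mul_of_nonneg_left (σ.err_le n) zero_le_two)
  have : (1 : ℝ) ≤ x.den / (50 * 2 ^ n) := by
    calc (1 : ℝ) ≤ x.den * σ.q n * (2 * (1 / (100 * 2 ^ n * σ.q n))) := h_far.trans (by gcongr)
      _ = x.den / (50 * 2 ^ n) := by field_simp; norm_num
  rw [one_le_div (by positivity)] at this
  linarith [pow_pos (zero_lt_two' ℝ) n]

/-- The `e`-th power of the `n`-th approximating diffeomorphism. -/
noncomputable def approxPow (n : ℕ) (e : ℤ) : Torus2 → Torus2 :=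
  (σ.stage n).flow ((e * σ.rotNum n : ℝ) : Torus1)

lemma approxPow_eq_flow_succ (n : ℕ) (e : ℤ) (z : Torus2) :
    σ.approxPow n e z = (σ.stage (n + 1)).flow ((e * σ.rotNum n : ℝ) : Torus1) z := by
  obtain ⟨p, hp⟩ := σ.exists_rotNum_eq_div n
  have h_eq := (σ.isSucc n).flow_eq (e * p) z
  push_cast at h_eq
  rw [approxPow, hp, ← mul_div_assoc, h_eq]

lemma dist_approxPow_succ_le (e : ℤ) (z : Torus2) (n : ℕ) :
    dist (σ.approxPow n e z) (σ.approxPow (n + 1) e z) ≤ |(e : ℝ)| * σ.err n := by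
  rw [approxPow_eq_flow_succ]
  have h_dist : dist ((e * σ.rotNum n : ℝ) : Torus1) ((e * σ.rotNum (n + 1) : ℝ) : Torus1)
      ≤ |(e : ℝ)| * (1 / σ.q (n + 1)) := by
    refine (dist_coe_le _ _).trans_eq ?_
    rw [← mul_sub, abs_mul, ← Real.dist_eq, dist_rotNum_succ]
  calc _ ≤ (σ.K (n + 1) : ℝ) * (|(e : ℝ)| * (1 / σ.q (n + 1))) :=
        ((σ.stage (n + 1)).dist_flow_le _ _ _).trans (by gcongr)
    _ = |(e : ℝ)| * σ.err n := by
      rw [err]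
      ring

/-- The `e`-th power of the limit diffeomorphism. -/
noncomputable def limPow (e : ℤ) (z : Torus2) : Torus2 :=
  limUnder atTop fun n => σ.approxPow n e z

lemma tendsto_approxPow (e : ℤ) (z : Torus2) :
    Tendsto (fun n => σ.approxPow n e z) atTop (𝓝 (σ.limPow e z)) :=
  CauchySeq.tendsto_limUnder (cauchySeq_of_halving (σ.mul_err_succ_le (abs_nonneg _))
    (σ.dist_approxPow_succ_le e z))

lemma dist_approxPow_le (e : ℤ) (z : Torus2) (n : ℕ) :
    dist (σ.approxPow n e z) (σ.limPow e z) ≤ 2 * (|(e : ℝ)| * σ.err n) :=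
  dist_le_of_tendsto_of_halving (σ.mul_err_succ_le (abs_nonneg _)) (σ.dist_approxPow_succ_le e z)
    (σ.tendsto_approxPow e z) n

lemma tendstoUniformly_approxPow (e : ℤ) :
    TendstoUniformly (fun n => σ.approxPow n e) (σ.limPow e) atTop := by
  have h_lim : Tendsto (fun n => 2 * (|(e : ℝ)| * σ.err n)) atTop (𝓝 0) := by
    simpa using (σ.tendsto_err.const_mul |(e : ℝ)|).const_mul 2
  rw [Metric.tendstoUniformly_iff]
  intro ε hε
  filter_upwards [h_lim.eventually (gt_mem_nhds hε)] with n hn z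
  rw [dist_comm]
  exact (σ.dist_approxPow_le e z n).trans_lt hn

lemma continuous_limPow (e : ℤ) : Continuous (σ.limPow e) :=
  (σ.tendstoUniformly_approxPow e).continuous
    (Frequently.of_forall fun n => (σ.stage n).continuous_flow _)

lemma limPow_limPow (e e' : ℤ) (z : Torus2) : σ.limPow e (σ.limPow e' z) = σ.limPow (e + e') z := by
  refine tendsto_nhds_unique ((σ.tendstoUniformly_approxPow e).tendsto_comp
    (σ.continuous_limPow e).continuousAt (σ.tendsto_approxPow e' z))
    ((σ.tendsto_approxPow (e + e') z).congr fun n => ?_)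
  rw [approxPow, approxPow, approxPow, Conjugacy.flow_flow, Int.cast_add, add_mul,
    AddCircle.coe_add]

lemma limPow_zero (z : Torus2) : σ.limPow 0 z = z :=
  tendsto_nhds_unique (σ.tendsto_approxPow 0 z)
    (tendsto_const_nhds.congr fun n => by simp [approxPow, Conjugacy.flow_zero])

/-- The limit diffeomorphism of the tower. -/
noncomputable def map : Torus2 → Torus2 := σ.limPow 1

lemma iterate_map (i : ℕ) (z : Torus2) : σ.map^[i] z = σ.limPow i z := by
  induction i with
  | zero => exact (σ.limPow_zero z).symm
  | succ i ih => rw [Function.iterate_succ_apply', ih, map, limPow_limPow, Nat.cast_succ, add_comm]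

lemma rightInverse_limPow_neg_one : Function.RightInverse (σ.limPow (-1)) σ.map := fun z => by
  rw [map, limPow_limPow, add_neg_cancel, limPow_zero]

lemma leftInverse_limPow_neg_one : Function.LeftInverse (σ.limPow (-1)) σ.map := fun z => by
  rw [map, limPow_limPow, neg_add_cancel, limPow_zero]

lemma bijective_map : Function.Bijective σ.map :=
  ⟨σ.leftInverse_limPow_neg_one.injective, σ.rightInverse_limPow_neg_one.surjective⟩

lemma invFun_map : Function.invFun σ.map = σ.limPow (-1) :=
  (Function.leftInverse_invFun σ.bijective_map.1).eq_rightInverse σ.rightInverse_limPow_neg_one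

/-- The displacement of the lift between the `n`-th and the next approximation. -/
noncomputable def liftIncrement (e : ℤ) (n : ℕ) (p : ℝ × ℝ) : ℝ × ℝ :=
  (σ.stage (n + 1)).liftFlow (e * σ.rotNum (n + 1)) p -
    (σ.stage (n + 1)).liftFlow (e * σ.rotNum n) p

lemma norm_iteratedFDeriv_liftIncrement_le (e : ℤ) {k n : ℕ} (hk : k ≤ n) (x : ℝ × ℝ) :
    ‖iteratedFDeriv ℝ k (σ.liftIncrement e n) x‖ ≤ |(e : ℝ)| * (1 / 2) ^ n := by
  have hq := σ.q_pos (n + 1)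
  refine ((σ.isSucc n).norm_iteratedFDeriv_le k hk _ _ x).trans_eq ?_
  rw [← mul_sub, abs_mul, abs_sub_comm, ← Real.dist_eq, dist_rotNum_succ, one_div_pow]
  field_simp

lemma summable_abs_mul_half_pow (e : ℤ) : Summable fun n : ℕ => |(e : ℝ)| * (1 / 2 : ℝ) ^ n :=
  summable_geometric_two.mul_left _

lemma summable_liftIncrement (e : ℤ) (p : ℝ × ℝ) : Summable fun n => σ.liftIncrement e n p :=
  .of_norm_bounded (summable_abs_mul_half_pow e) fun n => by
    simpa using σ.norm_iteratedFDeriv_liftIncrement_le e n.zero_le p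

lemma contDiff_add_tsum_liftIncrement (e : ℤ) :
    ContDiff ℝ ∞ fun p => p + ∑' n, σ.liftIncrement e n p := by
  refine contDiff_id.add (contDiff_tsum_of_eventually
    (v := fun _ n => |(e : ℝ)| * (1 / 2) ^ n) (fun n => ?_) (fun k _ => ?_) fun k _ => ?_)
  · exact (Conjugacy.contDiff_liftFlow _ _).sub (Conjugacy.contDiff_liftFlow _ _)
  · exact summable_abs_mul_half_pow e
  · rw [Nat.cofinite_eq_atTop]
    filter_upwards [eventually_ge_atTop k] with n hn
    exact σ.norm_iteratedFDeriv_liftIncrement_le e hn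

lemma torusProj_add_sum_liftIncrement (e : ℤ) (p : ℝ × ℝ) (n : ℕ) :
    torusProj (p + ∑ k ∈ Finset.range n, σ.liftIncrement e k p)
      = σ.approxPow n e (torusProj p) := by
  induction n with
  | zero => simp [approxPow, rotNum, Conjugacy.flow_zero]
  | succ n ih =>
    have h_split : torusProj (p + ∑ k ∈ Finset.range n, σ.liftIncrement e k p +
        σ.liftIncrement e n p) = torusProj (p + ∑ k ∈ Finset.range n, σ.liftIncrement e k p) +
          (torusProj ((σ.stage (n + 1)).liftFlow (e * σ.rotNum (n + 1)) p) -
            torusProj ((σ.stage (n + 1)).liftFlow (e * σ.rotNum n) p)) := rfl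
    rw [Finset.sum_range_succ, ← add_assoc, h_split, ih, Conjugacy.isLiftOf_liftFlow,
      Conjugacy.isLiftOf_liftFlow, ← approxPow_eq_flow_succ, add_sub_cancel, approxPow]

lemma exists_contDiff_lift_limPow (e : ℤ) :
    ∃ F : ℝ × ℝ → ℝ × ℝ, ContDiff ℝ ∞ F ∧ IsLiftOf F (σ.limPow e) :=
  ⟨_, σ.contDiff_add_tsum_liftIncrement e, fun p => tendsto_nhds_unique
    ((continuous_torusProj.tendsto _).comp
      ((σ.summable_liftIncrement e p).hasSum.tendsto_sum_nat.const_add p))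
    ((σ.tendsto_approxPow e _).congr fun n =>
      (σ.torusProj_add_sum_liftIncrement e p n).symm)⟩

theorem isCkTorusDiffeo_map : IsCkTorusDiffeo ⊤ σ.map :=
  ⟨σ.bijective_map, σ.exists_contDiff_lift_limPow 1, by
    rw [invFun_map]
    exact σ.exists_contDiff_lift_limPow (-1)⟩

end Tower

/-! ### Unique ergodicity of the limit -/

lemma measure_eq_of_forall_lipschitzWith_integral_eq {X : Type*} [MeasurableSpace X]
    [PseudoEMetricSpace X] [BorelSpace X] {μ ν : Measure X} [IsProbabilityMeasure μ]
    [IsProbabilityMeasure ν]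
    (h : ∀ (f : X → ℝ) (C : ℝ≥0), LipschitzWith C f → ∫ x, f x ∂μ = ∫ x, f x ∂ν) : μ = ν := by
  let μ' : ProbabilityMeasure X := ⟨μ, ‹_›⟩
  let ν' : ProbabilityMeasure X := ⟨ν, ‹_›⟩
  have h_tendsto : Tendsto (fun _ : ℕ => μ') atTop (𝓝 ν') :=
    tendsto_iff_forall_lipschitz_integral_tendsto.2 fun f _ ⟨C, hC⟩ =>
      (h f C hC) ▸ tendsto_const_nhds
  have h_eq : μ' = ν' := tendsto_nhds_unique tendsto_const_nhds h_tendsto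
  exact congrArg Subtype.val h_eq

lemma measurePreserving_of_tendsto {X Y : Type*} [MeasurableSpace X] [MeasurableSpace Y]
    [TopologicalSpace Y] [HasOuterApproxClosed Y] [BorelSpace Y] {μ : Measure X} {ν : Measure Y}
    [IsFiniteMeasure μ] [IsFiniteMeasure ν] {T : ℕ → X → Y} {S : X → Y}
    (hT : ∀ n, MeasurePreserving (T n) μ ν) (hS : Measurable S)
    (hTS : ∀ x, Tendsto (fun n => T n x) atTop (𝓝 (S x))) : MeasurePreserving S μ ν := by
  refine ⟨hS, ext_of_forall_integral_eq_of_IsFiniteMeasure fun f => ?_⟩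
  have h_meas := f.continuous.measurable
  rw [integral_map hS.aemeasurable h_meas.aestronglyMeasurable]
  have h_lim : Tendsto (fun n => ∫ x, f (T n x) ∂μ) atTop (𝓝 (∫ x, f (S x) ∂μ)) :=
    tendsto_integral_of_dominated_convergence (fun _ => ‖f‖)
      (fun n => (h_meas.comp (hT n).measurable).aestronglyMeasurable)
      (integrable_const _) (fun n => .of_forall fun x => f.norm_coe_le_norm _)
      (.of_forall fun x => (f.continuous.tendsto _).comp (hTS x))
  refine tendsto_nhds_unique h_lim (tendsto_const_nhds.congr fun n => ?_)
  rw [← integral_map (hT n).aemeasurable h_meas.aestronglyMeasurable, (hT n).map_eq]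

lemma abs_integral_sub_le_of_abs_birkhoffAverage_sub_le {X : Type*} [MeasurableSpace X]
    {μ : Measure X} [IsProbabilityMeasure μ] {T : X → X} (hT : MeasurePreserving T μ μ)
    {f : X → ℝ} (hf : Integrable f μ) {N : ℕ} (hN : N ≠ 0) {c b : ℝ}
    (h : ∀ x, |birkhoffAverage ℝ T f N x - c| ≤ b) :
    |∫ x, f x ∂μ - c| ≤ b := by
  have h_iter (i : ℕ) : Integrable (fun x => f (T^[i] x)) μ :=
    (hT.iterate i).integrable_comp_of_integrable hf
  have h_integral (i : ℕ) : ∫ x, f (T^[i] x) ∂μ = ∫ x, f x ∂μ := by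
    rw [← integral_map (hT.iterate i).aemeasurable (by rw [(hT.iterate i).map_eq]; exact hf.1),
      (hT.iterate i).map_eq]
  have h_avg : ∫ x, birkhoffAverage ℝ T f N x ∂μ = ∫ x, f x ∂μ := by
    simp only [birkhoffAverage, birkhoffSum, smul_eq_mul]
    rw [integral_const_mul, integral_finsetSum _ fun i _ => h_iter i]
    simp [h_integral, hN]
  have h_int : Integrable (fun x => birkhoffAverage ℝ T f N x) μ :=
    (integrable_finsetSum _ fun i _ => h_iter i).const_mul _
  calc |∫ x, f x ∂μ - c| = ‖∫ x, (birkhoffAverage ℝ T f N x - c) ∂μ‖ := by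
        rw [integral_sub h_int (integrable_const c), h_avg, integral_const, probReal_univ, one_smul,
          Real.norm_eq_abs]
    _ ≤ b := by
        simpa using norm_integral_le_of_norm_le_const (μ := μ) (C := b)
          (f := fun x => birkhoffAverage ℝ T f N x - c) (.of_forall h)

lemma abs_mul_sub_intervalIntegral_le {g : ℝ → ℝ} {C : ℝ≥0} (hg : LipschitzWith C g) {a b : ℝ}
    (hab : a ≤ b) : |(b - a) * g a - ∫ x in a..b, g x| ≤ C * (b - a) * (b - a) := by
  rw [← smul_eq_mul, ← intervalIntegral.integral_const,
    ← intervalIntegral.integral_sub (by simp) (hg.continuous.intervalIntegrable _ _)]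
  refine (intervalIntegral.norm_integral_le_of_norm_le_const (a := a) (b := b) (C := C * (b - a))
    (f := fun x => g a - g x) fun x hx => ?_).trans_eq (by rw [abs_of_nonneg (sub_nonneg.2 hab)])
  rw [uIoc_of_le hab] at hx
  rw [← dist_eq_norm]
  refine (hg.dist_le_mul _ _).trans (mul_le_mul_of_nonneg_left ?_ C.coe_nonneg)
  rw [dist_comm, Real.dist_eq, abs_of_nonneg (sub_nonneg.2 hx.1.le)]
  exact sub_le_sub_right hx.2 _

lemma abs_mean_sub_integral_le {g : Torus1 → ℝ} {C : ℝ≥0} (hg : LipschitzWith C g) {N : ℕ}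
    (hN : 0 < N) :
    |(N : ℝ)⁻¹ * ∑ i ∈ Finset.range N, g ((i / N : ℝ) : Torus1) - ∫ t, g t| ≤ C / N := by
  have hN' : (0 : ℝ) < N := mod_cast hN
  have hg_coe : LipschitzWith C fun x : ℝ => g (x : Torus1) := .of_dist_le_mul fun x y =>
    (hg.dist_le_mul _ _).trans (mul_le_mul_of_nonneg_left (dist_coe_le x y) C.coe_nonneg)
  have h_split : ∫ t, g t = ∑ i ∈ Finset.range N,
      ∫ x in (i / N : ℝ)..((i + 1 : ℕ) / N : ℝ), g (x : Torus1) := by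
    rw [intervalIntegral.sum_integral_adjacent_intervals (a := fun i : ℕ => (i / N : ℝ))
      fun _ _ => hg_coe.continuous.intervalIntegrable _ _,
      ← AddCircle.intervalIntegral_preimage 1 0 g]
    simp [hN'.ne']
  have h_piece (i : ℕ) : |(N : ℝ)⁻¹ * g ((i / N : ℝ) : Torus1) -
      ∫ x in (i / N : ℝ)..((i + 1 : ℕ) / N : ℝ), g (x : Torus1)| ≤ C * (N : ℝ)⁻¹ * (N : ℝ)⁻¹ := by
    have h_len : ((i + 1 : ℕ) / N : ℝ) - (i / N : ℝ) = (N : ℝ)⁻¹ := by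
      push_cast
      ring
    have h_le : (i / N : ℝ) ≤ ((i + 1 : ℕ) / N : ℝ) := by
      rw [← sub_nonneg, h_len]
      positivity
    simpa only [h_len] using abs_mul_sub_intervalIntegral_le hg_coe h_le
  rw [h_split, Finset.mul_sum, ← Finset.sum_sub_distrib]
  refine ((Finset.abs_sum_le_sum_abs _ _).trans
    (Finset.sum_le_card_nsmul _ _ _ fun i _ => h_piece i)).trans_eq ?_
  rw [Finset.card_range, nsmul_eq_mul]
  field_simp

namespace Tower

variable (σ : Tower)

/-- The ratio of the periods of two consecutive stages. -/
def ratio (n : ℕ) : ℕ := σ.q (n + 1) / σ.q n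

lemma q_mul_ratio (n : ℕ) : σ.q n * σ.ratio n = σ.q (n + 1) :=
  Nat.mul_div_cancel' (σ.isSucc n).dvd

lemma ratio_pos (n : ℕ) : 0 < σ.ratio n :=
  Nat.pos_of_ne_zero fun h => (σ.stage (n + 1)).q_pos.ne' (by
    rw [← q, ← q_mul_ratio, h, mul_zero])

lemma mul_K_le_ratio (n : ℕ) : 100 * 2 ^ n * σ.K (n + 1) ≤ σ.ratio n := by
  have h_le := (σ.isSucc n).mul_q_le
  rw [← q, ← q, ← q_mul_ratio, mul_comm (σ.q n)] at h_le
  exact Nat.le_of_mul_le_mul_right h_le (σ.stage n).q_pos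

lemma approxPow_succ_mul_q (n i : ℕ) (z : Torus2) :
    σ.approxPow (n + 1) ((σ.q n * i : ℕ) : ℤ) z
      = (σ.stage (n + 1)).flow ((i / σ.ratio n : ℝ) : Torus1) z := by
  obtain ⟨p, hp⟩ := σ.exists_rotNum_eq_div n
  have hq := σ.q_pos n
  have h_ratio : (0 : ℝ) < σ.ratio n := mod_cast σ.ratio_pos n
  have h_rot : (((σ.q n * i : ℕ) : ℤ) : ℝ) * σ.rotNum (n + 1)
      = ((i * p : ℤ) : ℝ) + i / σ.ratio n := by
    rw [rotNum_succ, hp, ← σ.q_mul_ratio n]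
    push_cast
    field_simp
  rw [approxPow, h_rot, AddCircle.coe_add, coe_intCast, zero_add]

lemma dist_iterate_map_flow_le {n i : ℕ} (hi : i ≤ σ.ratio n) (z : Torus2) :
    dist (σ.map^[σ.q n * i] z) ((σ.stage (n + 1)).flow ((i / σ.ratio n : ℝ) : Torus1) z)
      ≤ 1 / (100 * 2 ^ n) := by
  have hq := σ.q_pos (n + 1)
  have h_time : ((σ.q n * i : ℕ) : ℝ) ≤ σ.q (n + 1) := by
    rw [← σ.q_mul_ratio n]
    exact mod_cast Nat.mul_le_mul_left _ hi
  rw [iterate_map, ← approxPow_succ_mul_q, dist_comm]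
  calc _ ≤ 2 * (((σ.q n * i : ℕ) : ℝ) * σ.err (n + 1)) := by
        simpa only [Int.cast_natCast, Nat.abs_cast] using
          σ.dist_approxPow_le (σ.q n * i : ℕ) z (n + 1)
    _ ≤ 2 * (σ.q (n + 1) * (1 / (100 * 2 ^ (n + 1) * σ.q (n + 1)))) := by
        gcongr
        exacts [(σ.err_pos _).le, σ.err_le _]
    _ = 1 / (100 * 2 ^ n) := by
        rw [pow_succ]
        field_simp

lemma measurePreserving_limPow (e : ℤ) : MeasurePreserving (σ.limPow e) volume volume :=
  measurePreserving_of_tendsto (fun n => (σ.stage n).measurePreserving_flow _)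
    (σ.continuous_limPow e).measurable (σ.tendsto_approxPow e)

lemma abs_birkhoffAverage_sub_integral_le {f : Torus2 → ℝ} {C : ℝ≥0} (hf : LipschitzWith C f)
    (n : ℕ) (z : Torus2) :
    |birkhoffAverage ℝ σ.map^[σ.q n] f (σ.ratio n) z - ∫ w, f w| ≤ C * (3 / ((n : ℝ) + 1)) := by
  set g : Torus1 → ℝ := fun t => f ((σ.stage (n + 1)).flow t z)
  set mean : ℝ := (σ.ratio n : ℝ)⁻¹ *
    ∑ i ∈ Finset.range (σ.ratio n), g ((i / σ.ratio n : ℝ) : Torus1)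
  have h_ratio : (0 : ℝ) < σ.ratio n := mod_cast σ.ratio_pos n
  have h_small : 1 / (100 * 2 ^ n : ℝ) ≤ 1 / ((n : ℝ) + 1) := by
    have : (n : ℝ) + 1 ≤ 2 ^ n := mod_cast Nat.lt_two_pow_self (n := n)
    exact one_div_le_one_div_of_le (by positivity) (by linarith)
  have hg : LipschitzWith (C * σ.K (n + 1)) g := .of_dist_le_mul fun t u => by
    rw [NNReal.coe_mul, mul_assoc]
    exact (hf.dist_le_mul _ _).trans (mul_le_mul_of_nonneg_left
      ((σ.stage (n + 1)).dist_flow_le t u z) C.coe_nonneg)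
  have h_orbit : |birkhoffAverage ℝ σ.map^[σ.q n] f (σ.ratio n) z - mean|
      ≤ C * (1 / ((n : ℝ) + 1)) := by
    rw [birkhoffAverage, birkhoffSum, smul_eq_mul, ← mul_sub, ← Finset.sum_sub_distrib, abs_mul,
      abs_of_pos (inv_pos.2 h_ratio), inv_mul_le_iff₀ h_ratio, ← nsmul_eq_mul]
    refine (Finset.abs_sum_le_sum_abs _ _).trans ((Finset.sum_le_card_nsmul _ _ _ fun i hi =>
      (hf.dist_le_mul _ _).trans (mul_le_mul_of_nonneg_left ?_ C.coe_nonneg)).trans_eq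
        (by rw [Finset.card_range]))
    rw [← Function.iterate_mul]
    exact (σ.dist_iterate_map_flow_le (Finset.mem_range.1 hi).le z).trans h_small
  have h_mean : |mean - ∫ t, g t| ≤ C * (1 / ((n : ℝ) + 1)) := by
    refine (abs_mean_sub_integral_le hg (σ.ratio_pos n)).trans ?_
    rw [NNReal.coe_mul, mul_div_assoc]
    refine mul_le_mul_of_nonneg_left (le_trans ?_ h_small) C.coe_nonneg
    have h_le : 100 * 2 ^ n * (σ.K (n + 1) : ℝ) ≤ σ.ratio n := mod_cast σ.mul_K_le_ratio n
    rw [NNReal.coe_natCast, div_le_div_iff₀ h_ratio (by positivity)]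
    linarith
  have h_flow : |(∫ t, g t) - ∫ w, f w| ≤ C * (1 / ((n : ℝ) + 1)) := by
    rw [mul_one_div]
    exact (σ.isSucc n).abs_integral_sub_le f C hf z
  have h_eq : C * (3 / ((n : ℝ) + 1)) = 3 * (C * (1 / ((n : ℝ) + 1))) := by ring
  rw [h_eq]
  linarith [abs_sub_le (birkhoffAverage ℝ σ.map^[σ.q n] f (σ.ratio n) z) mean (∫ w, f w),
    abs_sub_le mean (∫ t, g t) (∫ w, f w)]

theorem uniquelyErgodicWithVolume_map : UniquelyErgodicWithVolume σ.map := by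
  refine ⟨σ.measurePreserving_limPow 1, fun μ _ h_inv =>
    measure_eq_of_forall_lipschitzWith_integral_eq fun f C hf => ?_⟩
  have h_le (n : ℕ) : |(∫ z, f z ∂μ) - ∫ w, f w| ≤ C * (3 / ((n : ℝ) + 1)) :=
    abs_integral_sub_le_of_abs_birkhoffAverage_sub_le (h_inv.iterate _)
      (hf.continuous.integrable_of_hasCompactSupport (.of_compactSpace f)) (σ.ratio_pos n).ne'
      (σ.abs_birkhoffAverage_sub_integral_le hf n)
  have h_lim : Tendsto (fun n : ℕ => C * (3 / ((n : ℝ) + 1))) atTop (𝓝 0) := by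
    simpa [div_eq_mul_inv, mul_assoc] using
      (tendsto_one_div_add_atTop_nhds_zero_nat (𝕜 := ℝ)).const_mul (C * 3 : ℝ)
  exact sub_eq_zero.1 (abs_eq_zero.1 ((ge_of_tendsto' h_lim h_le).antisymm (abs_nonneg _)))

end Tower

/-! ### The factor map onto the circle -/

lemma isoToIrrationalRotation_of_injOn {T : Torus2 → Torus2} {ψ : Torus2 → Torus1} {α : ℝ}
    {A : Set Torus2} (hα : Irrational α) (hψ : Continuous ψ)
    (hψ_mp : MeasurePreserving ψ volume volume) (h_eq : ∀ z, ψ (T z) = ψ z + (α : Torus1))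
    (hA : MeasurableSet A) (hA_null : volume Aᶜ = 0) (hTA : MapsTo T A A) (hψA : InjOn ψ A) :
    IsoToIrrationalRotation T := by
  have h_emb : MeasurableEmbedding (A.domRestrict ψ) := hψ.continuousOn.measurableEmbedding hA hψA
  have hB : MeasurableSet (ψ '' A) := by
    rw [← range_domRestrict]
    exact h_emb.measurableSet_range
  have hB_null : volume (ψ '' A)ᶜ = 0 := by
    rw [← hψ_mp.measure_preimage hB.compl.nullMeasurableSet]
    exact measure_mono_null (fun _ hz hzA => hz (mem_image_of_mem _ hzA)) hA_null
  obtain ⟨φ, hφ, hφψ⟩ := h_emb.exists_measurable_extend measurable_subtype_coe fun _ => ⟨0⟩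
  have h_left : ∀ z ∈ A, φ (ψ z) = z := fun z hz => congrFun hφψ ⟨z, hz⟩
  refine ⟨α, hα, A, ψ '' A, ψ, φ, hA, hB, hA_null, hB_null, hTA, ?_, hψ.measurable, hφ,
    mapsTo_image _ _, ?_, h_left, ?_, hψ_mp.map_eq, fun z _ => h_eq z⟩
  · rintro _ ⟨z, hz, rfl⟩
    exact ⟨T z, hTA hz, h_eq z⟩
  · rintro _ ⟨z, hz, rfl⟩
    rwa [h_left z hz]
  · rintro _ ⟨z, hz, rfl⟩
    rw [h_left z hz]

namespace Tower

variable (σ : Tower)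

/-- The factor map of the `n`-th circle action: the first coordinate of the inverse conjugacy. -/
def approxFactor (n : ℕ) (z : Torus2) : Torus1 := ((σ.stage n).toHomeomorph.symm z).1

lemma continuous_approxFactor (n : ℕ) : Continuous (σ.approxFactor n) :=
  continuous_fst.comp (σ.stage n).toHomeomorph.symm.continuous

lemma measurePreserving_approxFactor (n : ℕ) :
    MeasurePreserving (σ.approxFactor n) volume volume :=
  (measurePreserving_fst (μ := (volume : Measure Torus1)) (ν := (volume : Measure Torus1))).comp
    (σ.stage n).measurePreserving_symm

lemma dist_approxFactor_succ_le (z : Torus2) (n : ℕ) :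
    dist (σ.approxFactor n z) (σ.approxFactor (n + 1) z) ≤ 1 / (2 ^ n * σ.q n) := by
  rw [dist_comm]
  exact (σ.isSucc n).dist_symm_fst_le z

lemma one_div_pow_mul_q_succ_le (n : ℕ) :
    1 / (2 ^ (n + 1) * (σ.q (n + 1) : ℝ)) ≤ 1 / (2 ^ n * σ.q n) / 2 := by
  have hq := σ.q_pos n
  have h_le : (σ.q n : ℝ) ≤ σ.q (n + 1) :=
    mod_cast Nat.le_of_dvd (σ.stage (n + 1)).q_pos (σ.isSucc n).dvd
  rw [div_div, pow_succ, mul_right_comm]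
  gcongr

/-- The factor map of the limit diffeomorphism onto the circle. -/
noncomputable def factor (z : Torus2) : Torus1 := limUnder atTop fun n => σ.approxFactor n z

lemma tendsto_approxFactor (z : Torus2) :
    Tendsto (fun n => σ.approxFactor n z) atTop (𝓝 (σ.factor z)) :=
  CauchySeq.tendsto_limUnder
    (cauchySeq_of_halving σ.one_div_pow_mul_q_succ_le (σ.dist_approxFactor_succ_le z))

lemma dist_approxFactor_le (z : Torus2) (n : ℕ) :
    dist (σ.approxFactor n z) (σ.factor z) ≤ 2 / σ.q n := by
  have hq := σ.q_pos n
  refine (dist_le_of_tendsto_of_halving σ.one_div_pow_mul_q_succ_le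
    (σ.dist_approxFactor_succ_le z) (σ.tendsto_approxFactor z) n).trans ?_
  rw [mul_one_div]
  exact div_le_div_of_nonneg_left zero_le_two hq
    (le_mul_of_one_le_left hq.le (one_le_pow₀ one_le_two))

lemma tendsto_two_div_q : Tendsto (fun n => 2 / (σ.q n : ℝ)) atTop (𝓝 0) := by
  rw [← tendsto_add_atTop_iff_nat 1]
  refine squeeze_zero (fun n => by positivity) (fun n => ?_)
    (by simpa using σ.tendsto_err.const_mul 2)
  rw [div_eq_mul_one_div]
  exact mul_le_mul_of_nonneg_left (σ.one_div_q_succ_le_err n) zero_le_two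

lemma tendstoUniformly_approxFactor : TendstoUniformly σ.approxFactor σ.factor atTop := by
  rw [Metric.tendstoUniformly_iff]
  intro ε hε
  filter_upwards [σ.tendsto_two_div_q.eventually (gt_mem_nhds hε)] with n hn z
  rw [dist_comm]
  exact (σ.dist_approxFactor_le z n).trans_lt hn

lemma continuous_factor : Continuous σ.factor :=
  σ.tendstoUniformly_approxFactor.continuous (.of_forall σ.continuous_approxFactor)

lemma measurePreserving_factor : MeasurePreserving σ.factor volume volume :=
  measurePreserving_of_tendsto σ.measurePreserving_approxFactor σ.continuous_factor.measurable
    σ.tendsto_approxFactor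

lemma factor_map (z : Torus2) : σ.factor (σ.map z) = σ.factor z + (σ.rotLim : Torus1) := by
  have h_rot : Tendsto (fun n => ((σ.rotNum n : ℝ) : Torus1)) atTop (𝓝 (σ.rotLim : Torus1)) :=
    ((AddCircle.continuous_mk' 1).tendsto _).comp σ.tendsto_rotNum
  refine tendsto_nhds_unique (σ.tendstoUniformly_approxFactor.tendsto_comp
    σ.continuous_factor.continuousAt (σ.tendsto_approxPow 1 z))
    (((σ.tendsto_approxFactor z).add h_rot).congr fun n => ?_)
  rw [approxFactor, approxFactor, approxPow, Conjugacy.symm_flow_fst, Int.cast_one, one_mul]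

lemma dist_approxFactor_le_of_factor_eq {z w : Torus2} (h : σ.factor z = σ.factor w) (n : ℕ) :
    dist (σ.approxFactor n z) (σ.approxFactor n w) ≤ 4 / σ.q n := by
  have hz := σ.dist_approxFactor_le z n
  rw [h] at hz
  calc _ ≤ 2 / (σ.q n : ℝ) + 2 / σ.q n :=
        (dist_triangle_right _ _ _).trans (add_le_add hz (σ.dist_approxFactor_le w n))
    _ = 4 / σ.q n := by ring

lemma exists_injOn_factor :
    ∃ A : Set Torus2, MeasurableSet A ∧ volume Aᶜ = 0 ∧ InjOn σ.factor A := by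
  choose S hS hS_compl hS_sep using fun n => (σ.isSucc n).exists_generating
  have h_borelCantelli : ∀ᵐ z, ∀ᶠ n in atTop, z ∉ (S n)ᶜ := by
    refine ae_eventually_notMem (ne_top_of_le_ne_top ?_ (ENNReal.tsum_le_tsum hS_compl))
    simp [ENNReal.tsum_geometric]
  refine ⟨liminf S atTop, .measurableSet_liminf hS, ?_, fun z hz w hw hzw => ?_⟩
  · exact mem_ae_iff.1 (h_borelCantelli.mono fun z hz =>
      mem_liminf_iff_eventually_mem.2 (hz.mono fun n => not_notMem.1))
  · rw [mem_liminf_iff_eventually_mem] at hz hw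
    refine dist_le_zero.1 (ge_of_tendsto (tendsto_one_div_add_atTop_nhds_zero_nat (𝕜 := ℝ)) ?_)
    filter_upwards [hz, hw] with n hn hn'
    exact hS_sep n z hn w hn' (σ.dist_approxFactor_le_of_factor_eq hzw (n + 1))

theorem isoToIrrationalRotation_map : IsoToIrrationalRotation σ.map := by
  obtain ⟨A, hA, hA_null, hA_inj⟩ := σ.exists_injOn_factor
  have h_sub : (⋂ e : ℤ, σ.limPow e ⁻¹' A) ⊆ A := fun z hz => by
    simpa only [mem_preimage, limPow_zero] using mem_iInter.1 hz 0
  refine isoToIrrationalRotation_of_injOn σ.irrational_rotLim σ.continuous_factor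
    σ.measurePreserving_factor σ.factor_map
    (.iInter fun e => (σ.continuous_limPow e).measurable hA) ?_ (fun z hz => ?_)
    (hA_inj.mono h_sub)
  · rw [compl_iInter]
    refine measure_iUnion_null fun e => ?_
    rw [← preimage_compl,
      (σ.measurePreserving_limPow e).measure_preimage hA.compl.nullMeasurableSet, hA_null]
  · refine mem_iInter.2 fun e => ?_
    rw [mem_preimage, map, limPow_limPow]
    exact mem_iInter.1 hz (e + 1)

end Tower

/-! ### Slow entropy of the limit -/

section Bowen

variable {X : Type*} [PseudoMetricSpace X] {T : X → X} {n : ℕ} {ε : ℝ}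

lemma bowenDist_lt_iff (hε : 0 < ε) {x y : X} :
    bowenDist T n x y < ε ↔ ∀ i < n, dist (T^[i] x) (T^[i] y) < ε := by
  lift ε to ℝ≥0 using hε.le
  rw [bowenDist, NNReal.coe_lt_coe, Finset.sup_lt_iff (mod_cast hε)]
  simp only [Finset.mem_range, ← NNReal.coe_lt_coe, coe_nndist]

lemma bowenCoverNum_le_card {F : Finset X} (hF : ∀ y, ∃ x ∈ F, bowenDist T n x y < ε) :
    bowenCoverNum T n ε ≤ F.card :=
  Nat.sInf_le ⟨F, rfl, hF⟩

lemma exists_card_eq_bowenCoverNum [CompactSpace X] (hT : Continuous T) (hε : 0 < ε) :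
    ∃ F : Finset X, F.card = bowenCoverNum T n ε ∧ ∀ y, ∃ x ∈ F, bowenDist T n x y < ε := by
  have h_nhds (x : X) : {y | bowenDist T n x y < ε} ∈ 𝓝 x := by
    simp only [bowenDist_lt_iff hε]
    refine (eventually_all_finite (finite_lt_nat n)).2 fun i _ => ?_
    refine (continuous_const.dist (hT.iterate i)).tendsto x |>.eventually_lt_const ?_
    rwa [dist_self]
  obtain ⟨F, -, hF⟩ := isCompact_univ.elim_nhds_subcover _ fun x _ => h_nhds x
  refine Nat.sInf_mem (s := {N | ∃ F : Finset X, F.card = N ∧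
    ∀ y, ∃ x ∈ F, bowenDist T n x y < ε}) ⟨F.card, F, rfl, fun y => ?_⟩
  simpa only [mem_iUnion, exists_prop, mem_ofPred_eq] using hF (mem_univ y)

lemma card_le_bowenCoverNum [CompactSpace X] (hT : Continuous T) (hε : 0 < ε) {F : Finset X}
    (hF : ∀ x ∈ F, ∀ y ∈ F, x ≠ y → ∃ i < n, 2 * ε ≤ dist (T^[i] x) (T^[i] y)) :
    F.card ≤ bowenCoverNum T n ε := by
  obtain ⟨E, hE_card, hE⟩ := exists_card_eq_bowenCoverNum (n := n) hT hε
  choose center h_mem h_lt using hE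
  rw [← hE_card]
  refine Finset.card_le_card_of_injOn center (fun x _ => h_mem x) fun x hx y hy hxy => ?_
  by_contra h_ne
  obtain ⟨i, hi, h_sep⟩ := hF x hx y hy h_ne
  have hx_lt := (bowenDist_lt_iff hε).1 (h_lt x) i hi
  have hy_lt := (bowenDist_lt_iff hε).1 (h_lt y) i hi
  rw [hxy] at hx_lt
  linarith [dist_triangle_left (T^[i] x) (T^[i] y) (T^[i] (center y))]

lemma topSlowEntFun_eq {a : ℕ → ℝ → ℝ} {E : ℝ} (hE : 0 < E)
    (h_lt : ∀ t, 0 < t → t < E →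
      0 < atTop.limsup fun m => (bowenCoverNum T m ε : ℝ≥0∞) / ENNReal.ofReal (a m t))
    (h_gt : ∀ t, E < t →
      atTop.limsup (fun m => (bowenCoverNum T m ε : ℝ≥0∞) / ENNReal.ofReal (a m t)) = 0) :
    topSlowEntFun T a ε = E := by
  have h_mid : 0 < E / 2 ∧ E / 2 < E := ⟨half_pos hE, half_lt_self hE⟩
  refine csSup_eq_of_forall_le_of_forall_lt_exists_gt
    ⟨E / 2, h_mid.1, h_lt _ h_mid.1 h_mid.2⟩ (fun t ht => ?_) fun w hw => ?_
  · by_contra h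
    exact ht.2.ne' (h_gt t (not_le.1 h))
  · obtain ⟨t, ht, htE⟩ := exists_between (max_lt hw hE)
    exact ⟨t, ⟨(le_max_right _ _).trans_lt ht, h_lt t ((le_max_right _ _).trans_lt ht) htE⟩,
      (le_max_left _ _).trans_lt ht⟩

end Bowen

namespace Tower

variable (σ : Tower)

lemma strictMono_q : StrictMono σ.q := strictMono_nat_of_lt_succ fun n => by
  have h_le := σ.mul_K_le_ratio n
  have hK := (σ.stage (n + 1)).one_le_K
  have h_pow := Nat.one_le_two_pow (n := n)
  rw [← q_mul_ratio]
  exact lt_mul_of_one_lt_right (σ.stage n).q_pos (by nlinarith)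

lemma continuous_map : Continuous σ.map := σ.continuous_limPow 1

lemma bowenCoverNum_map_le {n m : ℕ} {Q : ℕ} (hQ : (σ.stage (n + 1)).HasComplexity n Q)
    (hm : 4 * m * (n + 1) * σ.K (n + 2) ≤ σ.q (n + 2)) {ε : ℝ} (hε : 2 / ((n : ℝ) + 1) ≤ ε) :
    (bowenCoverNum σ.map m ε : ℝ) ≤ (Q : ℝ) ^ (1 + 1 / ((n : ℝ) + 1)) := by
  obtain ⟨F, hF_card, hF⟩ := hQ.exists_cover
  refine le_trans (mod_cast bowenCoverNum_le_card fun y => ?_) hF_card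
  obtain ⟨w, hw, h_flow⟩ := hF y
  refine ⟨w, hw, (bowenDist_lt_iff (lt_of_lt_of_le (by positivity) hε)).2 fun i hi => ?_⟩
  have h_approx (z : Torus2) :
      dist (σ.approxPow (n + 1) i z) (σ.map^[i] z) ≤ 1 / (2 * ((n : ℝ) + 1)) := by
    rw [iterate_map]
    refine (σ.dist_approxPow_le i z (n + 1)).trans ?_
    have hm' : 4 * (m : ℝ) * (n + 1) * σ.K (n + 2) ≤ σ.q (n + 2) := mod_cast hm
    rw [Int.cast_natCast, Nat.abs_cast, err, mul_div_assoc', mul_div_assoc',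
      div_le_div_iff₀ (σ.q_pos _) (by positivity)]
    calc 2 * ((i : ℝ) * σ.K (n + 2)) * (2 * (n + 1))
        ≤ 2 * ((m : ℝ) * σ.K (n + 2)) * (2 * (n + 1)) := by gcongr
      _ ≤ 1 * σ.q (n + 2) := by linarith
  have h_sum : 1 / (2 * ((n : ℝ) + 1)) + 1 / ((n : ℝ) + 1) + 1 / (2 * ((n : ℝ) + 1))
      = 2 / ((n : ℝ) + 1) := by
    field_simp
    norm_num
  have h_w := h_approx w
  rw [dist_comm] at h_w
  have h_wy : dist (σ.approxPow (n + 1) i w) (σ.approxPow (n + 1) i y) < 1 / ((n : ℝ) + 1) :=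
    h_flow _
  calc dist (σ.map^[i] w) (σ.map^[i] y)
      ≤ dist (σ.map^[i] w) (σ.approxPow (n + 1) i w) +
        dist (σ.approxPow (n + 1) i w) (σ.approxPow (n + 1) i y) +
        dist (σ.approxPow (n + 1) i y) (σ.map^[i] y) := dist_triangle4 _ _ _ _
    _ < ε := by linarith [h_approx y]

lemma exists_dist_iterate_map_flow_le (n : ℕ) (t : Torus1) :
    ∃ i < σ.q (n + 1), ∀ z,
      dist (σ.map^[i] z) ((σ.stage (n + 1)).flow t z) ≤ 1 / 50 := by
  have h_ratio : (0 : ℝ) < σ.ratio n := mod_cast σ.ratio_pos n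
  have h_large : 100 * (σ.K (n + 1) : ℝ) ≤ σ.ratio n := by
    exact_mod_cast (Nat.mul_le_mul_right _ (Nat.le_mul_of_pos_right 100 (by positivity))).trans
      (σ.mul_K_le_ratio n)
  obtain ⟨i, hi, h_time⟩ := exists_dist_coe_div_le (σ.ratio_pos n) t
  refine ⟨σ.q n * i, ?_, fun z => ?_⟩
  · rw [← σ.q_mul_ratio n]
    exact Nat.mul_lt_mul_of_pos_left hi (σ.stage n).q_pos
  have h_pow : (1 : ℝ) ≤ 2 ^ n := one_le_pow₀ one_le_two
  have h_grid : 1 / (100 * 2 ^ n : ℝ) ≤ 1 / 100 :=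
    one_div_le_one_div_of_le (by norm_num) (by linarith)
  have h_flow :
      (σ.K (n + 1) : ℝ) * dist ((i / σ.ratio n : ℝ) : Torus1) t ≤ 1 / 100 := by
    refine (mul_le_mul_of_nonneg_left h_time (Nat.cast_nonneg _)).trans ?_
    rw [mul_one_div, div_le_div_iff₀ h_ratio (by norm_num)]
    linarith
  linarith [σ.dist_iterate_map_flow_le hi.le z, (σ.stage (n + 1)).dist_flow_le
    ((i / σ.ratio n : ℝ) : Torus1) t z, dist_triangle (σ.map^[σ.q n * i] z)
    ((σ.stage (n + 1)).flow ((i / σ.ratio n : ℝ) : Torus1) z) ((σ.stage (n + 1)).flow t z)]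

lemma rpow_le_bowenCoverNum_map {n Q : ℕ} (hQ : (σ.stage (n + 1)).HasComplexity n Q) {ε : ℝ}
    (hε : 0 < ε) (hε' : ε ≤ 1 / 16) :
    (Q : ℝ) ^ (1 - 1 / ((n : ℝ) + 1)) ≤ bowenCoverNum σ.map (σ.q (n + 1)) ε := by
  obtain ⟨F, hF_card, hF⟩ := hQ.exists_separated
  refine hF_card.trans (mod_cast card_le_bowenCoverNum σ.continuous_map hε
    fun z hz w hw h_ne => ?_)
  obtain ⟨t, ht⟩ := hF z hz w hw h_ne
  obtain ⟨i, hi, h_near⟩ := σ.exists_dist_iterate_map_flow_le n t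
  have hz_near := h_near z
  rw [dist_comm] at hz_near
  refine ⟨i, hi, ?_⟩
  linarith [h_near w, dist_triangle4 ((σ.stage (n + 1)).flow t z) (σ.map^[i] z) (σ.map^[i] w)
    ((σ.stage (n + 1)).flow t w)]

lemma exists_stage_of_q_le (n₀ : ℕ) {m : ℕ} (hm : σ.q (n₀ + 1) ≤ m) :
    ∃ n ≥ n₀, 4 * m * (n + 1) * σ.K (n + 2) ≤ σ.q (n + 2) ∧
      σ.q (n + 1) ≤ 4 * m * (n + 1) * σ.K (n + 1) := by
  classical
  have h_ex : ∃ n, n₀ ≤ n ∧ 4 * m * (n + 1) * σ.K (n + 2) ≤ σ.q (n + 2) := by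
    refine ⟨max n₀ m, le_max_left _ _, ?_⟩
    set n := max n₀ m
    have hm_le : m ≤ σ.q (n + 1) :=
      (le_max_right n₀ m).trans (n.le_succ.trans (σ.strictMono_q.le_apply))
    have h_pow : n + 1 ≤ 2 ^ (n + 1) := Nat.lt_two_pow_self.le
    calc 4 * m * (n + 1) * σ.K (n + 2) = 4 * (n + 1) * σ.K (n + 2) * m := by ring
      _ ≤ 100 * 2 ^ (n + 1) * σ.K (n + 2) * σ.q (n + 1) := by gcongr; all_goals omega
      _ ≤ _ := (σ.isSucc (n + 1)).mul_q_le
  obtain ⟨h_ge, h_le⟩ := Nat.find_spec h_ex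
  refine ⟨Nat.find h_ex, h_ge, h_le, ?_⟩
  rcases h_ge.eq_or_lt with h_eq | h_lt
  · rw [← h_eq]
    refine hm.trans ?_
    rw [mul_assoc, mul_assoc, mul_left_comm]
    exact Nat.le_mul_of_pos_right m (by
      have := (σ.stage (n₀ + 1)).one_le_K
      positivity)
  · obtain ⟨k, hk⟩ := Nat.exists_eq_succ_of_ne_zero (h_lt.trans_le' n₀.zero_le).ne'
    have h_min := Nat.find_min h_ex (m := k) (by omega)
    rw [hk]
    have : σ.q (k + 2) < 4 * m * (k + 1) * σ.K (k + 2) := by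
      by_contra h
      exact h_min ⟨by omega, not_lt.1 h⟩
    refine this.le.trans ?_
    gcongr
    exact k.le_succ

variable {Q : ℕ → ℕ} {a : ℕ → ℝ → ℝ}

lemma limsup_bowenCoverNum_map_pos (hQ : ∀ n, (σ.stage (n + 1)).HasComplexity n (Q n))
    (ha : ∀ n, (σ.stage (n + 1)).IsAdapted n (Q n) a) {ε : ℝ} (hε : 0 < ε) (hε' : ε ≤ 1 / 16)
    {t : ℝ} (ht : t < 1) :
    0 < atTop.limsup fun m =>
      (bowenCoverNum σ.map m ε : ℝ≥0∞) / ENNReal.ofReal (a m t) := by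
  have h_tendsto : Tendsto (fun n => σ.q (n + 1)) atTop atTop :=
    (tendsto_add_atTop_iff_nat 1).2 σ.strictMono_q.tendsto_atTop
  have h_exp : ∀ᶠ n : ℕ in atTop, 1 / ((n : ℝ) + 1) < 1 - t :=
    (tendsto_one_div_add_atTop_nhds_zero_nat (𝕜 := ℝ)).eventually_lt_const (sub_pos.2 ht)
  refine one_pos.trans_le (le_limsup_of_frequently_le
    (h_tendsto.frequently (Eventually.frequently ?_)))
  filter_upwards [h_exp] with n hn
  have h_one_le : (1 : ℝ) ≤ Q n := mod_cast (Nat.le_add_left 1 (n + 1)).trans (hQ n).le_Q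
  have h_pos : 0 < (Q n : ℝ) ^ t := Real.rpow_pos_of_pos (by linarith) t
  rw [(ha n).apply_q, ENNReal.le_div_iff_mul_le (.inl (by simpa using h_pos)) (.inl (by simp)),
    one_mul, ← ENNReal.ofReal_natCast]
  exact ENNReal.ofReal_le_ofReal ((Real.rpow_le_rpow_of_exponent_le h_one_le (by linarith)).trans
    (σ.rpow_le_bowenCoverNum_map (hQ n) hε hε'))

lemma bowenCoverNum_map_div_le {n m Q : ℕ} (hQ : (σ.stage (n + 1)).HasComplexity n Q)
    (ha : (σ.stage (n + 1)).IsAdapted n Q a) {t : ℝ} (ha_rpow : a m t = a m 1 ^ t)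
    (hm : 4 * m * (n + 1) * σ.K (n + 2) ≤ σ.q (n + 2))
    (hm' : σ.q (n + 1) ≤ 4 * m * (n + 1) * σ.K (n + 1)) {ε : ℝ} (hε : 2 / ((n : ℝ) + 1) ≤ ε)
    (ht : 0 < t) (htn : (1 + t) * (1 / ((n : ℝ) + 1)) ≤ (t - 1) / 2) :
    (bowenCoverNum σ.map m ε : ℝ≥0∞) / ENNReal.ofReal (a m t)
      ≤ ENNReal.ofReal ((Q : ℝ) ^ (-((t - 1) / 2))) := by
  set e := 1 / ((n : ℝ) + 1)
  have h_one_le : (1 : ℝ) ≤ Q := mod_cast (Nat.le_add_left 1 (n + 1)).trans hQ.le_Q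
  have h_pos : (0 : ℝ) < Q := by linarith
  have h_scale : (Q : ℝ) ^ ((1 - e) * t) ≤ a m t := by
    rw [ha_rpow, Real.rpow_mul h_pos.le]
    refine Real.rpow_le_rpow (by positivity) (ha.rpow_le m (hm'.trans ?_)) ht.le
    calc 4 * m * (n + 1) * σ.K (n + 1) = 4 * (n + 1) * σ.K (n + 1) * m := by ring
      _ ≤ 100 * (n + 1) * σ.K (n + 1) * m := by gcongr; norm_num
  have h_scale_pos : 0 < (Q : ℝ) ^ ((1 - e) * t) := Real.rpow_pos_of_pos h_pos _
  rw [← ENNReal.ofReal_natCast, ← ENNReal.ofReal_div_of_pos (h_scale_pos.trans_le h_scale)]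
  refine ENNReal.ofReal_le_ofReal ?_
  calc (bowenCoverNum σ.map m ε : ℝ) / a m t ≤ (Q : ℝ) ^ (1 + e) / (Q : ℝ) ^ ((1 - e) * t) := by
        gcongr
        exact σ.bowenCoverNum_map_le hQ hm hε
    _ = (Q : ℝ) ^ ((1 + e) - (1 - e) * t) := by rw [← Real.rpow_sub h_pos]
    _ ≤ (Q : ℝ) ^ (-((t - 1) / 2)) := Real.rpow_le_rpow_of_exponent_le h_one_le (by linarith)

lemma limsup_bowenCoverNum_map_eq_zero (hQ : ∀ n, (σ.stage (n + 1)).HasComplexity n (Q n))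
    (ha : ∀ n, (σ.stage (n + 1)).IsAdapted n (Q n) a) {t : ℝ} (ha_rpow : ∀ m, a m t = a m 1 ^ t)
    {ε : ℝ} (hε : 0 < ε) (ht : 1 < t) :
    atTop.limsup (fun m => (bowenCoverNum σ.map m ε : ℝ≥0∞) / ENNReal.ofReal (a m t)) = 0 := by
  have h_lim : Tendsto (fun n₀ : ℕ => ENNReal.ofReal (((n₀ : ℝ) + 2) ^ (-((t - 1) / 2)))) atTop
      (𝓝 0) := by
    rw [← ENNReal.ofReal_zero]
    exact ENNReal.tendsto_ofReal ((tendsto_rpow_neg_atTop (by linarith)).comp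
      (tendsto_atTop_add_const_right _ _ tendsto_natCast_atTop_atTop))
  have h_small (c : ℝ) {δ : ℝ} (hδ : 0 < δ) :
      ∀ᶠ n₀ : ℕ in atTop, ∀ n ≥ n₀, c * (1 / ((n : ℝ) + 1)) ≤ δ := by
    have := (tendsto_one_div_add_atTop_nhds_zero_nat (𝕜 := ℝ)).const_mul c
    rw [mul_zero] at this
    exact eventually_forall_ge_atTop.2 (this.eventually_le_const hδ)
  refine nonpos_iff_eq_zero.1 (ge_of_tendsto h_lim ?_)
  filter_upwards [h_small 2 hε, h_small (1 + t) (show 0 < (t - 1) / 2 by linarith)]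
    with n₀ h_radius h_exp
  refine limsup_le_of_le (by isBoundedDefault) ?_
  filter_upwards [eventually_ge_atTop (σ.q (n₀ + 1))] with m hm
  obtain ⟨n, hn, hm_le, hm_ge⟩ := σ.exists_stage_of_q_le n₀ hm
  refine (σ.bowenCoverNum_map_div_le (hQ n) (ha n) (ha_rpow m) hm_le hm_ge
    (by simpa only [mul_one_div] using h_radius n hn) (by linarith) (h_exp n hn)).trans
      (ENNReal.ofReal_le_ofReal (Real.rpow_le_rpow_of_nonpos (by positivity) ?_ (by linarith)))
  exact_mod_cast (Nat.add_le_add_right hn 2).trans (hQ n).le_Q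

theorem hasUpperTopSlowEntropy_map (hQ : ∀ n, (σ.stage (n + 1)).HasComplexity n (Q n))
    (ha : ∀ n, (σ.stage (n + 1)).IsAdapted n (Q n) a) (ha_rpow : ∀ m t, a m t = a m 1 ^ t) :
    HasUpperTopSlowEntropy σ.map a 1 := by
  have h_nhds : Ioc (0 : ℝ) (1 / 16) ∈ 𝓝[>] (0 : ℝ) := Ioc_mem_nhdsGT (by norm_num)
  refine tendsto_const_nhds.congr' ?_
  filter_upwards [h_nhds] with ε hε
  exact (topSlowEntFun_eq one_pos
    (fun t _ ht => σ.limsup_bowenCoverNum_map_pos hQ ha hε.1 hε.2 ht)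
    fun t ht => σ.limsup_bowenCoverNum_map_eq_zero hQ ha (fun m => ha_rpow m t) hε.1 ht).symm

end Tower

/-! ### Shears -/

lemma dist_periodic_lift_le {f : ℝ → ℝ} (hf : Function.Periodic (fun x => (f x : Torus1)) 1)
    {C : ℝ} (hC : ∀ x x', |f x - f x'| ≤ C * |x - x'|) (x x' : Torus1) :
    dist (hf.lift x) (hf.lift x') ≤ C * dist x x' := by
  obtain ⟨u, rfl⟩ := coe_surjective x'
  obtain ⟨v, rfl, hv⟩ := exists_coe_eq_and_abs_sub_eq_dist x u
  rw [← hv]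
  exact (dist_coe_le _ _).trans (hC v u)

lemma continuous_periodic_lift_coe {f : ℝ → ℝ}
    (hf : Function.Periodic (fun x => (f x : Torus1)) 1) (hc : Continuous f) :
    Continuous hf.lift :=
  continuous_periodic_lift hf ((AddCircle.continuous_mk' 1).comp hc)

lemma HasBoundedDerivs.const_smul {E F : Type*} [NormedAddCommGroup E] [NormedSpace ℝ E]
    [NormedAddCommGroup F] [NormedSpace ℝ F] {f : E → F} (hf : HasBoundedDerivs f) (c : ℝ) :
    HasBoundedDerivs fun x => c • f x :=
  (HasBoundedDerivs.clm (c • ContinuousLinearMap.id ℝ F)).comp hf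

lemma HasBoundedDerivs.inr_comp_fst {f : ℝ → ℝ} (hf : HasBoundedDerivs f) :
    HasBoundedDerivs fun p : ℝ × ℝ => ((0 : ℝ), f p.1) :=
  (HasBoundedDerivs.clm (.inr ℝ ℝ ℝ)).comp (hf.comp (.clm (.fst ℝ ℝ ℝ)))

lemma HasBoundedDerivs.inl_comp_snd {f : ℝ → ℝ} (hf : HasBoundedDerivs f) :
    HasBoundedDerivs fun p : ℝ × ℝ => (f p.2, (0 : ℝ)) :=
  (HasBoundedDerivs.clm (.inl ℝ ℝ ℝ)).comp (hf.comp (.clm (.snd ℝ ℝ ℝ)))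

lemma measurePreserving_shearSnd {g : Torus1 → Torus1} (hg : Continuous g) :
    MeasurePreserving (fun z : Torus2 => (z.1, z.2 + g z.1)) volume volume :=
  MeasurePreserving.skew_product (μa := (volume : Measure Torus1)) (μc := volume) (μd := volume)
    (f := fun x => x) (g := fun x y => y + g x) (MeasurePreserving.id _)
    (continuous_snd.add (hg.comp continuous_fst)).measurable
    (Eventually.of_forall fun x => (measurePreserving_add_right volume (g x)).map_eq)

lemma measurePreserving_shearFst {g : Torus1 → Torus1} (hg : Continuous g) :
    MeasurePreserving (fun z : Torus2 => (z.1 + g z.2, z.2)) volume volume :=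
  have h_swap : MeasurePreserving (Prod.swap : Torus2 → Torus2) volume volume :=
    Measure.measurePreserving_swap
  h_swap.comp ((measurePreserving_shearSnd hg).comp h_swap)

namespace Conjugacy

/-- The vertical shear `(x, y) ↦ (x, y + a x)`, for a function `a` of the line that induces a map
of the circle. -/
noncomputable def shearSnd (a : ℝ → ℝ) (ha : Function.Periodic (fun x => (a x : Torus1)) 1)
    (hbd : HasBoundedDerivs a) : Conjugacy where
  toHomeomorph :=
    have h_lift := continuous_periodic_lift_coe ha hbd.contDiff.continuous
    { toFun := fun z => (z.1, z.2 + ha.lift z.1)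
      invFun := fun z => (z.1, z.2 - ha.lift z.1)
      left_inv := fun z => by simp
      right_inv := fun z => by simp }
  lift p := p + (0, a p.1)
  liftInv p := p + (-1 : ℝ) • (0, a p.1)
  isLiftOf p := by ext <;> simp [torusProj]
  isLiftOf_inv p := by ext <;> simp [torusProj, sub_eq_add_neg]
  hasBoundedDerivs := HasBoundedDerivs.id.add hbd.inr_comp_fst
  hasBoundedDerivs_inv := HasBoundedDerivs.id.add (hbd.inr_comp_fst.const_smul (-1))
  measurePreserving :=
    measurePreserving_shearSnd (continuous_periodic_lift_coe ha hbd.contDiff.continuous)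
  lift_add_one x y := by ext <;> simp; ring

/-- The horizontal shear `(x, y) ↦ (x + c y, y)`, for a periodic function `c`. -/
noncomputable def shearFst (c : ℝ → ℝ) (hc : Function.Periodic c 1) (hbd : HasBoundedDerivs c) :
    Conjugacy where
  toHomeomorph :=
    have h_lift :=
      continuous_periodic_lift_coe (hc.comp ((↑) : ℝ → Torus1)) hbd.contDiff.continuous
    { toFun := fun z => (z.1 + (hc.comp ((↑) : ℝ → Torus1)).lift z.2, z.2)
      invFun := fun z => (z.1 - (hc.comp ((↑) : ℝ → Torus1)).lift z.2, z.2)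
      left_inv := fun z => by simp
      right_inv := fun z => by simp }
  lift p := p + (c p.2, 0)
  liftInv p := p + (-1 : ℝ) • (c p.2, 0)
  isLiftOf p := by ext <;> simp [torusProj]
  isLiftOf_inv p := by ext <;> simp [torusProj, sub_eq_add_neg]
  hasBoundedDerivs := HasBoundedDerivs.id.add hbd.inl_comp_snd
  hasBoundedDerivs_inv := HasBoundedDerivs.id.add (hbd.inl_comp_snd.const_smul (-1))
  measurePreserving := measurePreserving_shearFst
    (continuous_periodic_lift_coe (hc.comp ((↑) : ℝ → Torus1)) hbd.contDiff.continuous)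
  lift_add_one x y := by ext <;> simp [hc y]

end Conjugacy

/-- The data of the two shears that lead to a new stage over the period `q`: the profile `β` of the
horizontal shear, and the relative size `1 / L` of the oscillation of the vertical one. -/
structure ShearData where
  β : ℝ → ℝ
  isSmoothProfile : IsSmoothProfile β
  B : ℕ
  abs_sub_le : ∀ y y', |β y - β y'| ≤ B * |y - y'|
  q : ℕ
  L : ℕ
  q_pos : 0 < q
  mul_q_le_L : 100 * q ≤ L

namespace ShearData

variable (D : ShearData) (Q : ℕ)

/-- The profile of the vertical shear, up to the factor `Q`. Its oscillation has period `1 / q`. -/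
noncomputable def wave (x : ℝ) : ℝ := x + Real.sin (2 * Real.pi * D.q * x) / D.L

lemma wave_add_div (x : ℝ) (k : ℤ) : D.wave (x + k / D.q) = D.wave x + k / D.q := by
  have h_cancel : (D.q : ℝ) * (k / D.q) = k := mul_div_cancel₀ _ (mod_cast D.q_pos.ne')
  have h_arg : 2 * Real.pi * D.q * (x + k / D.q) = 2 * Real.pi * D.q * x + k * (2 * Real.pi) := by
    linear_combination 2 * Real.pi * h_cancel
  rw [wave, wave, h_arg, Real.sin_add_int_mul_two_pi]
  ring

lemma wave_add_one (x : ℝ) : D.wave (x + 1) = D.wave x + 1 := by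
  have hq : (D.q : ℝ) ≠ 0 := mod_cast D.q_pos.ne'
  simpa only [Int.cast_natCast, div_self hq] using D.wave_add_div x D.q

lemma abs_wave_sub_sub_le (x x' : ℝ) :
    |D.wave x - D.wave x' - (x - x')| ≤ 7 * D.q / D.L * |x - x'| := by
  have h_eq : D.wave x - D.wave x' - (x - x') =
      (Real.sin (2 * Real.pi * D.q * x) - Real.sin (2 * Real.pi * D.q * x')) / D.L := by
    rw [wave, wave]
    ring
  have h_arg : |2 * Real.pi * D.q * x - 2 * Real.pi * D.q * x'| ≤ 7 * D.q * |x - x'| := by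
    rw [← mul_sub, abs_mul, abs_of_nonneg (by positivity)]
    gcongr
    linarith [Real.pi_lt_d2]
  rw [h_eq, abs_div, Nat.abs_cast, div_mul_eq_mul_div]
  gcongr
  exact (Real.abs_sin_sub_sin_le _ _).trans h_arg

lemma abs_wave_sub_le (x x' : ℝ) : |D.wave x - D.wave x'| ≤ 2 * |x - x'| := by
  have hL : 100 * (D.q : ℝ) ≤ D.L := mod_cast D.mul_q_le_L
  have h_small : 7 * (D.q : ℝ) / D.L * |x - x'| ≤ 1 * |x - x'| := by
    gcongr
    exact div_le_one_of_le₀ (by linarith [(D.q.cast_nonneg : (0 : ℝ) ≤ D.q)]) (by positivity)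
  have h_triangle := abs_add_le (D.wave x - D.wave x' - (x - x')) (x - x')
  rw [sub_add_cancel] at h_triangle
  linarith [D.abs_wave_sub_sub_le x x']

lemma hasBoundedDerivs_wave : HasBoundedDerivs D.wave := by
  refine HasBoundedDerivs.id.add (.of_periodic ((Real.contDiff_sin.comp
    (contDiff_const.mul contDiff_id)).div_const _) fun x => ?_)
  rw [mul_add, mul_one, mul_comm (2 * Real.pi) (D.q : ℝ), Real.sin_add_nat_mul_two_pi]

lemma hasBoundedDerivs_β : HasBoundedDerivs D.β :=
  .of_periodic D.isSmoothProfile.contDiff D.isSmoothProfile.periodic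

lemma periodic_coe_mul_wave :
    Function.Periodic (fun x => ((Q * D.wave x : ℝ) : Torus1)) 1 := fun x => by
  simp only [wave_add_one, mul_add, mul_one, AddCircle.coe_add, coe_natCast, add_zero]

lemma periodic_inv_mul_β : Function.Periodic (fun y => (Q : ℝ)⁻¹ * D.β y) 1 := fun y => by
  simp only [D.isSmoothProfile.periodic y]

/-- The conjugacy `(x, y) ↦ (x + β y / Q, y) ↦ (x', y' + Q * wave x')`. The steep vertical shear
spreads short horizontal segments over the torus, while the horizontal shear places almost all of
each vertical circle near one graph. -/
noncomputable def conj : Conjugacy :=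
  (Conjugacy.shearSnd (fun x => Q * D.wave x) (D.periodic_coe_mul_wave Q)
    (D.hasBoundedDerivs_wave.const_smul Q)).comp
  (Conjugacy.shearFst (fun y => (Q : ℝ)⁻¹ * D.β y) (D.periodic_inv_mul_β Q)
    (D.hasBoundedDerivs_β.const_smul (Q : ℝ)⁻¹))

/-- The displacement of the vertical shear, as a map of the circle. -/
noncomputable def vertical : Torus1 → Torus1 := (D.periodic_coe_mul_wave Q).lift

/-- The displacement of the horizontal shear, as a map of the circle. -/
noncomputable def horizontal : Torus1 → Torus1 :=
  ((D.periodic_inv_mul_β Q).comp ((↑) : ℝ → Torus1)).lift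

lemma vertical_coe (x : ℝ) : D.vertical Q x = ((Q * D.wave x : ℝ) : Torus1) := rfl

lemma horizontal_coe (y : ℝ) : D.horizontal Q y = (((Q : ℝ)⁻¹ * D.β y : ℝ) : Torus1) := rfl

lemma continuous_vertical : Continuous (D.vertical Q) :=
  continuous_periodic_lift_coe _ (D.hasBoundedDerivs_wave.contDiff.continuous.const_smul (Q : ℝ))

lemma conj_apply (x y : Torus1) : (D.conj Q).toHomeomorph (x, y) =
    (x + D.horizontal Q y, y + D.vertical Q (x + D.horizontal Q y)) := rfl

lemma conj_symm_apply (x y : Torus1) : (D.conj Q).toHomeomorph.symm (x, y) =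
    (x - D.horizontal Q (y - D.vertical Q x), y - D.vertical Q x) := rfl

lemma dist_vertical_le (x x' : Torus1) :
    dist (D.vertical Q x) (D.vertical Q x') ≤ 2 * Q * dist x x' := by
  refine dist_periodic_lift_le _ (fun u v => ?_) x x'
  rw [← mul_sub, abs_mul, Nat.abs_cast, mul_assoc, mul_left_comm]
  gcongr
  exact D.abs_wave_sub_le u v

lemma dist_horizontal_le (y y' : Torus1) :
    dist (D.horizontal Q y) (D.horizontal Q y') ≤ D.B / Q * dist y y' := by
  refine dist_periodic_lift_le _ (fun u v => ?_) y y'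
  rw [← mul_sub, abs_mul, abs_inv, Nat.abs_cast, div_mul_eq_mul_div, inv_mul_eq_div]
  gcongr
  exact D.abs_sub_le u v

lemma norm_horizontal_le (y : Torus1) : ‖D.horizontal Q y‖ ≤ 1 / (2 * Q) := by
  obtain ⟨u, rfl⟩ := coe_surjective y
  refine (norm_coe_le _).trans ?_
  rw [abs_mul, abs_inv, Nat.abs_cast, inv_mul_eq_div, ← div_div]
  gcongr
  exact D.isSmoothProfile.abs_le u

variable {Q}

lemma vertical_add_div (hQ : D.q ∣ Q) (x : Torus1) (k : ℤ) :
    D.vertical Q (x + ((k / D.q : ℝ) : Torus1)) = D.vertical Q x := by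
  obtain ⟨u, rfl⟩ := coe_surjective x
  obtain ⟨d, rfl⟩ := hQ
  have hq : (D.q : ℝ) ≠ 0 := mod_cast D.q_pos.ne'
  have h_int : ((D.q * d : ℕ) : ℝ) * (D.wave u + k / D.q) =
      (D.q * d : ℕ) * D.wave u + ((d * k : ℤ) : ℝ) := by
    push_cast
    field_simp
  rw [← AddCircle.coe_add, vertical_coe, vertical_coe, wave_add_div, h_int, AddCircle.coe_add,
    coe_intCast, add_zero]

lemma conj_rotate (hQ : D.q ∣ Q) (k : ℤ) (z : Torus2) :
    (D.conj Q).toHomeomorph (rotate ((k / D.q : ℝ) : Torus1) z) =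
      rotate ((k / D.q : ℝ) : Torus1) ((D.conj Q).toHomeomorph z) := by
  obtain ⟨x, y⟩ := z
  rw [rotate, rotate, conj_apply, conj_apply, add_right_comm, D.vertical_add_div hQ]

lemma dist_conj_le (hQ : 0 < Q) (x x' y y' : Torus1) :
    dist ((D.conj Q).toHomeomorph (x, y)) ((D.conj Q).toHomeomorph (x', y'))
      ≤ 2 * Q * dist x x' + (2 * D.B + 1) * dist y y' := by
  have hQ' : (1 : ℝ) ≤ Q := mod_cast hQ
  have h_fst : dist (x + D.horizontal Q y) (x' + D.horizontal Q y') ≤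
      dist x x' + D.B / Q * dist y y' :=
    (dist_add_add_le _ _ _ _).trans (by gcongr; exact D.dist_horizontal_le Q y y')
  have h_vert := (D.dist_vertical_le Q (x + D.horizontal Q y) (x' + D.horizontal Q y')).trans
    (mul_le_mul_of_nonneg_left h_fst (by positivity))
  have h_expand : 2 * Q * (dist x x' + D.B / Q * dist y y') =
      2 * Q * dist x x' + 2 * D.B * dist y y' := by
    field_simp
  have h_B : (D.B : ℝ) / Q * dist y y' ≤ D.B * dist y y' := by
    gcongr
    exact div_le_self (by positivity) hQ'
  have h_nonneg : 0 ≤ (D.B : ℝ) * dist y y' := by positivity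
  rw [conj_apply, conj_apply, Prod.dist_eq]
  refine max_le (h_fst.trans ?_) ((dist_add_add_le _ _ _ _).trans ?_)
  · nlinarith [dist_nonneg (x := x) (y := x'), dist_nonneg (x := y) (y := y')]
  · linarith

/-- The conjugacy of the stage that follows the stage with conjugacy `H`. -/
noncomputable def next (H : Conjugacy) (Q : ℕ) : Conjugacy := H.comp (D.conj Q)

lemma next_apply (H : Conjugacy) (Q : ℕ) (z : Torus2) :
    (D.next H Q).toHomeomorph z = H.toHomeomorph ((D.conj Q).toHomeomorph z) := rfl

lemma next_symm_apply (H : Conjugacy) (Q : ℕ) (z : Torus2) :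
    (D.next H Q).toHomeomorph.symm z =
      (D.conj Q).toHomeomorph.symm (H.toHomeomorph.symm z) := rfl

end ShearData

/-! ### Geometry of the next stage -/

namespace Conjugacy

variable (H : Conjugacy)

lemma flow_apply (t : Torus1) (x y : Torus1) :
    H.flow t (H.toHomeomorph (x, y)) = H.toHomeomorph (x + t, y) := by
  rw [flow, Homeomorph.symm_apply_apply, rotate]

lemma exists_flow_cover {A B : ℝ} (hA : 0 ≤ A) (hB : 0 ≤ B)
    (hH : ∀ x x' y y', dist (H.toHomeomorph (x, y)) (H.toHomeomorph (x', y')) ≤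
      A * dist x x' + B * dist y y')
    {M N : ℕ} (hM : 0 < M) (hN : 0 < N) :
    ∃ F : Finset Torus2, F.card ≤ M * N ∧
      ∀ z, ∃ w ∈ F, ∀ t, dist (H.flow t w) (H.flow t z) ≤ A * (1 / M) + B * (1 / N) := by
  classical
  refine ⟨(Finset.range M ×ˢ Finset.range N).image fun ij =>
    H.toHomeomorph (((ij.1 / M : ℝ) : Torus1), ((ij.2 / N : ℝ) : Torus1)), ?_, fun z => ?_⟩
  · exact Finset.card_image_le.trans_eq (by simp)
  · obtain ⟨⟨x, y⟩, rfl⟩ := H.toHomeomorph.surjective z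
    obtain ⟨i, hi, hix⟩ := exists_dist_coe_div_le hM x
    obtain ⟨j, hj, hjy⟩ := exists_dist_coe_div_le hN y
    refine ⟨_, Finset.mem_image_of_mem _ (Finset.mk_mem_product (Finset.mem_range.2 hi)
      (Finset.mem_range.2 hj)), fun t => ?_⟩
    rw [flow_apply, flow_apply]
    refine (hH _ _ _ _).trans ?_
    rw [dist_add_right]
    gcongr

end Conjugacy

namespace ShearData

variable (D : ShearData) (H : Conjugacy) {Q : ℕ}

lemma next_flow_eq (hQ : D.q ∣ Q) (k : ℤ) (z : Torus2) :
    (D.next H Q).flow ((k / D.q : ℝ) : Torus1) z = H.flow ((k / D.q : ℝ) : Torus1) z := by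
  rw [Conjugacy.flow, Conjugacy.flow, next_symm_apply, next_apply, D.conj_rotate hQ,
    Homeomorph.apply_symm_apply]

lemma dist_next_symm_fst_le (z : Torus2) :
    dist ((D.next H Q).toHomeomorph.symm z).1 (H.toHomeomorph.symm z).1 ≤ 1 / (2 * Q) := by
  rw [next_symm_apply]
  obtain ⟨x, y⟩ := H.toHomeomorph.symm z
  rw [conj_symm_apply, dist_self_sub_left]
  exact D.norm_horizontal_le Q _

lemma dist_vertical_add_le (hQ : 0 < Q) (x : Torus1) (v : ℝ) :
    dist (D.vertical Q (x + (((Q : ℝ)⁻¹ * v : ℝ) : Torus1))) (D.vertical Q x + (v : Torus1)) ≤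
      7 * D.q / D.L * |v| := by
  obtain ⟨u, rfl⟩ := coe_surjective x
  have hQ' : (Q : ℝ) ≠ 0 := mod_cast hQ.ne'
  have h_wave := D.abs_wave_sub_sub_le (u + (Q : ℝ)⁻¹ * v) u
  rw [add_sub_cancel_left, abs_mul, abs_inv, Nat.abs_cast] at h_wave
  rw [← AddCircle.coe_add, vertical_coe, vertical_coe, ← AddCircle.coe_add]
  refine (dist_coe_le _ _).trans ?_
  have h_eq : Q * D.wave (u + (Q : ℝ)⁻¹ * v) - (Q * D.wave u + v) =
      Q * (D.wave (u + (Q : ℝ)⁻¹ * v) - D.wave u - (Q : ℝ)⁻¹ * v) := by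
    field_simp
    ring
  calc |Q * D.wave (u + (Q : ℝ)⁻¹ * v) - (Q * D.wave u + v)|
      ≤ Q * (7 * D.q / D.L * ((Q : ℝ)⁻¹ * |v|)) := by
        rw [h_eq, abs_mul, Nat.abs_cast]
        gcongr
    _ = 7 * D.q / D.L * |v| := by field_simp

section Generating

variable {Y : Set Torus1} {δ : ℝ}

lemma dist_conj_snd_le (hQ : 0 < Q)
    (hY : ∀ y : ℝ, (y : Torus1) ∈ Y → ‖((y + D.β y - 1 / 2 : ℝ) : Torus1)‖ ≤ δ)
    (x : Torus1) {y : Torus1} (hy : y ∈ Y) :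
    dist ((D.conj Q).toHomeomorph (x, y)).2 (D.vertical Q x + ((1 / 2 : ℝ) : Torus1)) ≤
      δ + 4 * D.q / D.L := by
  obtain ⟨v, rfl⟩ := coe_surjective y
  have h_vertical := D.dist_vertical_add_le hQ x (D.β v)
  have h_half : dist ((v : Torus1) + (D.vertical Q x + (D.β v : Torus1)))
      (D.vertical Q x + ((1 / 2 : ℝ) : Torus1)) ≤ δ := by
    rw [add_left_comm, dist_add_left, ← AddCircle.coe_add, dist_eq_norm, ← AddCircle.coe_sub]
    exact hY v hy
  have h_le : 7 * (D.q : ℝ) / D.L * |D.β v| ≤ 4 * D.q / D.L := by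
    rw [div_mul_eq_mul_div]
    refine div_le_div_of_nonneg_right ?_ (by positivity)
    nlinarith [D.isSmoothProfile.abs_le v, (D.q.cast_nonneg : (0 : ℝ) ≤ D.q)]
  rw [conj_apply, horizontal_coe]
  refine (dist_triangle _ ((v : Torus1) + (D.vertical Q x + (D.β v : Torus1))) _).trans ?_
  rw [dist_add_left]
  linarith

lemma dist_conj_le_of_mem (hQ : 0 < Q)
    (hY : ∀ y : ℝ, (y : Torus1) ∈ Y → ‖((y + D.β y - 1 / 2 : ℝ) : Torus1)‖ ≤ δ)
    (x x' : Torus1) {y y' : Torus1} (hy : y ∈ Y) (hy' : y' ∈ Y) :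
    dist ((D.conj Q).toHomeomorph (x, y)) ((D.conj Q).toHomeomorph (x', y')) ≤
      (2 * Q + 1) * dist x x' + 1 / Q + 2 * δ + 8 * D.q / D.L := by
  have h_snd := D.dist_conj_snd_le hQ hY x hy
  have h_snd' := D.dist_conj_snd_le hQ hY x' hy'
  have h_vertical := D.dist_vertical_le Q x x'
  have hδ : 0 ≤ δ := by
    obtain ⟨v, rfl⟩ := coe_surjective y
    exact (norm_nonneg _).trans (hY v hy)
  have h_inv : (0 : ℝ) ≤ 1 / Q := by positivity
  have h_ratio : 8 * (D.q : ℝ) / D.L = 4 * D.q / D.L + 4 * D.q / D.L := by ring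
  have h_ratio_nonneg : (0 : ℝ) ≤ 4 * D.q / D.L := by positivity
  have h_dist : 0 ≤ Q * dist x x' := by positivity
  rw [Prod.dist_eq]
  refine max_le ?_ ?_
  · have h_horizontal : dist (D.horizontal Q y) (D.horizontal Q y') ≤ 1 / Q := by
      rw [dist_eq_norm]
      refine (norm_sub_le _ _).trans ((add_le_add (D.norm_horizontal_le Q y)
        (D.norm_horizontal_le Q y')).trans_eq ?_)
      field_simp
      norm_num
    rw [conj_apply, conj_apply]
    linarith [dist_add_add_le x (D.horizontal Q y) x' (D.horizontal Q y')]
  · rw [dist_comm] at h_snd'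
    linarith [dist_triangle4 ((D.conj Q).toHomeomorph (x, y)).2
      (D.vertical Q x + ((1 / 2 : ℝ) : Torus1)) (D.vertical Q x' + ((1 / 2 : ℝ) : Torus1))
      ((D.conj Q).toHomeomorph (x', y')).2, dist_nonneg (x := x) (y := x'),
      dist_add_right (D.vertical Q x) (D.vertical Q x') ((1 / 2 : ℝ) : Torus1)]

lemma exists_generating_next (hQ : 0 < Q) {K : ℝ≥0} (hH : LipschitzWith K H.toHomeomorph)
    (hY_meas : MeasurableSet Y) {η : ℝ≥0∞} (hY_vol : volume Yᶜ ≤ η)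
    (hY : ∀ y : ℝ, (y : Torus1) ∈ Y → ‖((y + D.β y - 1 / 2 : ℝ) : Torus1)‖ ≤ δ) :
    ∃ S : Set Torus2, MeasurableSet S ∧ volume Sᶜ ≤ η ∧ ∀ z ∈ S, ∀ w ∈ S,
      dist z w ≤ K * ((2 * Q + 1) *
        dist ((D.next H Q).toHomeomorph.symm z).1 ((D.next H Q).toHomeomorph.symm w).1 +
        1 / Q + 2 * δ + 8 * D.q / D.L) := by
  have h_mp : MeasurePreserving (fun z => ((D.next H Q).toHomeomorph.symm z).2) volume volume :=
    measurePreserving_snd.comp (D.next H Q).measurePreserving_symm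
  refine ⟨(fun z => ((D.next H Q).toHomeomorph.symm z).2) ⁻¹' Y, h_mp.measurable hY_meas, ?_,
    fun z hz w hw => ?_⟩
  · rwa [← preimage_compl, h_mp.measure_preimage hY_meas.compl.nullMeasurableSet]
  · obtain ⟨⟨x, y⟩, rfl⟩ := (D.next H Q).toHomeomorph.surjective z
    obtain ⟨⟨x', y'⟩, rfl⟩ := (D.next H Q).toHomeomorph.surjective w
    simp only [mem_preimage, Homeomorph.symm_apply_apply] at hz hw ⊢
    exact (hH.dist_le_mul _ _).trans
      (mul_le_mul_of_nonneg_left (D.dist_conj_le_of_mem hQ hY x x' hz hw) K.coe_nonneg)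

end Generating

/-- The average of a function over the graph of the vertical shear, translated to height `y`. -/
noncomputable def graphMean (Q : ℕ) (g : Torus2 → ℝ) (y : Torus1) : ℝ :=
  ∫ t : Torus1, g (t, y + D.vertical Q t)

lemma integral_next_flow (f : Torus2 → ℝ) (z : Torus2) :
    ∫ t : Torus1, f ((D.next H Q).flow t z) =
      D.graphMean Q (f ∘ H.toHomeomorph) ((D.next H Q).toHomeomorph.symm z).2 := by
  obtain ⟨⟨x, y⟩, rfl⟩ := (D.next H Q).toHomeomorph.surjective z
  have h_eq : ∀ t : Torus1, f ((D.next H Q).flow t ((D.next H Q).toHomeomorph (x, y))) =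
      f (H.toHomeomorph (t + (x + D.horizontal Q y),
        y + D.vertical Q (t + (x + D.horizontal Q y)))) := fun t => by
    rw [Conjugacy.flow_apply, next_apply, conj_apply, add_comm x t, add_assoc]
  simp only [h_eq, Homeomorph.symm_apply_apply]
  exact integral_add_right_eq_self (μ := (volume : Measure Torus1))
    (fun u => f (H.toHomeomorph (u, y + D.vertical Q u))) (x + D.horizontal Q y)

section GraphMean

variable {g : Torus2 → ℝ}

lemma continuous_graphMean (hg : Continuous g) : Continuous (D.graphMean Q g) := by
  have h_vertical := D.continuous_vertical Q
  change Continuous fun y => ∫ t : Torus1, g (t, y + D.vertical Q t)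
  have h_mean := continuous_parametric_integral_of_continuous (μ := (volume : Measure Torus1))
    (f := fun y t => g (t, y + D.vertical Q t))
    (show Continuous fun z : Torus2 => g (z.2, z.1 + D.vertical Q z.2) by fun_prop) isCompact_univ
  simpa only [Measure.restrict_univ] using h_mean

lemma integral_graphMean (hg : Continuous g) : ∫ y, D.graphMean Q g y = ∫ w, g w := by
  have h_vertical := D.continuous_vertical Q
  have h_mp := measurePreserving_shearSnd h_vertical
  have h_cont : Continuous fun z : Torus2 => g (z.1, z.2 + D.vertical Q z.1) := by fun_prop
  rw [← h_mp.map_eq, integral_map h_mp.aemeasurable hg.aestronglyMeasurable,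
    Measure.volume_eq_prod, integral_prod_symm _
      (h_cont.integrable_of_hasCompactSupport (HasCompactSupport.of_compactSpace _))]
  rfl

variable {C : ℝ≥0}

lemma abs_graphMean_sub_le (hQ : 0 < Q) (hg : LipschitzWith C g) (y y' : Torus1) :
    |D.graphMean Q g y - D.graphMean Q g y'| ≤ C * (1 / Q + 7 * D.q / D.L) := by
  -- Translating the graph by `v / Q` moves it up by `v`, up to the oscillation of the shear.
  obtain ⟨v₀, hv₀⟩ := coe_surjective (y - y')
  obtain ⟨v, hv, hv_nonneg, hv_le⟩ : ∃ v : ℝ, (v : Torus1) = y - y' ∧ 0 ≤ v ∧ v ≤ 1 :=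
    ⟨Int.fract v₀, by rw [coe_fract, hv₀], Int.fract_nonneg _, (Int.fract_lt_one _).le⟩
  set s : Torus1 := (((Q : ℝ)⁻¹ * v : ℝ) : Torus1)
  have h_translate : D.graphMean Q g y' = ∫ t, g (t + s, y' + D.vertical Q (t + s)) :=
    (integral_add_right_eq_self (fun t => g (t, y' + D.vertical Q t)) s).symm
  have h_dist : ∀ t, dist ((t, y + D.vertical Q t) : Torus2) (t + s, y' + D.vertical Q (t + s)) ≤
      1 / Q + 7 * D.q / D.L := fun t => by
    have h_fst : ‖s‖ ≤ 1 / Q := (norm_coe_le _).trans (by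
      rw [abs_of_nonneg (by positivity), inv_mul_eq_div]
      gcongr)
    have h_snd : dist (D.vertical Q (t + s)) (D.vertical Q t + (v : Torus1)) ≤ 7 * D.q / D.L :=
      (D.dist_vertical_add_le hQ t v).trans
        (mul_le_of_le_one_right (by positivity) (by rwa [abs_of_nonneg hv_nonneg]))
    have h_y : y + D.vertical Q t = y' + (D.vertical Q t + (v : Torus1)) := by
      rw [hv]
      abel
    rw [Prod.dist_eq, dist_self_add_right, h_y, dist_add_left, dist_comm]
    exact max_le (h_fst.trans (le_add_of_nonneg_right (by positivity)))
      (h_snd.trans (le_add_of_nonneg_left (by positivity)))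
  have h_bound : ∀ t, ‖g (t, y + D.vertical Q t) - g (t + s, y' + D.vertical Q (t + s))‖ ≤
      C * (1 / Q + 7 * D.q / D.L) := fun t => by
    rw [← dist_eq_norm]
    exact (hg.dist_le_mul _ _).trans (mul_le_mul_of_nonneg_left (h_dist t) C.coe_nonneg)
  have h_vertical := D.continuous_vertical Q
  have h_g := hg.continuous
  have h_int : ∀ u y, Integrable (fun t : Torus1 => g (t + u, y + D.vertical Q (t + u))) volume :=
    fun u y => Continuous.integrable_of_hasCompactSupport (by fun_prop)
      (HasCompactSupport.of_compactSpace _)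
  rw [h_translate, graphMean,
    ← integral_sub (by simpa only [add_zero] using h_int 0 y) (h_int s y')]
  simpa using norm_integral_le_of_norm_le_const (μ := (volume : Measure Torus1))
    (Eventually.of_forall h_bound)

lemma abs_graphMean_sub_integral_le (hQ : 0 < Q) (hg : LipschitzWith C g) (y : Torus1) :
    |D.graphMean Q g y - ∫ w, g w| ≤ C * (1 / Q + 7 * D.q / D.L) := by
  have h_int : Integrable (D.graphMean Q g) volume :=
    (D.continuous_graphMean hg.continuous).integrable_of_hasCompactSupport
      (HasCompactSupport.of_compactSpace _)
  have h_eq : D.graphMean Q g y - ∫ w, g w =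
      ∫ y', (D.graphMean Q g y - D.graphMean Q g y') := by
    rw [integral_sub (integrable_const _) h_int, D.integral_graphMean hg.continuous]
    simp
  rw [h_eq]
  have h_bound : ∀ y', ‖D.graphMean Q g y - D.graphMean Q g y'‖ ≤ C * (1 / Q + 7 * D.q / D.L) :=
    D.abs_graphMean_sub_le hQ hg y
  simpa using norm_integral_le_of_norm_le_const (μ := (volume : Measure Torus1))
    (Eventually.of_forall h_bound)

end GraphMean

lemma abs_integral_next_flow_sub_le (hQ : 0 < Q) {K C : ℝ≥0}
    (hH : LipschitzWith K H.toHomeomorph) {f : Torus2 → ℝ} (hf : LipschitzWith C f) (z : Torus2) :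
    |(∫ t : Torus1, f ((D.next H Q).flow t z)) - ∫ w, f w| ≤
      C * K * (1 / Q + 7 * D.q / D.L) := by
  have h_mean := D.abs_graphMean_sub_integral_le hQ (hf.comp hH)
    ((D.next H Q).toHomeomorph.symm z).2
  have h_int : ∫ w, (f ∘ H.toHomeomorph) w = ∫ w, f w :=
    H.measurePreserving.integral_comp H.toHomeomorph.measurableEmbedding f
  rwa [h_int, ← integral_next_flow, NNReal.coe_mul] at h_mean

end ShearData

/-! ### Separation of orbits -/

lemma Conjugacy.exists_half_le_dist (H : Conjugacy) : ∃ c : ℝ,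
    1 / 2 ≤ dist (H.toHomeomorph (torusProj (0, 0))) (H.toHomeomorph (torusProj (0, c))) := by
  have h_cont : Continuous fun y : ℝ => (H.lift (0, y)).2 := by
    have := H.hasBoundedDerivs.contDiff.continuous
    fun_prop
  have h_one : (H.lift (0, 1)).2 = (H.lift (0, 0)).2 + 1 := by
    simpa using congrArg Prod.snd (H.lift_add_one 0 0)
  obtain ⟨c, -, hc⟩ := intermediate_value_Icc (zero_le_one' ℝ) h_cont.continuousOn
    (show (H.lift (0, 0)).2 + 1 / 2 ∈ Icc (H.lift (0, 0)).2 (H.lift (0, 1)).2 by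
      rw [h_one]
      constructor <;> linarith)
  have h_half : ‖((1 / 2 : ℝ) : Torus1)‖ = 1 / 2 := by
    simpa using AddCircle.norm_half_period_eq (p := (1 : ℝ))
  refine ⟨c, ?_⟩
  rw [← H.isLiftOf, ← H.isLiftOf, Prod.dist_eq]
  refine le_max_of_le_right (le_of_eq ?_)
  change 1 / 2 = dist (((H.lift (0, 0)).2 : ℝ) : Torus1) (((H.lift (0, c)).2 : ℝ) : Torus1)
  rw [show (H.lift (0, c)).2 = _ from hc, AddCircle.coe_add, dist_self_add_right, h_half]

lemma Conjugacy.dist_apply_torusProj_le (H : Conjugacy) {K : ℝ≥0}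
    (hH : LipschitzWith K H.toHomeomorph) (v y w : ℝ) (j : ℤ) :
    dist (H.toHomeomorph (torusProj (v, y))) (H.toHomeomorph (torusProj (0, w))) ≤
      max (K * |v|) (K * |y - w - j|) := by
  have h_period : torusProj (0, w) = torusProj (0, w + j) := by
    simp only [torusProj, AddCircle.coe_add, coe_intCast, add_zero]
  have h_dist : dist ((v, y) : ℝ × ℝ) (0, w + j) = max |v| |y - w - j| := by
    rw [Prod.dist_eq, Real.dist_eq, Real.dist_eq, sub_zero, sub_sub]
  rw [h_period, ← mul_max_of_nonneg _ _ K.coe_nonneg, ← h_dist]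
  exact (hH.dist_le_mul _ _).trans
    (mul_le_mul_of_nonneg_left (dist_torusProj_le _ _) K.coe_nonneg)

lemma exists_eq_add_intCast {f : ℝ → ℝ} (hf : Continuous f) {a b : ℝ} (hab : a ≤ b)
    (h_rise : f a + 1 ≤ f b) (c : ℝ) : ∃ x ∈ Icc a b, ∃ k : ℤ, f x = c + k := by
  have h_ceil := Int.le_ceil (f a - c)
  have h_ceil_lt := Int.ceil_lt_add_one (f a - c)
  obtain ⟨x, hx, h_eq⟩ := intermediate_value_Icc hab hf.continuousOn
    (show c + ⌈f a - c⌉ ∈ Icc (f a) (f b) by constructor <;> linarith)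
  exact ⟨x, hx, _, h_eq⟩

lemma exists_finset_card_eq_of_lt {X : Type*} {R : X → X → Prop} (h_symm : ∀ x y, R x y → R y x)
    (h_irrefl : ∀ x, ¬ R x x) {z : ℕ → X} {J : ℕ} (hz : ∀ i j, i < j → j < J → R (z i) (z j)) :
    ∃ F : Finset X, F.card = J ∧ ∀ x ∈ F, ∀ y ∈ F, x ≠ y → R x y := by
  classical
  have h_ne : ∀ i j, i < J → j < J → i ≠ j → R (z i) (z j) := fun i j hi hj hij =>
    hij.lt_or_gt.elim (fun h => hz i j h hj) fun h => h_symm _ _ (hz j i h hi)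
  have h_inj : InjOn z (Finset.range J) := fun i hi j hj hij => by
    by_contra h
    exact h_irrefl (z i) (by
      simpa only [← hij] using h_ne i j (Finset.mem_range.1 hi) (Finset.mem_range.1 hj) h)
  refine ⟨(Finset.range J).image z, by rw [Finset.card_image_of_injOn h_inj, Finset.card_range], ?_⟩
  simp only [Finset.forall_mem_image, Finset.mem_range]
  exact fun i hi j hj hij => h_ne i j hi hj fun h => hij (congrArg z h)

namespace ShearData

variable (D : ShearData) {Q : ℕ}

lemma continuous_mul_wave (Q : ℕ) : Continuous fun x => Q * D.wave x :=
  continuous_const.mul D.hasBoundedDerivs_wave.contDiff.continuous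

lemma mul_wave_add_sub (Q : ℕ) (X u : ℝ) : Q * D.wave (X + u) - Q * D.wave X =
    Q * u + 2 * (Q / D.L * Real.sin (Real.pi * (D.q * u))) *
      Real.cos (2 * Real.pi * D.q * X + Real.pi * (D.q * u)) := by
  have h_sin := Real.sin_sub_sin (2 * Real.pi * D.q * (X + u)) (2 * Real.pi * D.q * X)
  rw [show (2 * Real.pi * D.q * (X + u) - 2 * Real.pi * D.q * X) / 2 = Real.pi * (D.q * u) by ring,
    show (2 * Real.pi * D.q * (X + u) + 2 * Real.pi * D.q * X) / 2 =
      2 * Real.pi * D.q * X + Real.pi * (D.q * u) by ring] at h_sin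
  rw [wave, wave]
  linear_combination Q / D.L * h_sin

lemma abs_mul_wave_sub_sub_le (Q : ℕ) (x x' : ℝ) :
    |Q * D.wave x - Q * D.wave x' - Q * (x - x')| ≤ 7 * D.q / D.L * (Q * |x - x'|) := by
  rw [← mul_sub, ← mul_sub, abs_mul, Nat.abs_cast, mul_left_comm]
  gcongr
  exact D.abs_wave_sub_sub_le x x'

lemma L_pos : 0 < D.L := by linarith [D.q_pos, D.mul_q_le_L]

section

variable {u : ℝ} (hLu : D.L ≤ Q * (D.q * u)) (hu : D.q * u ≤ 1 / 2)

include hLu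

lemma nonneg_of_L_le : 0 ≤ u := by
  have hL : (0 : ℝ) < D.L := mod_cast D.L_pos
  by_contra! h_neg
  nlinarith [mul_nonneg Q.cast_nonneg (D.q.cast_nonneg : (0 : ℝ) ≤ D.q)]

include hu

lemma two_le_amplitude : 2 ≤ Q / D.L * Real.sin (Real.pi * (D.q * u)) := by
  have hL : (0 : ℝ) < D.L := mod_cast D.L_pos
  have hu₀ := D.nonneg_of_L_le hLu
  have h_sin : 2 * (D.q * u) ≤ Real.sin (Real.pi * (D.q * u)) := by
    have h_mul := Real.mul_le_sin (x := Real.pi * (D.q * u)) (by positivity)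
      (by nlinarith [Real.pi_pos])
    rwa [← mul_assoc, div_mul_cancel₀ _ Real.pi_ne_zero] at h_mul
  rw [div_mul_eq_mul_div, le_div_iff₀ hL]
  nlinarith [mul_le_mul_of_nonneg_left h_sin (Q.cast_nonneg : (0 : ℝ) ≤ Q)]

lemma exists_mul_wave_sub_eq (c : ℝ) : ∃ (X : ℝ) (k : ℤ), 0 ≤ X ∧ X ≤ 1 / D.q ∧
    Q * D.wave (X + u) - Q * D.wave X = c + k := by
  have hq : (0 : ℝ) < D.q := mod_cast D.q_pos
  have hu₀ := D.nonneg_of_L_le hLu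
  have h_amplitude := D.two_le_amplitude hLu hu
  have hu_le : u ≤ 1 / (2 * D.q) := by
    rw [le_div_iff₀ (by positivity)]
    linarith
  set X₀ := 1 / (2 * D.q) - u / 2 with hX₀
  let f : ℝ → ℝ := fun X => Q * D.wave (X + u) - Q * D.wave X
  have hf_cont : Continuous f :=
    ((D.continuous_mul_wave Q).comp (continuous_add_const u)).sub (D.continuous_mul_wave Q)
  have h_left : f X₀ = Q * u - 2 * (Q / D.L * Real.sin (Real.pi * (D.q * u))) := by
    have h_phase : 2 * Real.pi * D.q * X₀ + Real.pi * (D.q * u) = Real.pi := by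
      rw [hX₀]
      field_simp
      ring
    rw [show f X₀ = _ from D.mul_wave_add_sub Q X₀ u, h_phase, Real.cos_pi,
      mul_neg_one, sub_eq_add_neg]
  have h_right : f (X₀ + 1 / (2 * D.q)) =
      Q * u + 2 * (Q / D.L * Real.sin (Real.pi * (D.q * u))) := by
    have h_phase : 2 * Real.pi * D.q * (X₀ + 1 / (2 * D.q)) + Real.pi * (D.q * u) =
        2 * Real.pi := by
      rw [hX₀]
      field_simp
      ring
    rw [show f (X₀ + _) = _ from D.mul_wave_add_sub Q _ u, h_phase, Real.cos_two_pi, mul_one]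
  have h_half : 0 ≤ 1 / (2 * (D.q : ℝ)) := by positivity
  have h_rise : f X₀ + 1 ≤ f (X₀ + 1 / (2 * D.q)) := by
    rw [h_left, h_right]
    linarith
  obtain ⟨X, ⟨hX, hX'⟩, k, hXf⟩ :=
    exists_eq_add_intCast hf_cont (le_add_of_nonneg_right h_half) h_rise c
  have h_period : 1 / (D.q : ℝ) = 1 / (2 * D.q) + 1 / (2 * D.q) := by
    field_simp
    norm_num
  exact ⟨X, k, by linarith, by linarith, hXf⟩

end

lemma exists_mul_wave_eq_intCast (hQ : 0 < Q) (X : ℝ) : ∃ (X' : ℝ) (m : ℤ),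
    X ≤ X' ∧ X' ≤ X + 2 / Q ∧ Q * D.wave X' = m := by
  have hL : 100 * (D.q : ℝ) ≤ D.L := mod_cast D.mul_q_le_L
  have hQ' : (Q : ℝ) ≠ 0 := mod_cast hQ.ne'
  have h_rise : Q * D.wave X + 1 ≤ Q * D.wave (X + 2 / Q) := by
    have h_diff := (abs_le.1 (D.abs_mul_wave_sub_sub_le Q (X + 2 / Q) X)).1
    have h_small : 7 * (D.q : ℝ) / D.L ≤ 1 / 2 := by
      rw [div_le_iff₀ (mod_cast D.L_pos)]
      linarith
    rw [add_sub_cancel_left, abs_of_nonneg (by positivity), mul_div_cancel₀ _ hQ'] at h_diff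
    linarith
  obtain ⟨X', ⟨hX, hX'⟩, m, h_eq⟩ := exists_eq_add_intCast (D.continuous_mul_wave Q)
    (le_add_of_nonneg_right (by positivity : (0 : ℝ) ≤ 2 / Q)) h_rise 0
  exact ⟨X', m, hX, hX', h_eq.trans (zero_add _)⟩

lemma exists_mul_wave_eq_of_L_le (hqQ : 4 * D.q ≤ Q) {u : ℝ} (hLu : D.L ≤ Q * (D.q * u))
    (hu : D.q * u ≤ 1 / 2) (c : ℝ) : ∃ (X : ℝ) (m k : ℤ), 0 ≤ X ∧ X ≤ 3 / (2 * D.q) ∧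
      Q * D.wave X = m ∧ |Q * D.wave (X + u) - c - k| ≤ 28 * D.q / D.L := by
  have hq : (0 : ℝ) < D.q := mod_cast D.q_pos
  have hqQ' : 4 * (D.q : ℝ) ≤ Q := mod_cast hqQ
  have hQ : 0 < Q := by linarith [D.q_pos]
  obtain ⟨X, k, hX_nonneg, hX_le, hX_eq⟩ := D.exists_mul_wave_sub_eq hLu hu c
  obtain ⟨X', m, hXX', hX'X, hX'_eq⟩ := D.exists_mul_wave_eq_intCast hQ X
  have h_step : 2 / (Q : ℝ) ≤ 1 / (2 * D.q) := by
    rw [div_le_div_iff₀ (by positivity) (by positivity)]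
    linarith
  have h_sum : 3 / (2 * (D.q : ℝ)) = 1 / D.q + 1 / (2 * D.q) := by
    field_simp
    norm_num
  have h_wave_u := D.abs_mul_wave_sub_sub_le Q (X' + u) (X + u)
  have h_wave := D.abs_mul_wave_sub_sub_le Q X' X
  rw [add_sub_add_right_eq_sub] at h_wave_u
  have h_error : 7 * D.q / D.L * (Q * |X' - X|) ≤ 14 * D.q / D.L := by
    have h_dist : Q * |X' - X| ≤ 2 := by
      rw [abs_of_nonneg (by linarith), ← le_div_iff₀' (by positivity)]
      linarith
    calc 7 * D.q / D.L * (Q * |X' - X|) ≤ 7 * D.q / D.L * 2 := by gcongr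
      _ = 14 * D.q / D.L := by ring
  refine ⟨X', m, m + k, hX_nonneg.trans hXX', by linarith, hX'_eq, ?_⟩
  have h_eq : Q * D.wave (X' + u) - c - ((m + k : ℤ) : ℝ) =
      (Q * D.wave (X' + u) - Q * D.wave (X + u) - Q * (X' - X)) -
        (Q * D.wave X' - Q * D.wave X - Q * (X' - X)) := by
    push_cast
    linear_combination hX_eq + hX'_eq
  rw [h_eq, show 28 * (D.q : ℝ) / D.L = 14 * D.q / D.L + 14 * D.q / D.L by ring]
  exact (abs_sub _ _).trans (add_le_add (h_wave_u.trans h_error) (h_wave.trans h_error))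

variable (H : Conjugacy)

lemma next_flow_apply_zero (x t : ℝ) :
    (D.next H Q).flow (t : Torus1) ((D.next H Q).toHomeomorph ((x : Torus1), 0)) =
      H.toHomeomorph (torusProj (x + t, Q * D.wave (x + t))) := by
  have h_horizontal : D.horizontal Q 0 = 0 := by
    have h_zero := D.horizontal_coe Q 0
    rwa [D.isSmoothProfile.map_zero, mul_zero] at h_zero
  rw [Conjugacy.flow_apply, next_apply, conj_apply, h_horizontal, add_zero, zero_add,
    ← AddCircle.coe_add, vertical_coe]
  rfl

section

variable {K : ℝ≥0} (hH : LipschitzWith K H.toHomeomorph)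
  (hKq : 64 * (K : ℝ) ≤ D.q) (hKL : 1000 * D.q * (K : ℝ) ≤ D.L) (hqQ : 4 * D.q ≤ Q)

include hH hKq hKL hqQ

lemma exists_quarter_le_dist_next_flow {u : ℝ} (hLu : D.L ≤ Q * (D.q * u))
    (hu : D.q * u ≤ 1 / 2) (x : ℝ) : ∃ t : Torus1,
      1 / 4 ≤ dist ((D.next H Q).flow t ((D.next H Q).toHomeomorph ((x : Torus1), 0)))
        ((D.next H Q).flow t ((D.next H Q).toHomeomorph (((x + u : ℝ) : Torus1), 0))) := by
  have hq : (0 : ℝ) < D.q := mod_cast D.q_pos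
  have hL : (0 : ℝ) < D.L := mod_cast D.L_pos
  have hu₀ := D.nonneg_of_L_le hLu
  obtain ⟨c, hc⟩ := H.exists_half_le_dist
  obtain ⟨X, m, k, hX_nonneg, hX_le, hX_eq, hX_u⟩ := D.exists_mul_wave_eq_of_L_le hqQ hLu hu c
  have hXu_le : X + u ≤ 2 / D.q := by
    have hu_le : u ≤ 1 / (2 * D.q) := by
      rw [le_div_iff₀ (by positivity)]
      linarith
    have h_sum : 2 / (D.q : ℝ) = 3 / (2 * D.q) + 1 / (2 * D.q) := by
      field_simp
      norm_num
    linarith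
  have h_near : ∀ (v y w : ℝ) (j : ℤ), 0 ≤ v → v ≤ 2 / D.q → |y - w - j| ≤ 28 * D.q / D.L →
      dist (H.toHomeomorph (torusProj (v, y))) (H.toHomeomorph (torusProj (0, w))) ≤ 1 / 32 := by
    intro v y w j hv_nonneg hv_le hy
    have hKv : K * (2 / (D.q : ℝ)) ≤ 1 / 32 := by
      rw [← mul_div_assoc, div_le_div_iff₀ hq (by norm_num)]
      linarith
    have hKy : K * (28 * (D.q : ℝ) / D.L) ≤ 1 / 32 := by
      rw [← mul_div_assoc, div_le_div_iff₀ hL (by norm_num)]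
      nlinarith
    refine (H.dist_apply_torusProj_le hH v y w j).trans (max_le ?_ ?_)
    · rw [abs_of_nonneg hv_nonneg]
      exact (mul_le_mul_of_nonneg_left hv_le K.coe_nonneg).trans hKv
    · exact (mul_le_mul_of_nonneg_left hy K.coe_nonneg).trans hKy
  refine ⟨((X - x : ℝ) : Torus1), ?_⟩
  rw [next_flow_apply_zero, next_flow_apply_zero, add_sub_cancel,
    show x + u + (X - x) = X + u by ring]
  have h_zero := h_near X (Q * D.wave X) 0 m hX_nonneg (by linarith) (by
    rw [hX_eq, sub_zero, sub_self, abs_zero]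
    positivity)
  have h_c := h_near (X + u) (Q * D.wave (X + u)) c k (by linarith) hXu_le hX_u
  rw [dist_comm] at h_zero
  linarith [dist_triangle4 (H.toHomeomorph (torusProj (0, 0)))
    (H.toHomeomorph (torusProj (X, Q * D.wave X)))
    (H.toHomeomorph (torusProj (X + u, Q * D.wave (X + u)))) (H.toHomeomorph (torusProj (0, c)))]

lemma exists_separated_next (hLQ : 2 * D.L ≤ Q) : ∃ F : Finset Torus2, Q ≤ 4 * D.L * F.card ∧
    ∀ z ∈ F, ∀ w ∈ F, z ≠ w →
      ∃ t, 1 / 4 ≤ dist ((D.next H Q).flow t z) ((D.next H Q).flow t w) := by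
  have hq : (0 : ℝ) < D.q := mod_cast D.q_pos
  have hL : (0 : ℝ) < D.L := mod_cast D.L_pos
  have hQ : (0 : ℝ) < Q := mod_cast (by linarith [D.L_pos] : 0 < Q)
  have hJ_le : ((Q / (2 * D.L) : ℕ) : ℝ) * (2 * D.L) ≤ Q :=
    mod_cast Nat.div_mul_le_self Q (2 * D.L)
  let x : ℕ → ℝ := fun j => j * (D.L / (Q * D.q))
  have h_lt : ∀ i j, i < j → j < Q / (2 * D.L) → ∃ t, 1 / 4 ≤
      dist ((D.next H Q).flow t ((D.next H Q).toHomeomorph ((x i : Torus1), 0)))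
        ((D.next H Q).flow t ((D.next H Q).toHomeomorph ((x j : Torus1), 0))) := by
    intro i j hij hj
    have hij' : (i : ℝ) + 1 ≤ j := mod_cast hij
    have hjJ : (j : ℝ) ≤ (Q / (2 * D.L) : ℕ) := mod_cast hj.le
    have h_step : D.q * (x j - x i) = (j - i) * D.L / Q := by
      simp only [x]
      field_simp
    have hLu : D.L ≤ Q * (D.q * (x j - x i)) := by
      rw [h_step, mul_div_cancel₀ _ hQ.ne']
      nlinarith
    have hu : D.q * (x j - x i) ≤ 1 / 2 := by
      rw [h_step, div_le_div_iff₀ hQ two_pos]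
      nlinarith [(i.cast_nonneg : (0 : ℝ) ≤ i)]
    simpa only [add_sub_cancel] using
      D.exists_quarter_le_dist_next_flow H hH hKq hKL hqQ hLu hu (x i)
  obtain ⟨F, hF_card, hF⟩ := exists_finset_card_eq_of_lt
    (R := fun z w => ∃ t, 1 / 4 ≤ dist ((D.next H Q).flow t z) ((D.next H Q).flow t w))
    (fun z w ⟨t, ht⟩ => ⟨t, by rwa [dist_comm]⟩)
    (fun z ⟨t, ht⟩ => by rw [dist_self] at ht; norm_num at ht) h_lt
  refine ⟨F, ?_, hF⟩
  have h_lt_mul := Nat.lt_div_mul_add (a := Q) (b := 2 * D.L) (by linarith [D.L_pos])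
  have hJ_pos : 1 ≤ Q / (2 * D.L) := (Nat.one_le_div_iff (by linarith [D.L_pos])).2 hLQ
  rw [hF_card]
  nlinarith

end

end ShearData

/-! ### The next stage for a large parameter -/

lemma eventually_le_natCast_rpow (c : ℝ) {ε : ℝ} (hε : 0 < ε) :
    ∀ᶠ Q : ℕ in atTop, c ≤ (Q : ℝ) ^ ε :=
  ((tendsto_rpow_atTop hε).comp tendsto_natCast_atTop_atTop).eventually_ge_atTop c

lemma eventually_div_natCast_le (c : ℝ) {ε : ℝ} (hε : 0 < ε) : ∀ᶠ Q : ℕ in atTop, c / Q ≤ ε :=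
  (tendsto_const_div_atTop_nhds_zero_nat c).eventually_le_const hε

lemma abs_natCast_inv_le (Q : ℕ) : |(Q : ℝ)⁻¹| ≤ Q := by
  rcases Q.eq_zero_or_pos with rfl | hQ
  · simp
  · rw [abs_inv, Nat.abs_cast]
    exact (Nat.cast_inv_le_one Q).trans (mod_cast hQ)

lemma Conjugacy.norm_iteratedFDeriv_liftFlow_sub_le (H : Conjugacy) {n : ℕ} {K : ℝ} (hK : 1 ≤ K)
    (h_lift : ∀ i, 1 ≤ i → i ≤ n + 1 → ∀ x, ‖iteratedFDeriv ℝ i H.lift x‖ ≤ K)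
    (h_liftInv : ∀ i, 1 ≤ i → i ≤ n + 1 → ∀ x, ‖iteratedFDeriv ℝ i H.liftInv x‖ ≤ K)
    {k : ℕ} (hk : k ≤ n) (t t' : ℝ) (x : ℝ × ℝ) :
    ‖iteratedFDeriv ℝ k (fun p => H.liftFlow t p - H.liftFlow t' p) x‖ ≤
      n.factorial * K ^ (n + 1) * |t - t'| := by
  have h_norm : ‖((t, 0) : ℝ × ℝ) - (t', 0)‖ = |t - t'| := by simp [Prod.norm_def]
  refine (norm_iteratedFDeriv_comp_add_sub_comp_add_le H.hasBoundedDerivs.contDiff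
    H.hasBoundedDerivs_inv.contDiff hK (fun y i hi => h_lift (i + 1) (by omega) (by omega) y)
    (fun x i h₁ h₂ => h_liftInv i h₁ (by omega) x) (t, 0) (t', 0) x).trans ?_
  calc k.factorial * (K * ‖((t, 0) : ℝ × ℝ) - (t', 0)‖) * K ^ k
      = k.factorial * K ^ (k + 1) * |t - t'| := by rw [h_norm]; ring
    _ ≤ n.factorial * K ^ (n + 1) * |t - t'| := by gcongr

namespace ShearData

variable (D : ShearData) (H : Conjugacy)

lemma hasPolyBoundedDerivs_lift_next : HasPolyBoundedDerivs fun Q => (D.next H Q).lift := by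
  have h_id := (HasBoundedDerivs.id (E := ℝ × ℝ)).hasPolyBoundedDerivs
  have h_shearSnd :
      HasPolyBoundedDerivs fun (Q : ℕ) (p : ℝ × ℝ) => p + (0, Q * D.wave p.1) := by
    simpa using h_id.add (D.hasBoundedDerivs_wave.inr_comp_fst.const_smul_family (fun Q => Q)
      fun Q => by simp)
  have h_shearFst :
      HasPolyBoundedDerivs fun (Q : ℕ) (p : ℝ × ℝ) => p + ((Q : ℝ)⁻¹ * D.β p.2, 0) := by
    simpa using h_id.add (D.hasBoundedDerivs_β.inl_comp_snd.const_smul_family (fun Q => (Q : ℝ)⁻¹)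
      abs_natCast_inv_le)
  exact H.hasBoundedDerivs.hasPolyBoundedDerivs.comp (h_shearSnd.comp h_shearFst)

lemma hasPolyBoundedDerivs_liftInv_next :
    HasPolyBoundedDerivs fun Q => (D.next H Q).liftInv := by
  have h_id := (HasBoundedDerivs.id (E := ℝ × ℝ)).hasPolyBoundedDerivs
  have h_shearSnd : HasPolyBoundedDerivs
      fun (Q : ℕ) (p : ℝ × ℝ) => p + (-1 : ℝ) • ((0 : ℝ), Q * D.wave p.1) := by
    simpa using h_id.add (D.hasBoundedDerivs_wave.inr_comp_fst.const_smul_family (fun Q => -Q)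
      fun Q => by simp)
  have h_shearFst : HasPolyBoundedDerivs
      fun (Q : ℕ) (p : ℝ × ℝ) => p + (-1 : ℝ) • ((Q : ℝ)⁻¹ * D.β p.2, (0 : ℝ)) := by
    simpa using h_id.add (D.hasBoundedDerivs_β.inl_comp_snd.const_smul_family
      (fun Q => -(Q : ℝ)⁻¹) fun Q => (abs_neg _).trans_le (abs_natCast_inv_le Q))
  exact (h_shearFst.comp h_shearSnd).comp H.hasBoundedDerivs_inv.hasPolyBoundedDerivs

lemma exists_norm_iteratedFDeriv_next_le (n : ℕ) : ∃ P : ℕ, ∀ i, 1 ≤ i → i ≤ n →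
    ∀ Q : ℕ, 2 ≤ Q → ∀ x, ‖iteratedFDeriv ℝ i (D.next H Q).lift x‖ ≤ (Q : ℝ) ^ P ∧
      ‖iteratedFDeriv ℝ i (D.next H Q).liftInv x‖ ≤ (Q : ℝ) ^ P := by
  obtain ⟨P₁, hP₁⟩ := (D.hasPolyBoundedDerivs_lift_next H).exists_uniform n
  obtain ⟨P₂, hP₂⟩ := (D.hasPolyBoundedDerivs_liftInv_next H).exists_uniform n
  refine ⟨P₁ + P₂, fun i h₁ hn Q hQ x => ?_⟩
  have hQ' : (1 : ℝ) ≤ Q := mod_cast (by omega : 1 ≤ Q)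
  exact ⟨(hP₁ i h₁ hn Q hQ x).trans (pow_le_pow_right₀ hQ' (by omega)),
    (hP₂ i h₁ hn Q hQ x).trans (pow_le_pow_right₀ hQ' (by omega))⟩

variable {H} {K : ℝ≥0} (hH : LipschitzWith K H.toHomeomorph) {ε : ℝ}
include hH

lemma eventually_exists_cover_next (hε : 0 < ε) : ∀ᶠ Q : ℕ in atTop, ∃ F : Finset Torus2,
    (F.card : ℝ) ≤ (Q : ℝ) ^ (1 + ε) ∧
      ∀ z, ∃ w ∈ F, ∀ t, dist ((D.next H Q).flow t w) ((D.next H Q).flow t z) < ε := by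
  obtain ⟨c, hc⟩ := exists_nat_gt ((K * 2 + K * (2 * D.B + 1)) / ε)
  have hc₀ : (0 : ℝ) < c := lt_of_le_of_lt (by positivity) hc
  filter_upwards [eventually_le_natCast_rpow (c ^ 2) hε, eventually_gt_atTop 0] with Q hcQ hQ
  have hQ₀ : (0 : ℝ) < Q := mod_cast hQ
  have h_dist (x x' y y' : Torus1) : dist ((D.next H Q).toHomeomorph (x, y))
      ((D.next H Q).toHomeomorph (x', y')) ≤
        K * (2 * Q) * dist x x' + K * (2 * D.B + 1) * dist y y' :=
    (hH.dist_le_mul _ _).trans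
      ((mul_le_mul_of_nonneg_left (D.dist_conj_le hQ x x' y y') K.coe_nonneg).trans_eq (by ring))
  obtain ⟨F, hF_card, hF⟩ := (D.next H Q).exists_flow_cover (by positivity) (by positivity) h_dist
    (M := c * Q) (N := c) (Nat.mul_pos (mod_cast hc₀) hQ) (mod_cast hc₀)
  refine ⟨F, ?_, fun z => (hF z).imp fun w hw => ⟨hw.1, fun t => (hw.2 t).trans_lt ?_⟩⟩
  · calc (F.card : ℝ) ≤ Q * (c : ℝ) ^ 2 := by
          rw [pow_two, ← mul_assoc, mul_comm (Q : ℝ)]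
          exact mod_cast hF_card
      _ ≤ Q * (Q : ℝ) ^ ε := by gcongr
      _ = (Q : ℝ) ^ (1 + ε) := by rw [Real.rpow_add hQ₀, Real.rpow_one]
  · calc (K : ℝ) * (2 * Q) * (1 / (c * Q : ℕ)) + K * (2 * D.B + 1) * (1 / c)
        = (K * 2 + K * (2 * D.B + 1)) / c := by push_cast; field_simp
      _ < ε := (div_lt_comm₀ hε hc₀).1 hc

lemma eventually_exists_separated_next (hKq : 64 * (K : ℝ) ≤ D.q)
    (hKL : 1000 * D.q * (K : ℝ) ≤ D.L) (hε : 0 < ε) : ∀ᶠ Q : ℕ in atTop, ∃ F : Finset Torus2,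
    (Q : ℝ) ^ (1 - ε) ≤ F.card ∧ ∀ z ∈ F, ∀ w ∈ F, z ≠ w →
      ∃ t, 1 / 4 ≤ dist ((D.next H Q).flow t z) ((D.next H Q).flow t w) := by
  filter_upwards [eventually_le_natCast_rpow (4 * D.L) hε, eventually_gt_atTop 0,
    eventually_ge_atTop (4 * D.q), eventually_ge_atTop (2 * D.L)] with Q h_rpow hQ hqQ hLQ
  have hQ₀ : (0 : ℝ) < Q := mod_cast hQ
  obtain ⟨F, hF_card, hF⟩ := D.exists_separated_next H hH hKq hKL hqQ hLQ
  refine ⟨F, ?_, hF⟩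
  rw [Real.rpow_sub hQ₀, Real.rpow_one, div_le_iff₀ (by positivity)]
  calc (Q : ℝ) ≤ F.card * (4 * D.L) := by rw [mul_comm]; exact mod_cast hF_card
    _ ≤ F.card * (Q : ℝ) ^ ε := by gcongr

lemma eventually_abs_integral_next_flow_sub_le (hε : K * (7 * D.q / D.L) < ε) :
    ∀ᶠ Q : ℕ in atTop, ∀ (f : Torus2 → ℝ) (C : ℝ≥0), LipschitzWith C f → ∀ z,
      |(∫ t : Torus1, f ((D.next H Q).flow t z)) - ∫ w, f w| ≤ C * ε := by
  filter_upwards [eventually_div_natCast_le K (sub_pos.2 hε), eventually_gt_atTop 0]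
    with Q hKQ hQ f C hf z
  refine (D.abs_integral_next_flow_sub_le H hQ hH hf z).trans ?_
  rw [mul_assoc, mul_add, mul_one_div]
  gcongr
  linarith

lemma eventually_exists_generating_next {Y : Set Torus1} {δ : ℝ} {η : ℝ≥0∞}
    (hY_meas : MeasurableSet Y) (hY_vol : volume Yᶜ ≤ η)
    (hY : ∀ y : ℝ, (y : Torus1) ∈ Y → ‖((y + D.β y - 1 / 2 : ℝ) : Torus1)‖ ≤ δ)
    (hε : K * (2 * δ + 8 * D.q / D.L) < ε) :
    ∀ᶠ Q : ℕ in atTop, ∀ q' : ℕ, Q ^ 2 ≤ q' →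
      ∃ S : Set Torus2, MeasurableSet S ∧ volume Sᶜ ≤ η ∧ ∀ z ∈ S, ∀ w ∈ S,
        dist ((D.next H Q).toHomeomorph.symm z).1 ((D.next H Q).toHomeomorph.symm w).1 ≤ 4 / q' →
          dist z w ≤ ε := by
  filter_upwards [eventually_div_natCast_le (K * 13) (sub_pos.2 hε), eventually_gt_atTop 0]
    with Q hKQ hQ q' hq'
  have hQ₁ : (1 : ℝ) ≤ Q := mod_cast hQ
  have hq'_le : (Q : ℝ) ^ 2 ≤ q' := mod_cast hq'
  obtain ⟨S, hS_meas, hS_vol, hS⟩ := D.exists_generating_next H hQ hH hY_meas hY_vol hY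
  refine ⟨S, hS_meas, hS_vol, fun z hz w hw h => (hS z hz w hw).trans ?_⟩
  calc K * ((2 * Q + 1) * dist ((D.next H Q).toHomeomorph.symm z).1
        ((D.next H Q).toHomeomorph.symm w).1 + 1 / Q + 2 * δ + 8 * D.q / D.L)
      ≤ K * ((3 * Q) * (4 / Q ^ 2) + 1 / Q + 2 * δ + 8 * D.q / D.L) := by
        gcongr
        · linarith
        · exact h.trans (by gcongr)
    _ = K * 13 / Q + K * (2 * δ + 8 * D.q / D.L) := by field_simp; ring
    _ ≤ ε := by linarith

end ShearData

/-! ### The recursion -/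

lemma exists_shearData {q : ℕ} (hq : 0 < q) (K : ℕ) {ε : ℝ} (hε : 0 < ε) {η : ℝ≥0∞}
    (hη : 0 < η) : ∃ D : ShearData, D.q = q ∧ 1000 * q * K ≤ D.L ∧
      ∃ (δ : ℝ) (Y : Set Torus1), 0 < δ ∧ MeasurableSet Y ∧ volume Yᶜ ≤ η ∧
        (∀ y : ℝ, (y : Torus1) ∈ Y → ‖((y + D.β y - 1 / 2 : ℝ) : Torus1)‖ ≤ δ) ∧
        K * (2 * δ + 8 * q / D.L) < ε := by
  obtain ⟨L₀, hL₀⟩ := exists_nat_gt (4 * K * (8 * q) / ε)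
  let δ : ℝ := ε / (4 * (K + 1))
  let L : ℕ := L₀ + 1000 * q * K + 100 * q
  obtain ⟨β, hβ, Y, hY_meas, hY_vol, hY⟩ :=
    exists_isSmoothProfile_near_half (by positivity : 0 < δ) hη
  obtain ⟨B, hB⟩ := (HasBoundedDerivs.of_periodic hβ.contDiff hβ.periodic).exists_lipschitz
  refine ⟨⟨β, hβ, B, hB, q, L, hq, by omega⟩, rfl, (by omega : 1000 * q * K ≤ L), δ, Y,
    by positivity, hY_meas, hY_vol, hY, ?_⟩
  have hL_pos : (0 : ℝ) < L := mod_cast (by omega : 0 < L)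
  have hL : 4 * K * (8 * q) < L * ε :=
    (div_lt_iff₀ hε).1 (hL₀.trans_le (mod_cast (by omega : L₀ ≤ L)))
  have h_wave : K * (8 * q / L) < ε / 4 := by
    rw [mul_div_assoc', div_lt_iff₀ hL_pos]
    linarith
  have h_profile : K * (2 * δ) ≤ ε / 2 := by
    have h_le : (K : ℝ) * δ ≤ (K + 1) * δ := by gcongr; linarith
    have h_eq : (K + 1) * δ = ε / 4 := by simp only [δ]; field_simp
    linarith
  rw [mul_add]
  linarith

namespace Stage

lemma lipschitzWith (s : Stage) : LipschitzWith (s.K : ℝ≥0) s.toHomeomorph :=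
  .of_dist_le_mul fun z w => by simpa using s.dist_le z w

variable (s : Stage) {D : ShearData} (hq : D.q = s.q) (n : ℕ)

include hq in
lemma eventually_isSucc {Y : Set Torus1} {δ : ℝ} (hY_meas : MeasurableSet Y)
    (hY_vol : volume Yᶜ ≤ (1 / 2 : ℝ≥0∞) ^ n)
    (hY : ∀ y : ℝ, (y : Torus1) ∈ Y → ‖((y + D.β y - 1 / 2 : ℝ) : Torus1)‖ ≤ δ) (hδ : 0 < δ)
    (hK : s.K * (2 * δ + 8 * s.q / D.L) < 1 / ((n : ℝ) + 1)) :
    ∀ᶠ Q : ℕ in atTop, s.q ∣ Q → ∀ s' : Stage, s'.toConjugacy = D.next s.toConjugacy Q →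
      Q ∣ s'.q → Q ^ 2 ≤ s'.q → 100 * 2 ^ n * s'.K * s.q ≤ s'.q →
      n.factorial * s'.K ^ (n + 1) * 2 ^ n ≤ s'.q →
      (∀ i, 1 ≤ i → i ≤ n + 1 → ∀ x, ‖iteratedFDeriv ℝ i s'.lift x‖ ≤ s'.K ∧
        ‖iteratedFDeriv ℝ i s'.liftInv x‖ ≤ s'.K) →
      s.IsSucc n s' := by
  have hK_δ : ((s.K : ℝ≥0) : ℝ) * (2 * δ + 8 * D.q / D.L) < 1 / ((n : ℝ) + 1) := by
    simpa [hq] using hK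
  have hK_wave : ((s.K : ℝ≥0) : ℝ) * (7 * D.q / D.L) < 1 / ((n : ℝ) + 1) := by
    refine lt_of_le_of_lt ?_ hK_δ
    gcongr
    have h_le : 7 * (D.q : ℝ) / D.L ≤ 8 * D.q / D.L := by gcongr; norm_num
    linarith
  filter_upwards [D.eventually_abs_integral_next_flow_sub_le s.lipschitzWith hK_wave,
    D.eventually_exists_generating_next s.lipschitzWith hY_meas hY_vol hY hK_δ,
    eventually_ge_atTop (2 ^ n * s.q)]
    with Q h_integral h_generating h_le hdvd s' hs' hQ_dvd hQ_sq h_mul h_fact h_deriv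
  have hQ_ge : (2 : ℝ) ^ n * s.q ≤ Q := mod_cast h_le
  have hq_pos : (0 : ℝ) < s.q := mod_cast s.q_pos
  exact
    { dvd := hdvd.trans hQ_dvd
      flow_eq := fun k z => by
        rw [hs', ← hq]
        exact D.next_flow_eq _ (hq ▸ hdvd) k z
      mul_q_le := h_mul
      norm_iteratedFDeriv_le := fun k hk t t' x => by
        have h_fact' : (n.factorial : ℝ) * s'.K ^ (n + 1) * 2 ^ n ≤ s'.q := mod_cast h_fact
        refine (s'.norm_iteratedFDeriv_liftFlow_sub_le (mod_cast s'.one_le_K)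
          (fun i h₁ h₂ x => (h_deriv i h₁ h₂ x).1) (fun i h₁ h₂ x => (h_deriv i h₁ h₂ x).2)
          hk t t' x).trans ?_
        gcongr
        exact (le_div_iff₀ (by positivity)).2 h_fact'
      abs_integral_sub_le := fun f C hf z => by
        rw [hs', div_eq_mul_one_div]
        exact h_integral f C hf z
      dist_symm_fst_le := fun z => by
        rw [hs']
        refine (D.dist_next_symm_fst_le _ z).trans (one_div_le_one_div_of_le (by positivity) ?_)
        linarith
      exists_generating := by
        rw [hs']
        exact h_generating s'.q hQ_sq }

include hq in
lemma eventually_hasComplexity (hL : 1000 * s.q * s.K ≤ D.L) :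
    ∀ᶠ Q : ℕ in atTop, ∀ s' : Stage, s'.toConjugacy = D.next s.toConjugacy Q →
      s'.HasComplexity n Q := by
  have hKq : 64 * ((s.K : ℝ≥0) : ℝ) ≤ D.q := by
    simpa [hq] using (mod_cast s.mul_K_le_q : 64 * (s.K : ℝ) ≤ s.q)
  have hKL : 1000 * D.q * ((s.K : ℝ≥0) : ℝ) ≤ D.L := by
    simpa [hq] using (mod_cast hL : 1000 * s.q * (s.K : ℝ) ≤ D.L)
  have hε : (0 : ℝ) < 1 / ((n : ℝ) + 1) := by positivity
  filter_upwards [D.eventually_exists_cover_next s.lipschitzWith hε,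
    D.eventually_exists_separated_next s.lipschitzWith hKq hKL hε, eventually_ge_atTop (n + 2)]
    with Q h_cover h_separated hQ s' hs'
  exact ⟨hQ, hs' ▸ h_cover, hs' ▸ h_separated⟩

variable {s} in
lemma isAdapted_intScale1 {r b M P : ℕ} (hr : r ≠ 0) (hb : 2 ≤ b) (hM : 1 ≤ M)
    (hs_q : s.q = gammaPeriod r b (M + 1)) (hs_K : s.K ≤ gammaPeriod r b M ^ P)
    (hn : 100 * (n + 1) ≤ gammaPeriod r b M) (hP : (P + 1) * (n + 1) < (M + 1) ^ r) :
    s.IsAdapted n (gammaPeriod r b M) (intScale1 r b) where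
  apply_q t := by rw [hs_q, intScale1_gammaPeriod hr hb hM]
  rpow_le m hm := by
    have hR : 100 * (n + 1) * s.K ≤ gammaPeriod r b M ^ (P + 1) := by
      rw [pow_succ']
      exact Nat.mul_le_mul hn hs_K
    have h_exp : ((P + 1 : ℕ) : ℝ) / ((M : ℝ) + 1) ^ r ≤ 1 / ((n : ℝ) + 1) := by
      rw [div_le_div_iff₀ (by positivity) (by positivity), one_mul]
      exact mod_cast hP.le
    refine le_trans (Real.rpow_le_rpow_of_exponent_le
      (mod_cast gammaPeriod_pos (r := r) (M := M) hb) (by linarith))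
      (gammaPeriod_rpow_le_intScale1 hr hb hM
        ((Nat.le_mul_of_pos_right (P + 1) n.succ_pos).trans_lt hP) hR (hs_q ▸ hm))

theorem exists_eventually_isSucc (s : Stage) (n : ℕ) : ∃ P : ℕ, ∀ᶠ Q : ℕ in atTop, ∀ q' : ℕ,
    s.q ∣ Q → Q ∣ q' → Q ^ ((P + 1) * (n + 1) + 1) ≤ q' →
      ∃ s' : Stage, s'.q = q' ∧ s'.K = Q ^ P ∧ s.IsSucc n s' ∧ s'.HasComplexity n Q := by
  obtain ⟨D, hD_q, hD_L, δ, Y, hδ, hY_meas, hY_vol, hY, hK⟩ := exists_shearData s.q_pos s.K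
    (by positivity : 0 < 1 / ((n : ℝ) + 1)) (ENNReal.pow_pos (by simp) n : 0 < (1 / 2 : ℝ≥0∞) ^ n)
  obtain ⟨P, hP⟩ := D.exists_norm_iteratedFDeriv_next_le s.toConjugacy (n + 1)
  refine ⟨P, ?_⟩
  filter_upwards [s.eventually_isSucc hD_q n hY_meas hY_vol hY hδ hK,
    s.eventually_hasComplexity hD_q n hD_L,
    eventually_ge_atTop (100 * 2 ^ n * s.q), eventually_ge_atTop (n.factorial * 2 ^ n),
    eventually_ge_atTop 64] with Q h_isSucc h_complexity hQ_mul hQ_fact hQ_ge q' hs_dvd hQ_dvd hq'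
  have h_mul_pow_le {a k : ℕ} (ha : a ≤ Q) (hk : k ≤ (P + 1) * (n + 1)) : a * Q ^ k ≤ q' :=
    calc a * Q ^ k ≤ Q ^ (k + 1) := by rw [pow_succ']; gcongr
      _ ≤ Q ^ ((P + 1) * (n + 1) + 1) := Nat.pow_le_pow_right (by omega) (by omega)
      _ ≤ q' := hq'
  have hP_le : P + 1 ≤ (P + 1) * (n + 1) := Nat.le_mul_of_pos_right _ n.succ_pos
  have h_mul : 100 * 2 ^ n * Q ^ P * s.q ≤ q' := by
    rw [mul_right_comm]
    exact h_mul_pow_le hQ_mul (by omega)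
  have h_fact : n.factorial * (Q ^ P) ^ (n + 1) * 2 ^ n ≤ q' := by
    rw [mul_right_comm, ← pow_mul]
    exact h_mul_pow_le hQ_fact (by gcongr; omega)
  let s' : Stage :=
    { toConjugacy := D.next s.toConjugacy Q
      q := q'
      K := Q ^ P
      one_le_K := Nat.one_le_pow _ _ (by omega)
      dist_le := fun z w => by
        rw [Nat.cast_pow]
        exact dist_le_of_isLiftOf (D.next _ Q).isLiftOf (dist_le_of_norm_iteratedFDeriv_one_le
          (D.next _ Q).hasBoundedDerivs.contDiff
            fun x => (hP 1 le_rfl (by omega) Q (by omega) x).1) z w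
      mul_K_le_q := h_mul_pow_le hQ_ge (by omega) }
  have hQ_sq : Q ^ 2 ≤ q' := by
    simpa [pow_two] using h_mul_pow_le (k := 1) le_rfl (by omega)
  exact ⟨s', rfl, rfl, h_isSucc hs_dvd s' rfl hQ_dvd hQ_sq h_mul h_fact fun i h₁ h₂ x => by
    simpa only [s', Nat.cast_pow] using hP i h₁ h₂ Q (by omega) x, h_complexity s' rfl⟩

theorem exists_isSucc_isAdapted {r b : ℕ} (hr : r ≠ 0) (hb : 2 ≤ b) (n : ℕ) (s : Stage)
    (hs : ∃ e, s.q = b ^ e) : ∃ s' : Stage, (∃ e, s'.q = b ^ e) ∧ s.IsSucc n s' ∧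
      ∃ Q, s'.HasComplexity n Q ∧ s'.IsAdapted n Q (intScale1 r b) := by
  obtain ⟨P, hP⟩ := s.exists_eventually_isSucc n
  obtain ⟨e, hs_e⟩ := hs
  obtain ⟨M, ⟨h_succ, hQ⟩, hM⟩ := (((tendsto_gammaPeriod_atTop hr hb).eventually
    (hP.and (eventually_ge_atTop (100 * (n + 1))))).and
    (eventually_ge_atTop (e + (P + 1) * (n + 1) + 1))).exists
  have hN : M + 1 ≤ (M + 1) ^ r := Nat.le_self_pow hr _
  have h_dvd : s.q ∣ gammaPeriod r b M := hs_e ▸ pow_dvd_gammaPeriod hr (by omega)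
  obtain ⟨s', hs_q, hs_K, h_isSucc, h_complexity⟩ :=
    h_succ (gammaPeriod r b (M + 1)) h_dvd
      (gammaPeriod_succ r b M ▸ dvd_pow_self _ (by omega))
      (gammaPeriod_succ r b M ▸ Nat.pow_le_pow_right (gammaPeriod_pos hb) (by omega))
  exact ⟨s', ⟨_, hs_q⟩, h_isSucc, _, h_complexity,
    isAdapted_intScale1 n hr hb (by omega) hs_q hs_K.le hQ (by omega)⟩

end Stage

theorem Tower.exists_hasComplexity_isAdapted {r b : ℕ} (hr : r ≠ 0) (hb : 2 ≤ b) :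
    ∃ (σ : Tower) (Q : ℕ → ℕ), (∀ n, (σ.stage (n + 1)).HasComplexity n (Q n)) ∧
      ∀ n, (σ.stage (n + 1)).IsAdapted n (Q n) (intScale1 r b) := by
  choose next h_pow h_isSucc Q h_complexity h_adapted using Stage.exists_isSucc_isAdapted hr hb
  have h_init : 64 ≤ b ^ 6 := Nat.pow_le_pow_left hb 6
  let stage : ℕ → {s : Stage // ∃ e, s.q = b ^ e} := fun n =>
    Nat.rec ⟨.init (b ^ 6) h_init, 6, rfl⟩ (fun n s => ⟨next n s.1 s.2, h_pow n s.1 s.2⟩) n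
  exact ⟨⟨fun n => (stage n).1, fun n => h_isSucc n _ (stage n).2⟩,
    fun n => Q n _ (stage n).2, fun n => h_complexity n _ (stage n).2,
    fun n => h_adapted n _ (stage n).2⟩

end AnosovKatok

theorem stmt7_general {r b : ℕ} (hr : r ≠ 0) (hb : 2 ≤ b) :
    ∃ T : Torus2 → Torus2,
      IsCkTorusDiffeo ⊤ T ∧
      UniquelyErgodicWithVolume T ∧
      IsoToIrrationalRotation T ∧
      HasUpperTopSlowEntropy T (intScale1 r b) 1 := by
  obtain ⟨σ, Q, hcomplexity, hadapted⟩ :=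
    AnosovKatok.Tower.exists_hasComplexity_isAdapted hr hb
  exact ⟨σ.map, σ.isCkTorusDiffeo_map, σ.uniquelyErgodicWithVolume_map,
    σ.isoToIrrationalRotation_map,
    σ.hasUpperTopSlowEntropy_map hcomplexity hadapted (AnosovKatok.intScale1_eq_rpow r b)⟩

/-- There exist `q₁ ≥ 2` and a uniquely ergodic `C^∞` diffeomorphism `T` of
`𝕋²` whose unique invariant Borel probability measure is the Haar–Lebesgue measure,
measure-theoretically isomorphic to an irrational circle rotation, whose upper
topological slow entropy w.r.t. `a^{int1,5}` (base `q₁`) equals `1`. -/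
theorem stmt7 :
    ∃ q₁ : ℕ, 2 ≤ q₁ ∧ ∃ T : Torus2 → Torus2,
      IsCkTorusDiffeo ⊤ T ∧
      UniquelyErgodicWithVolume T ∧
      IsoToIrrationalRotation T ∧
      HasUpperTopSlowEntropy T (intScale1 5 q₁) 1 := by
  exact ⟨2, le_rfl, stmt7_general (by norm_num) le_rfl⟩
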